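/- Let δ > 0 and let (u,p) be a C² (−1)-homogeneous solution of the stationary Navier–Stokes equations on S² ∩ B_δ(S) \ {S} with lim_{x∈S², x→S} |u(x)|/ln(dist(x,S)) = 0. Let Ω := Ω_{−2,−1/2,δ/16}. Then u ∈ L²(Ω); ∇u, u⊗u, and p belong to L^s(Ω) for every 1 < s < 2; and (u,p) is a weak solution of the Stokes system with force −(u·∇)u on all of Ω: for every φ ∈ C_c^∞(Ω; ℝ³) with div φ = 0, ∫_Ω ∇u·∇φ dx = ∫_Ω (u⊗u)·∇φ dx, and ∫_Ω u·∇ψ dx = 0 for every ψ ∈ C_c^∞(Ω). -/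

import Mathlib

noncomputable section

open Real Filter MeasureTheory Metric Topology
open scoped ENNReal InnerProductSpace

abbrev V3 := EuclideanSpace ℝ (Fin 3)
abbrev V2 := EuclideanSpace ℝ (Fin 2)

/-- standard basis vector in `ℝ³` -/
def e3 (j : Fin 3) : V3 := EuclideanSpace.single j 1

/-- partial derivative `∂_j f` -/
def pd (j : Fin 3) (f : V3 → ℝ) (x : V3) : ℝ := fderiv ℝ f x (e3 j)

/-- Laplacian on `ℝ³` -/
def lap3 (f : V3 → ℝ) (x : V3) : ℝ := ∑ j, pd j (fun y => pd j f y) x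

/-- stationary Navier–Stokes equations `-Δu + (u·∇)u + ∇p = 0`, `div u = 0` at `x` -/
def NSEq (u : V3 → V3) (p : V3 → ℝ) (x : V3) : Prop :=
  (∀ i, - lap3 (fun z => u z i) x + (∑ j, u x j * pd j (fun z => u z i) x) + pd i p x = 0)
  ∧ (∑ j, pd j (fun z => u z j) x) = 0

/-- stationary Euler equations `(u·∇)u + ∇p = 0`, `div u = 0` at `x` -/
def EulerEq (u : V3 → V3) (p : V3 → ℝ) (x : V3) : Prop :=
  (∀ i, (∑ j, u x j * pd j (fun z => u z i) x) + pd i p x = 0)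
  ∧ (∑ j, pd j (fun z => u z j) x) = 0

/-- south pole -/
def S3 : V3 := EuclideanSpace.single 2 (-1)
/-- north pole -/
def N3 : V3 := EuclideanSpace.single 2 1

/-- the unit sphere `S²` -/
def sphere2 : Set V3 := Metric.sphere (0 : V3) 1

/-- the open cone over a subset of the unit sphere -/
def cone3 (Ω : Set V3) : Set V3 := {x : V3 | x ≠ 0 ∧ (‖x‖⁻¹ • x) ∈ Ω}

/-- `|x'| = √(x₁² + x₂²)` -/
def rho (x : V3) : ℝ := Real.sqrt ((x 0) ^ 2 + (x 1) ^ 2)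

/-- the `x₃`-axis `{x' = 0}` -/
def axis3 : Set V3 := {x : V3 | x 0 = 0 ∧ x 1 = 0}

/-- `Ω_{a,b,R} = {a < x₃ < b, |x'| < R}` -/
def OmegaR (a b R : ℝ) : Set V3 := {x : V3 | a < x 2 ∧ x 2 < b ∧ rho x < R}

/-- build a point of `ℝ³` from `x' ∈ ℝ²` and `x₃ ∈ ℝ` -/
def emb (y : V2) (t : ℝ) : V3 := (EuclideanSpace.equiv (Fin 3) ℝ).symm ![y 0, y 1, t]

/-- spherical component `u_r = u · e_r` -/
def uRc (u : V3 → V3) (x : V3) : ℝ := (u x 0 * x 0 + u x 1 * x 1 + u x 2 * x 2) / ‖x‖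

/-- spherical component `u_θ = u · e_θ` -/
def uTc (u : V3 → V3) (x : V3) : ℝ :=
  (u x 0 * x 0 * x 2 + u x 1 * x 1 * x 2) / (‖x‖ * rho x) - u x 2 * rho x / ‖x‖

/-- spherical component `u_φ = u · e_φ` -/
def uPc (u : V3 → V3) (x : V3) : ℝ := (-(u x 0) * x 1 + u x 1 * x 0) / rho x

/-- axisymmetry on a set: the spherical components are independent of the meridian angle -/
def AxisymOn (u : V3 → V3) (Ω : Set V3) : Prop :=
  ∀ x ∈ Ω, ∀ y ∈ Ω, ‖x‖ = ‖y‖ → x 2 = y 2 →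
    uRc u x = uRc u y ∧ uTc u x = uTc u y ∧ uPc u x = uPc u y

/-- spherical frame vector `e_r` -/
def eRv (x : V3) : V3 := ‖x‖⁻¹ • x

/-- spherical frame vector `e_θ` -/
def eThv (x : V3) : V3 := (EuclideanSpace.equiv (Fin 3) ℝ).symm
  ![x 2 * x 0 / (‖x‖ * rho x), x 2 * x 1 / (‖x‖ * rho x), -(rho x) / ‖x‖]

/-- spherical frame vector `e_φ` -/
def ePhv (x : V3) : V3 := (EuclideanSpace.equiv (Fin 3) ℝ).symm ![-(x 1) / rho x, x 0 / rho x, 0]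

/-- the spherical cap `S² ∩ B_δ(S) \ {S}` -/
def NSCap (δ : ℝ) : Set V3 := (sphere2 ∩ Metric.ball S3 δ) \ {S3}

/-- the spherical cap `S² ∩ B_δ(S)` -/
def NSCapFull (δ : ℝ) : Set V3 := sphere2 ∩ Metric.ball S3 δ

/-!
Write `ρ = |x'|`. Homogeneity turns the hypothesis into `u = o(log ρ)` near the ray, and interior
estimates then give `ρ ∇u = o(log ρ)` and `p = O(ρ ^ (-1 - κ))` for every `κ > 0`. This yields all
the integrability, and makes the momentum flux `∂ⱼuᵢ - uᵢuⱼ - p δᵢⱼ` integrable.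

Off the axis the flux is divergence free, so the functional `Tᵢ(f) = ∑ⱼ ∫ (∂ⱼuᵢ - uᵢuⱼ - p δᵢⱼ) ∂ⱼf`
depends only on the restriction of the test function `f` to the axis. In particular, the function
`F = f log (ρ² + s²)` satisfies `Tᵢ(F) = log (s²) Tᵢ(f)`, and it remains to show that
`Tᵢ(F) = o(log s)` as `s → 0`: then `Tᵢ = 0`, and the pressure cancels when `div φ = 0`.

After integration by parts the viscous term involves `u ΔF`, where `Δ log (ρ² + s²)` has bounded
mass and concentrates at `ρ ∼ s`, so `u = o(log ρ)` makes it `o(log s)`. The pressure term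
`∫ p ∂ᵢF` stays bounded for the direction `i` of the ray. For horizontal `i`, let `j` be the other
horizontal index: `∂ⱼ(xⱼF)` equals `F` on the axis and `∂ᵢ(xⱼF)` vanishes there, so
`Tᵢ(F) = Tᵢ(∂ⱼ(xⱼF)) - Tⱼ(∂ᵢ(xⱼF))`, a divergence-free combination from which the pressure drops
out, leaving `o(log s)` terms in the velocity and its vorticity.
-/

/-! ### Partial derivatives and test functions -/

section PartialDerivatives

variable {f g : V3 → ℝ} {x : V3} {m n : WithTop ℕ∞} {U : Set V3}

lemma e3_apply (i j : Fin 3) : (e3 j) i = if i = j then 1 else 0 := by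
  simp [e3]

lemma sum_apply_smul_e3 (y : V3) : ∑ j, y j • e3 j = y := by
  ext i
  fin_cases i <;> simp [Fin.sum_univ_three, e3_apply]

lemma fderiv_apply_eq_sum_pd (f : V3 → ℝ) (x y : V3) : fderiv ℝ f x y = ∑ j, y j * pd j f x := by
  conv_lhs => rw [← sum_apply_smul_e3 y]
  simp [pd]

lemma pd_congr (j : Fin 3) (h : f =ᶠ[𝓝 x] g) : pd j f x = pd j g x := by
  unfold pd; rw [h.fderiv_eq]

lemma pd_add (j : Fin 3) (hf : DifferentiableAt ℝ f x) (hg : DifferentiableAt ℝ g x) :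
    pd j (fun y => f y + g y) x = pd j f x + pd j g x := by
  unfold pd; rw [fderiv_fun_add hf hg]; rfl

lemma pd_sub (j : Fin 3) (hf : DifferentiableAt ℝ f x) (hg : DifferentiableAt ℝ g x) :
    pd j (fun y => f y - g y) x = pd j f x - pd j g x := by
  unfold pd; rw [fderiv_fun_sub hf hg]; rfl

lemma pd_mul (j : Fin 3) (hf : DifferentiableAt ℝ f x) (hg : DifferentiableAt ℝ g x) :
    pd j (fun y => f y * g y) x = pd j f x * g x + f x * pd j g x := by
  unfold pd; rw [fderiv_fun_mul hf hg]; simp; ring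

lemma pd_const_mul (j : Fin 3) (c : ℝ) (hf : DifferentiableAt ℝ f x) :
    pd j (fun y => c * f y) x = c * pd j f x := by
  unfold pd; rw [fderiv_const_mul hf]; simp

lemma pd_sum {ι : Type*} {s : Finset ι} {f : ι → V3 → ℝ} (j : Fin 3)
    (hf : ∀ i ∈ s, DifferentiableAt ℝ (f i) x) :
    pd j (fun y => ∑ i ∈ s, f i y) x = ∑ i ∈ s, pd j (f i) x := by
  unfold pd; rw [fderiv_fun_sum hf]; simp

lemma pd_comp {F : ℝ → ℝ} {F' : ℝ} (j : Fin 3) (hF : HasDerivAt F F' (f x))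
    (hf : DifferentiableAt ℝ f x) : pd j (fun y => F (f y)) x = F' * pd j f x := by
  have h := (hF.comp_hasFDerivAt x hf.hasFDerivAt).fderiv
  simp only [Function.comp_def] at h
  unfold pd; rw [h]; simp

lemma pd_comp_affine (x₀ : V3) (t : ℝ) (j : Fin 3) (y : V3)
    (hf : DifferentiableAt ℝ f (x₀ + t • y)) :
    pd j (fun y => f (x₀ + t • y)) y = t * pd j f (x₀ + t • y) := by
  have hline : HasFDerivAt (fun y : V3 => x₀ + t • y) (t • ContinuousLinearMap.id ℝ V3) y :=
    ((hasFDerivAt_id y).const_smul t).const_add x₀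
  have h := (hf.hasFDerivAt.comp y hline).fderiv
  simp only [Function.comp_def] at h
  unfold pd; rw [h]; simp

lemma contDiff_coord (i : Fin 3) : ContDiff ℝ n (fun y : V3 => y i) :=
  (EuclideanSpace.proj i : V3 →L[ℝ] ℝ).contDiff

lemma differentiable_coord (i : Fin 3) : Differentiable ℝ (fun y : V3 => y i) :=
  (contDiff_coord (n := 1) i).differentiable one_ne_zero

lemma pd_coord (i j : Fin 3) (x : V3) : pd j (fun y : V3 => y i) x = if i = j then 1 else 0 := by
  have h : (fun y : V3 => y i) = (EuclideanSpace.proj i : V3 →L[ℝ] ℝ) := rfl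
  unfold pd
  rw [h, ContinuousLinearMap.fderiv]
  simp [e3_apply]

lemma pd_norm_sq (j : Fin 3) (x : V3) : pd j (fun y : V3 => ‖y‖ ^ 2) x = 2 * x j := by
  unfold pd
  rw [fderiv_norm_sq_apply]
  simp [e3, EuclideanSpace.inner_single_right]

lemma contDiff_pd (hf : ContDiff ℝ n f) (hmn : m + 1 ≤ n) (j : Fin 3) :
    ContDiff ℝ m (fun x => pd j f x) :=
  (hf.fderiv_right hmn).clm_apply contDiff_const

lemma contDiffOn_pd (hU : IsOpen U) (hf : ContDiffOn ℝ n f U) (hmn : m + 1 ≤ n) (j : Fin 3) :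
    ContDiffOn ℝ m (fun x => pd j f x) U :=
  (hf.fderiv_of_isOpen hU hmn).clm_apply contDiffOn_const

lemma pd_comm (hf : ContDiffAt ℝ 2 f x) (i j : Fin 3) :
    pd i (fun y => pd j f y) x = pd j (fun y => pd i f y) x := by
  have hd : DifferentiableAt ℝ (fderiv ℝ f) x :=
    (hf.fderiv_right (m := 1) (by norm_num)).differentiableAt one_ne_zero
  have second : ∀ a b : Fin 3,
      pd a (fun y => pd b f y) x = fderiv ℝ (fderiv ℝ f) x (e3 a) (e3 b) := by
    intro a b
    unfold pd
    rw [fderiv_clm_apply hd (differentiableAt_const _)]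
    simp
  rw [second, second]
  exact hf.isSymmSndFDerivAt (by simp) _ _

lemma pd_pd_mul (hf : ContDiff ℝ 2 f) (hg : ContDiff ℝ 2 g) (i j : Fin 3) (x : V3) :
    pd i (fun y => pd j (fun z => f z * g z) y) x =
      pd i (fun y => pd j f y) x * g x + (pd j f x * pd i g x + pd i f x * pd j g x) +
        f x * pd i (fun y => pd j g y) x := by
  have hf₀ := hf.differentiable two_ne_zero
  have hg₀ := hg.differentiable two_ne_zero
  have hf₁ := (contDiff_pd (m := 1) hf (by norm_num) j).differentiable one_ne_zero
  have hg₁ := (contDiff_pd (m := 1) hg (by norm_num) j).differentiable one_ne_zero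
  simp_rw [fun y => pd_mul j (hf₀ y) (hg₀ y)]
  rw [pd_add i ((hf₁ x).fun_mul (hg₀ x)) ((hf₀ x).fun_mul (hg₁ x)), pd_mul i (hf₁ x) (hg₀ x),
    pd_mul i (hf₀ x) (hg₁ x)]
  ring

lemma lap3_mul (hf : ContDiff ℝ 2 f) (hg : ContDiff ℝ 2 g) (x : V3) :
    lap3 (fun y => f y * g y) x =
      lap3 f x * g x + 2 * (∑ j, pd j f x * pd j g x) + f x * lap3 g x := by
  unfold lap3
  simp_rw [pd_pd_mul hf hg, Finset.sum_add_distrib, ← Finset.sum_mul, ← Finset.mul_sum]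
  ring

end PartialDerivatives

/-- Test functions on `Ω`: smooth functions with compact support contained in `Ω`. -/
structure IsTestFunction (Ω : Set V3) (f : V3 → ℝ) : Prop where
  contDiff : ContDiff ℝ (⊤ : ℕ∞) f
  hasCompactSupport : HasCompactSupport f
  tsupport_subset : tsupport f ⊆ Ω

namespace IsTestFunction

variable {f g h : V3 → ℝ} {Ω U : Set V3}

lemma differentiable (hg : IsTestFunction Ω g) : Differentiable ℝ g :=
  hg.contDiff.differentiable (by simp)

lemma eq_zero_of_notMem (hg : IsTestFunction Ω g) {x : V3} (hx : x ∉ Ω) : g x = 0 :=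
  image_eq_zero_of_notMem_tsupport fun h => hx (hg.tsupport_subset h)

lemma partialDeriv (hg : IsTestFunction Ω g) (j : Fin 3) :
    IsTestFunction Ω (fun x => pd j g x) where
  contDiff := contDiff_pd hg.contDiff (by simp) j
  hasCompactSupport := hg.hasCompactSupport.fderiv_apply ℝ (e3 j)
  tsupport_subset := (tsupport_fderiv_apply_subset ℝ (e3 j)).trans hg.tsupport_subset

lemma contDiff_mul (hg : IsTestFunction Ω g) (hf : ContDiff ℝ (⊤ : ℕ∞) f) :
    IsTestFunction Ω (fun x => f x * g x) where
  contDiff := hf.mul hg.contDiff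
  hasCompactSupport := hg.hasCompactSupport.mul_left
  tsupport_subset := tsupport_mul_subset_right.trans hg.tsupport_subset

lemma add (hf : IsTestFunction Ω f) (hg : IsTestFunction Ω g) :
    IsTestFunction Ω (fun x => f x + g x) where
  contDiff := hf.contDiff.add hg.contDiff
  hasCompactSupport := hf.hasCompactSupport.add hg.hasCompactSupport
  tsupport_subset := (tsupport_add f g).trans
    (Set.union_subset hf.tsupport_subset hg.tsupport_subset)

lemma laplacian (hg : IsTestFunction Ω g) : IsTestFunction Ω (lap3 g) := by
  have expand : lap3 g = fun x => pd 0 (fun y => pd 0 g y) x + pd 1 (fun y => pd 1 g y) x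
      + pd 2 (fun y => pd 2 g y) x := funext fun x => Fin.sum_univ_three _
  rw [expand]
  exact (((hg.partialDeriv 0).partialDeriv 0).add ((hg.partialDeriv 1).partialDeriv 1)).add
    ((hg.partialDeriv 2).partialDeriv 2)

lemma continuous_mul (hg : IsTestFunction U g) (hU : IsOpen U) (hf : ContinuousOn f U) :
    Continuous (fun x => f x * g x) := by
  refine continuous_of_tsupport fun x hx => ?_
  have hxU := hg.tsupport_subset (tsupport_mul_subset_right hx)
  exact (hf.continuousAt (hU.mem_nhds hxU)).mul hg.contDiff.continuous.continuousAt

lemma integrable_mul (hg : IsTestFunction U g) (hU : IsOpen U) (hf : ContinuousOn f U) :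
    Integrable (fun x => f x * g x) :=
  (hg.continuous_mul hU hf).integrable_of_hasCompactSupport hg.hasCompactSupport.mul_left

lemma integral_mul_pd (hg : IsTestFunction U g) (hU : IsOpen U) (hf : ContDiffOn ℝ 1 f U)
    (j : Fin 3) : ∫ x, f x * pd j g x = -∫ x, pd j f x * g x := by
  refine integral_mul_fderiv_eq_neg_fderiv_mul_of_integrable ?_ ?_ ?_ ?_ ?_
  · exact hg.integrable_mul hU (contDiffOn_pd (m := 0) hU hf (by simp) j).continuousOn
  · exact (hg.partialDeriv j).integrable_mul hU hf.continuousOn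
  · exact hg.integrable_mul hU hf.continuousOn
  · exact fun x hx =>
      (hf.contDiffAt (hU.mem_nhds (hg.tsupport_subset hx))).differentiableAt one_ne_zero
  · exact fun x _ => hg.differentiable x

lemma mono (hg : IsTestFunction Ω g) (h : Ω ⊆ U) : IsTestFunction U g :=
  ⟨hg.contDiff, hg.hasCompactSupport, hg.tsupport_subset.trans h⟩

end IsTestFunction

/-! ### Gradient representation by a radial kernel -/

/-- A radial averaging kernel `η` of unit mass in the closed unit ball, together with a potential
`ζ` of the field `y ↦ η(y) y`. -/
structure IsRadialKernel (ζ η : V3 → ℝ) : Prop where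
  contDiff_potential : ContDiff ℝ (⊤ : ℕ∞) ζ
  contDiff_kernel : ContDiff ℝ (⊤ : ℕ∞) η
  support_potential : Function.support ζ ⊆ closedBall 0 1
  support_kernel : Function.support η ⊆ closedBall 0 1
  integral_kernel : ∫ y, η y = 1
  pd_potential : ∀ j y, pd j ζ y = η y * y j

lemma isTestFunction_of_support_subset {f : V3 → ℝ} {K : Set V3} (hf : ContDiff ℝ (⊤ : ℕ∞) f)
    (hK : IsCompact K) (hfK : Function.support f ⊆ K) : IsTestFunction K f :=
  ⟨hf, HasCompactSupport.of_support_subset_isCompact hK hfK,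
    closure_minimal hfK hK.isClosed⟩

lemma exists_smooth_antiderivative_eq_zero_of_one_le : ∃ b B : ℝ → ℝ,
    ContDiff ℝ (⊤ : ℕ∞) b ∧ ContDiff ℝ (⊤ : ℕ∞) B ∧ (∀ q, HasDerivAt B (b q) q) ∧
    (∀ q, 1 ≤ q → b q = 0 ∧ B q = 0) ∧ (∀ q, 0 ≤ b q) ∧ b 0 ≠ 0 := by
  set b : ℝ → ℝ := fun s => smoothTransition (1 - s)
  set B : ℝ → ℝ := fun q => ∫ s in (1 : ℝ)..q, b s
  have hb : ContDiff ℝ (⊤ : ℕ∞) b := smoothTransition.contDiff.comp (by fun_prop)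
  have hB_deriv : ∀ q, HasDerivAt B (b q) q := fun q =>
    (hb.continuous.integral_hasStrictDerivAt 1 q).hasDerivAt
  have hb_zero : ∀ q, 1 ≤ q → b q = 0 := fun q hq => smoothTransition.zero_of_nonpos (by linarith)
  refine ⟨b, B, hb, contDiff_infty_iff_deriv.2 ⟨fun q => (hB_deriv q).differentiableAt, ?_⟩,
    hB_deriv, fun q hq => ⟨hb_zero q hq, ?_⟩, fun q => smoothTransition.nonneg _, by simp [b]⟩
  · rwa [funext fun q => (hB_deriv q).deriv]
  · refine (intervalIntegral.integral_congr fun s hs => ?_).trans intervalIntegral.integral_zero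
    exact hb_zero s (Set.uIcc_of_le hq ▸ hs).1

lemma exists_isRadialKernel : ∃ ζ η : V3 → ℝ, IsRadialKernel ζ η := by
  obtain ⟨b, B, hb, hB, hB_deriv, hzero, hb_nonneg, hb0⟩ :=
    exists_smooth_antiderivative_eq_zero_of_one_le
  have outside : ∀ y : V3, y ∉ closedBall (0 : V3) 1 → 1 ≤ ‖y‖ ^ 2 := fun y hy => by
    rw [mem_closedBall_zero_iff, not_le] at hy
    nlinarith
  have hη : ContDiff ℝ (⊤ : ℕ∞) fun y : V3 => b (‖y‖ ^ 2) := hb.comp (contDiff_norm_sq ℝ)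
  have hη_supp : Function.support (fun y : V3 => b (‖y‖ ^ 2)) ⊆ closedBall 0 1 := fun y hy => by
    by_contra hy'
    exact hy (hzero _ (outside y hy')).1
  set I : ℝ := ∫ y : V3, b (‖y‖ ^ 2)
  have hI : 0 < I := hη.continuous.integral_pos_of_hasCompactSupport_nonneg_nonzero
    (HasCompactSupport.of_support_subset_isCompact (isCompact_closedBall 0 1) hη_supp)
    (fun y => hb_nonneg _) (x := 0) (by simpa using hb0)
  refine ⟨fun y => I⁻¹ / 2 * B (‖y‖ ^ 2), fun y => I⁻¹ * b (‖y‖ ^ 2),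
    contDiff_const.mul (hB.comp (contDiff_norm_sq ℝ)), contDiff_const.mul hη, fun y hy => ?_,
    (Function.support_mul_subset_right _ _).trans hη_supp, ?_, fun j y => ?_⟩
  · by_contra hy'
    exact hy (by simp [(hzero _ (outside y hy')).2])
  · rw [integral_const_mul, inv_mul_cancel₀ hI.ne']
  · have hsq : DifferentiableAt ℝ (fun y : V3 => ‖y‖ ^ 2) y :=
      (contDiff_norm_sq ℝ (n := 1)).differentiable one_ne_zero y
    have hBsq : DifferentiableAt ℝ (fun y : V3 => B (‖y‖ ^ 2)) y :=
      (hB_deriv _).differentiableAt.comp y hsq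
    rw [pd_const_mul j _ hBsq, pd_comp (f := fun y : V3 => ‖y‖ ^ 2) j (hB_deriv _) hsq,
      pd_norm_sq]
    ring

lemma hasDerivAt_integral_mul_of_hasCompactSupport {F F' : ℝ → V3 → ℝ} {η : V3 → ℝ}
    (hF : Continuous (Function.uncurry F)) (hF' : Continuous (Function.uncurry F'))
    (hFF' : ∀ t y, HasDerivAt (fun t => F t y) (F' t y) t) (hη : Continuous η)
    (hηc : HasCompactSupport η) (t : ℝ) :
    HasDerivAt (fun t => ∫ y, F t y * η y) (∫ y, F' t y * η y) t := by
  obtain ⟨B, hB⟩ := ((isCompact_closedBall t 1).prod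
    hηc.isCompact).exists_bound_of_continuousOn hF'.continuousOn
  have slice : ∀ {G : ℝ → V3 → ℝ}, Continuous (Function.uncurry G) → ∀ s,
      Continuous fun y => G s y * η y := fun hG s =>
    (hG.comp (Continuous.prodMk_right s)).mul hη
  refine (hasDerivAt_integral_of_dominated_loc_of_deriv_le (s := ball t 1)
    (bound := fun y => B * ‖η y‖) (ball_mem_nhds t one_pos)
    (Eventually.of_forall fun s => (slice hF s).aestronglyMeasurable)
    ((slice hF t).integrable_of_hasCompactSupport hηc.mul_left)
    (slice hF' t).aestronglyMeasurable ?_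
    ((hη.norm.integrable_of_hasCompactSupport hηc.norm).const_mul B)
    (Eventually.of_forall fun y s _ => (hFF' s y).mul_const _)).2
  refine Eventually.of_forall fun y s hs => ?_
  rw [norm_mul]
  by_cases hy : y ∈ tsupport η
  · exact mul_le_mul_of_nonneg_right (hB (s, y) ⟨ball_subset_closedBall hs, hy⟩) (norm_nonneg _)
  · simp [image_eq_zero_of_notMem_tsupport hy]

section UnitBall

variable {U : Set V3} {f g : V3 → ℝ} {x₀ y : V3} {t r M : ℝ}

lemma add_smul_mem_closedBall (ht : 0 ≤ t) (htr : t ≤ r) (hy : y ∈ closedBall (0 : V3) 1) :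
    x₀ + t • y ∈ closedBall x₀ r := by
  rw [mem_closedBall_zero_iff] at hy
  rw [mem_closedBall, dist_self_add_left, norm_smul, Real.norm_of_nonneg ht]
  nlinarith [norm_nonneg y]

lemma abs_integral_mul_le_of_isTestFunction (hg : IsTestFunction (closedBall 0 1) g)
    (hf : ∀ y ∈ closedBall (0 : V3) 1, |f y| ≤ M) : |∫ y, f y * g y| ≤ M * ∫ y, |g y| := by
  rw [← integral_const_mul]
  have hint : Integrable fun y => M * |g y| :=
    (hg.contDiff.continuous.abs.integrable_of_hasCompactSupport
      (hg.hasCompactSupport.comp_left abs_zero)).const_mul M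
  refine norm_integral_le_of_norm_le (f := fun y => f y * g y) hint
    (Eventually.of_forall fun y => ?_)
  rw [Real.norm_eq_abs, abs_mul]
  by_cases hy : y ∈ closedBall (0 : V3) 1
  · exact mul_le_mul_of_nonneg_right (hf y hy) (abs_nonneg _)
  · simp [hg.eq_zero_of_notMem hy]

lemma integral_affine_mul_pd (hU : IsOpen U) (hf : ContDiffOn ℝ 1 f U) (x₀ : V3)
    (t : ℝ) (hg : IsTestFunction ((fun y => x₀ + t • y) ⁻¹' U) g) (j : Fin 3) :
    ∫ y, f (x₀ + t • y) * pd j g y = -(t * ∫ y, pd j f (x₀ + t • y) * g y) := by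
  have hline : ContDiff ℝ 1 fun y : V3 => x₀ + t • y := by fun_prop
  have hf_line : ContDiffOn ℝ 1 (fun y => f (x₀ + t • y)) ((fun y => x₀ + t • y) ⁻¹' U) :=
    hf.comp hline.contDiffOn (Set.mapsTo_preimage _ _)
  rw [hg.integral_mul_pd (hU.preimage hline.continuous) hf_line, ← integral_const_mul]
  congr 2 with y
  by_cases hy : x₀ + t • y ∈ U
  · rw [pd_comp_affine _ _ _ _ ((hf.contDiffAt (hU.mem_nhds hy)).differentiableAt one_ne_zero),
      mul_assoc]
  · rw [hg.eq_zero_of_notMem hy, mul_zero, mul_zero, mul_zero]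

end UnitBall

lemma exists_contDiff_eventuallyEq_of_closedBall_subset {f : V3 → ℝ} {U : Set V3} {x₀ : V3}
    {r : ℝ} {n : ℕ∞} (hU : IsOpen U) (hf : ContDiffOn ℝ n f U) (hr : 0 < r)
    (hball : closedBall x₀ r ⊆ U) :
    ∃ g : V3 → ℝ, ContDiff ℝ n g ∧ ∀ x ∈ closedBall x₀ r, g =ᶠ[𝓝 x] f := by
  obtain ⟨d, hd, hdU⟩ := (isCompact_closedBall x₀ r).exists_cthickening_subset_open hU hball
  rw [cthickening_closedBall hd.le hr.le] at hdU
  let χ : ContDiffBump x₀ := ⟨d / 2 + r, d + r, by positivity, by linarith⟩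
  refine ⟨fun x => χ x * f x, contDiff_iff_contDiffAt.2 fun x => ?_, fun x hx => ?_⟩
  · by_cases hx : x ∈ tsupport χ
    · have hxU : x ∈ U := hdU (χ.tsupport_eq ▸ hx)
      exact χ.contDiff.contDiffAt.mul (hf.contDiffAt (hU.mem_nhds hxU))
    · refine contDiffAt_const (c := (0 : ℝ)) |>.congr_of_eventuallyEq ?_
      filter_upwards [notMem_tsupport_iff_eventuallyEq.1 hx] with y hy
      rw [hy, Pi.zero_apply, zero_mul]
  · have hx' : x ∈ ball x₀ χ.rIn := by
      rw [mem_closedBall] at hx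
      rw [mem_ball]
      change _ < d / 2 + r
      linarith
    filter_upwards [χ.eventuallyEq_one_of_mem_ball hx'] with y hy
    rw [hy, Pi.one_apply, one_mul]

lemma integral_congr_of_isTestFunction {f f' g : V3 → ℝ} {K : Set V3} (hg : IsTestFunction K g)
    (h : ∀ y ∈ K, f y = f' y) : ∫ y, f y * g y = ∫ y, f' y * g y := by
  congr 1 with y
  by_cases hy : y ∈ K
  · rw [h y hy]
  · rw [hg.eq_zero_of_notMem hy, mul_zero, mul_zero]

namespace IsRadialKernel

variable {ζ η w : V3 → ℝ} {U : Set V3} {x₀ : V3} {r H : ℝ}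

lemma isTestFunction_potential (hk : IsRadialKernel ζ η) : IsTestFunction (closedBall 0 1) ζ :=
  isTestFunction_of_support_subset hk.contDiff_potential (isCompact_closedBall 0 1)
    hk.support_potential

lemma isTestFunction_kernel (hk : IsRadialKernel ζ η) : IsTestFunction (closedBall 0 1) η :=
  isTestFunction_of_support_subset hk.contDiff_kernel (isCompact_closedBall 0 1)
    hk.support_kernel

lemma integral_fderiv_pd_mul (hk : IsRadialKernel ζ η) (hw : ContDiff ℝ 2 w) (x₀ : V3) {t : ℝ}
    (ht : t ≠ 0) (k : Fin 3) :
    ∫ y, fderiv ℝ (pd k w) (x₀ + t • y) y * η y = ∫ y, lap3 w (x₀ + t • y) * pd k ζ y := by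
  have hζ := hk.isTestFunction_potential.mono (Set.subset_univ _)
  have hpd : ∀ j, ContDiff ℝ 1 (pd j w) := fun j => contDiff_pd hw (by norm_num) j
  have hcont : ∀ i j, Continuous fun y => pd i (pd j w) (x₀ + t • y) := fun i j =>
    (contDiff_pd (m := 0) (hpd j) (by simp) i).continuous.comp (by fun_prop)
  have hint : ∀ {g : V3 → ℝ}, IsTestFunction Set.univ g → ∀ i j,
      Integrable fun y => pd i (pd j w) (x₀ + t • y) * g y := fun hg i j =>
    hg.integrable_mul isOpen_univ (hcont i j).continuousOn
  have move : ∀ j, ∫ y, pd k (pd j w) (x₀ + t • y) * pd j ζ y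
      = ∫ y, pd j (pd j w) (x₀ + t • y) * pd k ζ y := fun j => by
    have hk' := integral_affine_mul_pd isOpen_univ (hpd j).contDiffOn x₀ t (hζ.partialDeriv j) k
    have hj' := integral_affine_mul_pd isOpen_univ (hpd j).contDiffOn x₀ t (hζ.partialDeriv k) j
    have hcomm : ∀ y, pd k (fun z => pd j ζ z) y = pd j (fun z => pd k ζ z) y := fun y =>
      pd_comm (hζ.contDiff.contDiffAt.of_le (by norm_cast)) k j
    simp_rw [hcomm] at hk'
    exact mul_left_cancel₀ ht (neg_injective (hk'.symm.trans hj'))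
  calc ∫ y, fderiv ℝ (pd k w) (x₀ + t • y) y * η y
      = ∫ y, ∑ j, pd k (pd j w) (x₀ + t • y) * pd j ζ y := by
        congr 1 with y
        rw [fderiv_apply_eq_sum_pd, Finset.sum_mul]
        refine Finset.sum_congr rfl fun j _ => ?_
        rw [hk.pd_potential, pd_comm hw.contDiffAt j k]
        ring
    _ = ∑ j, ∫ y, pd j (pd j w) (x₀ + t • y) * pd k ζ y := by
        rw [integral_finsetSum _ fun j _ => hint (hζ.partialDeriv j) k j]
        exact Finset.sum_congr rfl fun j _ => move j
    _ = ∫ y, lap3 w (x₀ + t • y) * pd k ζ y := by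
        rw [← integral_finsetSum _ fun j _ => hint (hζ.partialDeriv k) j j]
        simp only [lap3, Finset.sum_mul]

/-- The derivative in `t` of the average of `∂ₖw` over the ball of radius `t` is an average of
`Δw`. -/
lemma abs_pd_sub_average_le_of_contDiff (hk : IsRadialKernel ζ η) (hw : ContDiff ℝ 2 w)
    (hr : 0 < r) (hH : ∀ x ∈ closedBall x₀ r, |lap3 w x| ≤ H) (k : Fin 3) :
    |pd k w x₀ - ∫ y, pd k w (x₀ + r • y) * η y| ≤ r * H * ∫ y, |pd k ζ y| := by
  have hpd : ContDiff ℝ 1 (pd k w) := contDiff_pd hw (by norm_num) k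
  set φ : ℝ → ℝ := fun t => ∫ y, pd k w (x₀ + t • y) * η y
  have hφ : ∀ t, HasDerivAt φ (∫ y, fderiv ℝ (pd k w) (x₀ + t • y) y * η y) t := by
    refine hasDerivAt_integral_mul_of_hasCompactSupport ?_ ?_ (fun t y => ?_)
      hk.contDiff_kernel.continuous hk.isTestFunction_kernel.hasCompactSupport
    · exact hpd.continuous.comp (by fun_prop)
    · have := hpd.continuous_fderiv one_ne_zero
      fun_prop
    · have hline : HasDerivAt (fun t : ℝ => x₀ + t • y) y t := by
        simpa using ((hasDerivAt_id t).smul_const y).const_add x₀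
      exact (hpd.differentiable one_ne_zero _).hasFDerivAt.comp_hasDerivAt t hline
  obtain ⟨t, ht, hslope⟩ := exists_hasDerivAt_eq_slope φ _ hr
    (fun t _ => (hφ t).continuousAt.continuousWithinAt) (fun t _ => hφ t)
  have hφ0 : φ 0 = pd k w x₀ := by simp [φ, integral_const_mul, hk.integral_kernel]
  have hbound : |(φ r - φ 0) / (r - 0)| ≤ H * ∫ y, |pd k ζ y| := by
    rw [← hslope, hk.integral_fderiv_pd_mul hw x₀ ht.1.ne' k]
    exact abs_integral_mul_le_of_isTestFunction (hk.isTestFunction_potential.partialDeriv k)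
      fun y hy => hH _ (add_smul_mem_closedBall ht.1.le ht.2.le hy)
  rw [hφ0, sub_zero, abs_div, abs_of_pos hr, div_le_iff₀ hr] at hbound
  rw [abs_sub_comm]
  linarith

lemma abs_pd_sub_average_le (hk : IsRadialKernel ζ η) (hU : IsOpen U) (hw : ContDiffOn ℝ 2 w U)
    (hball : closedBall x₀ r ⊆ U) (hr : 0 < r) (hH : ∀ x ∈ closedBall x₀ r, |lap3 w x| ≤ H)
    (k : Fin 3) :
    |pd k w x₀ - ∫ y, pd k w (x₀ + r • y) * η y| ≤ r * H * ∫ y, |pd k ζ y| := by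
  obtain ⟨g, hg, hgw⟩ :=
    exists_contDiff_eventuallyEq_of_closedBall_subset (n := 2) hU hw hr hball
  have hpd : ∀ x ∈ closedBall x₀ r, ∀ j, pd j g =ᶠ[𝓝 x] pd j w := fun x hx j =>
    (hgw x hx).eventuallyEq_nhds.mono fun z hz => pd_congr j hz
  have hlap : ∀ x ∈ closedBall x₀ r, |lap3 g x| ≤ H := fun x hx => by
    have hgw_lap : lap3 g x = lap3 w x :=
      Finset.sum_congr rfl fun j _ => pd_congr j (hpd x hx j)
    exact hgw_lap ▸ hH x hx
  have := hk.abs_pd_sub_average_le_of_contDiff hg hr hlap k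
  rwa [(hpd x₀ (mem_closedBall_self hr.le) k).eq_of_nhds,
    integral_congr_of_isTestFunction hk.isTestFunction_kernel fun y hy =>
      (hpd _ (add_smul_mem_closedBall hr.le le_rfl hy) k).eq_of_nhds] at this

end IsRadialKernel

/-! ### Interior estimates for the Navier–Stokes equations -/

lemma exists_abs_pd_le : ∃ C : ℝ, 0 ≤ C ∧ ∀ {U : Set V3} {w : V3 → ℝ} {x₀ : V3} {r M H : ℝ},
    IsOpen U → ContDiffOn ℝ 2 w U → closedBall x₀ r ⊆ U → 0 < r →
    (∀ x ∈ closedBall x₀ r, |w x| ≤ M) → (∀ x ∈ closedBall x₀ r, |lap3 w x| ≤ H) →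
    ∀ k, |pd k w x₀| ≤ C * (M / r + r * H) := by
  obtain ⟨ζ, η, hk⟩ := exists_isRadialKernel
  set A : Fin 3 → ℝ := fun k => (∫ y, |pd k ζ y|) + ∫ y, |pd k η y|
  have hζ : ∀ k, 0 ≤ ∫ y, |pd k ζ y| := fun k => integral_nonneg fun y => abs_nonneg _
  have hη : ∀ k, 0 ≤ ∫ y, |pd k η y| := fun k => integral_nonneg fun y => abs_nonneg _
  have hA : ∀ k, A k ≤ ∑ k, A k := fun k =>
    Finset.single_le_sum (fun k _ => add_nonneg (hζ k) (hη k)) (Finset.mem_univ k)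
  refine ⟨∑ k, A k, Finset.sum_nonneg fun k _ => add_nonneg (hζ k) (hη k),
    fun {U w x₀ r M H} hU hw hball hr hM hH k => ?_⟩
  have hx₀ := mem_closedBall_self (x := x₀) hr.le
  have hM₀ : 0 ≤ M := (abs_nonneg _).trans (hM x₀ hx₀)
  have hH₀ : 0 ≤ H := (abs_nonneg _).trans (hH x₀ hx₀)
  have hη_test : IsTestFunction ((fun y => x₀ + r • y) ⁻¹' U) η :=
    hk.isTestFunction_kernel.mono fun y hy => hball (add_smul_mem_closedBall hr.le le_rfl hy)
  have average : |∫ y, pd k w (x₀ + r • y) * η y| ≤ M / r * ∫ y, |pd k η y| := by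
    have hparts := integral_affine_mul_pd hU (hw.of_le one_le_two) x₀ r hη_test k
    have hbound := abs_integral_mul_le_of_isTestFunction (hk.isTestFunction_kernel.partialDeriv k)
      (f := fun y => w (x₀ + r • y)) fun y hy => hM _ (add_smul_mem_closedBall hr.le le_rfl hy)
    rw [hparts, abs_neg, abs_mul, abs_of_pos hr] at hbound
    rw [div_mul_eq_mul_div, le_div_iff₀ hr]
    linarith
  calc |pd k w x₀|
      ≤ |pd k w x₀ - ∫ y, pd k w (x₀ + r • y) * η y| + |∫ y, pd k w (x₀ + r • y) * η y| := by
        linarith [abs_sub_abs_le_abs_sub (pd k w x₀) (∫ y, pd k w (x₀ + r • y) * η y)]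
    _ ≤ r * H * (∫ y, |pd k ζ y|) + M / r * ∫ y, |pd k η y| :=
        add_le_add (hk.abs_pd_sub_average_le hU hw hball hr hH k) average
    _ ≤ r * H * A k + M / r * A k := by gcongr <;> simp only [A] <;> linarith [hζ k, hη k]
    _ = A k * (M / r + r * H) := by ring
    _ ≤ (∑ k, A k) * (M / r + r * H) := by gcongr; exact hA k

/-- The gradient bound with the radius `√(M / H)`. -/
lemma exists_abs_pd_le_sqrt : ∃ C : ℝ, 0 ≤ C ∧ ∀ {U : Set V3} {w : V3 → ℝ} {x₀ : V3} {r M H : ℝ},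
    IsOpen U → ContDiffOn ℝ 2 w U → closedBall x₀ r ⊆ U → 0 < r → 0 < M → M ≤ r ^ 2 * H →
    (∀ x ∈ closedBall x₀ r, |w x| ≤ M) → (∀ x ∈ closedBall x₀ r, |lap3 w x| ≤ H) →
    ∀ k, |pd k w x₀| ≤ C * √(M * H) := by
  obtain ⟨C, hC, hgrad⟩ := exists_abs_pd_le
  refine ⟨C * 2, by positivity, fun {U w x₀ r M H} hU hw hball hr hM hMH hw_le hlap_le k => ?_⟩
  have hH : 0 < H := pos_of_mul_pos_right (hM.trans_le hMH) (sq_nonneg r)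
  have hs : 0 < √(M / H) := Real.sqrt_pos.2 (div_pos hM hH)
  have hsr : √(M / H) ≤ r := Real.sqrt_le_iff.2 ⟨hr.le, (div_le_iff₀ hH).2 hMH⟩
  have hsub := closedBall_subset_closedBall (x := x₀) hsr
  refine (hgrad hU hw (hsub.trans hball) hs (fun x hx => hw_le x (hsub hx))
    (fun x hx => hlap_le x (hsub hx)) k).trans_eq ?_
  rw [Real.sqrt_div hM.le, Real.sqrt_mul hM.le, mul_assoc]
  congr 1
  have hM' := Real.sq_sqrt hM.le
  have hH' := Real.sq_sqrt hH.le
  field_simp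
  nlinarith

/-- `C²` solutions of the stationary Navier–Stokes equations on an open set. -/
structure IsNSSolution (U : Set V3) (u : V3 → V3) (p : V3 → ℝ) : Prop where
  isOpen : IsOpen U
  contDiffOn_velocity : ContDiffOn ℝ 2 u U
  contDiffOn_pressure : ContDiffOn ℝ 2 p U
  nsEq : ∀ x ∈ U, NSEq u p x

namespace IsNSSolution

variable {U : Set V3} {u : V3 → V3} {p : V3 → ℝ} {x : V3} (h : IsNSSolution U u p)
include h

lemma contDiffOn_coord (i : Fin 3) : ContDiffOn ℝ 2 (fun z => u z i) U :=
  (contDiff_coord i).comp_contDiffOn h.contDiffOn_velocity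

lemma contDiffOn_pd_coord (i j : Fin 3) : ContDiffOn ℝ 1 (fun x => pd j (fun z => u z i) x) U :=
  contDiffOn_pd h.isOpen (h.contDiffOn_coord i) (by norm_num) j

lemma continuousOn_pd_pd_coord (i j k : Fin 3) :
    ContinuousOn (fun x => pd k (fun y => pd j (fun z => u z i) y) x) U :=
  (contDiffOn_pd (m := 0) h.isOpen (h.contDiffOn_pd_coord i j) (by simp) k).continuousOn

lemma continuousOn_convection (i : Fin 3) :
    ContinuousOn (fun x => ∑ j, u x j * pd j (fun z => u z i) x) U :=
  continuousOn_finsetSum _ fun j _ =>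
    (h.contDiffOn_coord j).continuousOn.mul (h.contDiffOn_pd_coord i j).continuousOn

lemma sum_pd_coord_eq_zero (hx : x ∈ U) : ∑ j, pd j (fun z => u z j) x = 0 :=
  (h.nsEq x hx).2

lemma pd_pressure_eq (hx : x ∈ U) (i : Fin 3) :
    pd i p x = lap3 (fun z => u z i) x - ∑ j, u x j * pd j (fun z => u z i) x := by
  linarith [(h.nsEq x hx).1 i]

lemma sum_pd_pd_coord_eq_zero (hx : x ∈ U) (j : Fin 3) :
    ∑ i, pd i (fun y => pd j (fun z => u z i) y) x = 0 := by
  have hdiff : ∀ i ∈ Finset.univ, DifferentiableAt ℝ (fun y => pd i (fun z => u z i) y) x :=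
    fun i _ => ((h.contDiffOn_pd_coord i i).contDiffAt (h.isOpen.mem_nhds hx)).differentiableAt
      one_ne_zero
  have hdiv : (fun y => ∑ i, pd i (fun z => u z i) y) =ᶠ[𝓝 x] fun _ => 0 := by
    filter_upwards [h.isOpen.mem_nhds hx] with y hy using h.sum_pd_coord_eq_zero hy
  calc ∑ i, pd i (fun y => pd j (fun z => u z i) y) x
      = ∑ i, pd j (fun y => pd i (fun z => u z i) y) x := Finset.sum_congr rfl fun i _ =>
        pd_comm ((h.contDiffOn_coord i).contDiffAt (h.isOpen.mem_nhds hx)) i j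
    _ = pd j (fun y => ∑ i, pd i (fun z => u z i) y) x := (pd_sum j hdiff).symm
    _ = 0 := by rw [pd_congr j hdiv]; simp [pd]

lemma sum_integral_pd_coord_mul_pd {ψ : V3 → ℝ} (hψ : IsTestFunction U ψ) (j : Fin 3) :
    ∑ i, ∫ x, pd j (fun z => u z i) x * pd i ψ x = 0 := by
  have hint : ∀ i, Integrable fun x => pd i (fun y => pd j (fun z => u z i) y) x * ψ x :=
    fun i => hψ.integrable_mul h.isOpen (h.continuousOn_pd_pd_coord i j i)
  simp_rw [fun i => hψ.integral_mul_pd h.isOpen (h.contDiffOn_pd_coord i j) i]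
  rw [Finset.sum_neg_distrib, ← integral_finsetSum _ fun i _ => hint i, neg_eq_zero]
  refine integral_eq_zero_of_ae (Eventually.of_forall fun x => ?_)
  change ∑ i, _ = (0 : ℝ)
  rw [← Finset.sum_mul]
  by_cases hx : x ∈ U
  · rw [h.sum_pd_pd_coord_eq_zero hx, zero_mul]
  · rw [hψ.eq_zero_of_notMem hx, mul_zero]

lemma sum_integral_lap3_mul_pd {ψ : V3 → ℝ} (hψ : IsTestFunction U ψ) :
    ∑ i, ∫ x, lap3 (fun z => u z i) x * pd i ψ x = 0 := by
  have hint : ∀ i j, Integrable fun x => pd j (fun y => pd j (fun z => u z i) y) x * pd i ψ x :=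
    fun i j => (hψ.partialDeriv i).integrable_mul h.isOpen (h.continuousOn_pd_pd_coord i j j)
  have hcomm : ∀ i j x, pd j (fun y => pd i ψ y) x = pd i (fun y => pd j ψ y) x := fun i j x =>
    pd_comm (hψ.contDiff.contDiffAt.of_le (by norm_cast)) j i
  calc ∑ i, ∫ x, lap3 (fun z => u z i) x * pd i ψ x
      = ∑ i, ∑ j, ∫ x, pd j (fun y => pd j (fun z => u z i) y) x * pd i ψ x := by
        refine Finset.sum_congr rfl fun i _ => ?_
        rw [← integral_finsetSum _ fun j _ => hint i j]
        simp only [lap3, Finset.sum_mul]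
    _ = -∑ j, ∑ i, ∫ x, pd j (fun z => u z i) x * pd i (fun y => pd j ψ y) x := by
        rw [Finset.sum_comm, ← Finset.sum_neg_distrib]
        refine Finset.sum_congr rfl fun j _ => ?_
        rw [← Finset.sum_neg_distrib]
        refine Finset.sum_congr rfl fun i _ => ?_
        have hparts := (hψ.partialDeriv i).integral_mul_pd h.isOpen (h.contDiffOn_pd_coord i j) j
        simp_rw [hcomm i j] at hparts
        rw [hparts, neg_neg]
    _ = 0 := by
        rw [neg_eq_zero]
        exact Finset.sum_eq_zero fun j _ =>
          h.sum_integral_pd_coord_mul_pd (hψ.partialDeriv j) j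

lemma sum_integral_convection_mul_pd {ψ : V3 → ℝ} (hψ : IsTestFunction U ψ) :
    ∑ i, ∫ x, (∑ j, u x j * pd j (fun z => u z i) x) * pd i ψ x
      = -∫ x, (∑ i, ∑ j, pd i (fun z => u z j) x * pd j (fun z => u z i) x) * ψ x := by
  have hconv : ∀ i, ContDiffOn ℝ 1 (fun x => ∑ j, u x j * pd j (fun z => u z i) x) U := fun i =>
    ContDiffOn.sum fun j _ => ((h.contDiffOn_coord j).of_le one_le_two).mul
      (h.contDiffOn_pd_coord i j)
  have hint : ∀ i, Integrable fun x =>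
      pd i (fun y => ∑ j, u y j * pd j (fun z => u z i) y) x * ψ x := fun i =>
    hψ.integrable_mul h.isOpen (contDiffOn_pd (m := 0) h.isOpen (hconv i) (by simp) i).continuousOn
  simp_rw [fun i => hψ.integral_mul_pd h.isOpen (hconv i) i]
  rw [Finset.sum_neg_distrib, ← integral_finsetSum _ fun i _ => hint i]
  congr 2 with x
  by_cases hx : x ∈ U
  swap; · simp [hψ.eq_zero_of_notMem hx]
  have hu : ∀ j, DifferentiableAt ℝ (fun y => u y j) x := fun j =>
    ((h.contDiffOn_coord j).contDiffAt (h.isOpen.mem_nhds hx)).differentiableAt two_ne_zero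
  have hdu : ∀ i j, DifferentiableAt ℝ (fun y => pd j (fun z => u z i) y) x := fun i j =>
    ((h.contDiffOn_pd_coord i j).contDiffAt (h.isOpen.mem_nhds hx)).differentiableAt one_ne_zero
  rw [← Finset.sum_mul]
  congr 1
  have product_rule : ∀ i, pd i (fun y => ∑ j, u y j * pd j (fun z => u z i) y) x
      = (∑ j, pd i (fun z => u z j) x * pd j (fun z => u z i) x)
        + ∑ j, u x j * pd i (fun y => pd j (fun z => u z i) y) x := fun i => by
    rw [pd_sum i fun j _ => (hu j).fun_mul (hdu i j), ← Finset.sum_add_distrib]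
    exact Finset.sum_congr rfl fun j _ => pd_mul i (hu j) (hdu i j)
  rw [Finset.sum_congr rfl fun i _ => product_rule i, Finset.sum_add_distrib, add_eq_left,
    Finset.sum_comm]
  simp_rw [← Finset.mul_sum, h.sum_pd_pd_coord_eq_zero hx, mul_zero, Finset.sum_const_zero]

lemma integral_lap3_pressure_mul {ψ : V3 → ℝ} (hψ : IsTestFunction U ψ) :
    ∫ x, lap3 p x * ψ x
      = -∫ x, (∑ i, ∑ j, pd i (fun z => u z j) x * pd j (fun z => u z i) x) * ψ x := by
  have hdp : ∀ i, ContDiffOn ℝ 1 (fun x => pd i p x) U := fun i =>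
    contDiffOn_pd h.isOpen h.contDiffOn_pressure (by norm_num) i
  have hddp_int : ∀ i, Integrable fun x => pd i (fun y => pd i p y) x * ψ x := fun i =>
    hψ.integrable_mul h.isOpen (contDiffOn_pd (m := 0) h.isOpen (hdp i) (by simp) i).continuousOn
  have hlap_int : ∀ i, Integrable fun x => lap3 (fun z => u z i) x * pd i ψ x := fun i =>
    (hψ.partialDeriv i).integrable_mul h.isOpen
      (continuousOn_finsetSum _ fun j _ => h.continuousOn_pd_pd_coord i j j)
  have hconv_int : ∀ i, Integrable fun x =>
      (∑ j, u x j * pd j (fun z => u z i) x) * pd i ψ x := fun i =>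
    (hψ.partialDeriv i).integrable_mul h.isOpen (h.continuousOn_convection i)
  calc ∫ x, lap3 p x * ψ x = ∑ i, ∫ x, pd i (fun y => pd i p y) x * ψ x := by
        rw [← integral_finsetSum _ fun i _ => hddp_int i]
        simp only [lap3, Finset.sum_mul]
    _ = -∑ i, ∫ x, pd i p x * pd i ψ x := by
        simp_rw [fun i => hψ.integral_mul_pd h.isOpen (hdp i) i, Finset.sum_neg_distrib, neg_neg]
    _ = -∑ i, ((∫ x, lap3 (fun z => u z i) x * pd i ψ x)
          - ∫ x, (∑ j, u x j * pd j (fun z => u z i) x) * pd i ψ x) := by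
        congr 1
        refine Finset.sum_congr rfl fun i _ => ?_
        rw [← integral_sub (hlap_int i) (hconv_int i)]
        simp_rw [← sub_mul]
        exact integral_congr_of_isTestFunction (hψ.partialDeriv i) fun y hy =>
          h.pd_pressure_eq hy i
    _ = -∫ x, (∑ i, ∑ j, pd i (fun z => u z j) x * pd j (fun z => u z i) x) * ψ x := by
        rw [Finset.sum_sub_distrib, h.sum_integral_lap3_mul_pd hψ,
          h.sum_integral_convection_mul_pd hψ, zero_sub, neg_neg]

/-- Obtained from its weak form, because `Δu` is only continuous. -/
lemma lap3_pressure_eq (hx : x ∈ U) :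
    lap3 p x = -∑ i, ∑ j, pd i (fun z => u z j) x * pd j (fun z => u z i) x := by
  set Q : V3 → ℝ := fun x => ∑ i, ∑ j, pd i (fun z => u z j) x * pd j (fun z => u z i) x
  have hQ : ContinuousOn Q U := continuousOn_finsetSum _ fun i _ => continuousOn_finsetSum _
    fun j _ => (h.contDiffOn_pd_coord j i).continuousOn.mul (h.contDiffOn_pd_coord i j).continuousOn
  have hlap : ContinuousOn (lap3 p) U := continuousOn_finsetSum _ fun i _ =>
    (contDiffOn_pd (m := 0) h.isOpen (contDiffOn_pd (m := 1) h.isOpen h.contDiffOn_pressure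
      (by norm_num) i) (by simp) i).continuousOn
  have hae : ∀ᵐ x, x ∈ U → lap3 p x + Q x = 0 := by
    refine h.isOpen.ae_eq_zero_of_integral_contDiff_smul_eq_zero
      ((hlap.add hQ).locallyIntegrableOn h.isOpen.measurableSet) fun ψ hψ hψc hψU => ?_
    have hψ : IsTestFunction U ψ := ⟨hψ, hψc, hψU⟩
    simp_rw [smul_eq_mul, mul_comm (ψ _), add_mul]
    rw [integral_add (hψ.integrable_mul h.isOpen hlap) (hψ.integrable_mul h.isOpen hQ),
      h.integral_lap3_pressure_mul hψ, neg_add_cancel]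
  have hzero := Measure.eqOn_open_of_ae_eq (f := fun x => lap3 p x + Q x) (g := fun _ => 0)
    ((ae_restrict_iff' h.isOpen.measurableSet).2 hae) h.isOpen (hlap.add hQ) continuousOn_const
  exact eq_neg_of_add_eq_zero_left (hzero hx)

end IsNSSolution

lemma sq_mul_integral_lap3_affine_mul {U : Set V3} {f g : V3 → ℝ} {x₀ : V3} {t : ℝ} (hU : IsOpen U)
    (hf : ContDiffOn ℝ 2 f U) (hg : IsTestFunction ((fun y => x₀ + t • y) ⁻¹' U) g) :
    t ^ 2 * ∫ y, lap3 f (x₀ + t • y) * g y = ∫ y, f (x₀ + t • y) * lap3 g y := by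
  have hline : Continuous fun y : V3 => x₀ + t • y := by fun_prop
  have hdf : ∀ j, ContDiffOn ℝ 1 (fun x => pd j f x) U := fun j =>
    contDiffOn_pd hU hf (by norm_num) j
  have hint : ∀ j, Integrable fun y => pd j (fun z => pd j f z) (x₀ + t • y) * g y := fun j =>
    hg.integrable_mul (hU.preimage hline) <|
      (contDiffOn_pd (m := 0) hU (hdf j) (by simp) j).continuousOn.comp hline.continuousOn
        (Set.mapsTo_preimage _ _)
  have hint' : ∀ j, Integrable fun y => f (x₀ + t • y) * pd j (fun z => pd j g z) y := fun j =>
    ((hg.partialDeriv j).partialDeriv j).integrable_mul (hU.preimage hline) <|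
      hf.continuousOn.comp hline.continuousOn (Set.mapsTo_preimage _ _)
  simp only [lap3, Finset.sum_mul, Finset.mul_sum]
  rw [integral_finsetSum _ fun j _ => hint j, integral_finsetSum _ fun j _ => hint' j,
    Finset.mul_sum]
  refine Finset.sum_congr rfl fun j _ => ?_
  rw [integral_affine_mul_pd hU (hf.of_le one_le_two) x₀ t (hg.partialDeriv j) j,
    integral_affine_mul_pd hU (hdf j) x₀ t hg j]
  ring

namespace IsNSSolution

lemma abs_convection_le {u : V3 → V3} {x : V3} {M G : ℝ} (hM : ∀ i, |u x i| ≤ M)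
    (hG : ∀ i j, |pd j (fun z => u z i) x| ≤ G) (k : Fin 3) :
    |∑ j, u x j * pd j (fun z => u z k) x| ≤ 3 * (M * G) := by
  have hM₀ : 0 ≤ M := (abs_nonneg _).trans (hM 0)
  calc |∑ j, u x j * pd j (fun z => u z k) x|
      ≤ ∑ j, |u x j * pd j (fun z => u z k) x| := Finset.abs_sum_le_sum_abs _ _
    _ ≤ ∑ _j : Fin 3, M * G := Finset.sum_le_sum fun j _ => by
        rw [abs_mul]
        exact mul_le_mul (hM j) (hG k j) (abs_nonneg _) hM₀
    _ = 3 * (M * G) := by simp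

lemma abs_lap3_pressure_le {U : Set V3} {u : V3 → V3} {p : V3 → ℝ} {x : V3} {G : ℝ}
    (h : IsNSSolution U u p) (hx : x ∈ U) (hG : ∀ i j, |pd j (fun z => u z i) x| ≤ G) :
    |lap3 p x| ≤ 9 * G ^ 2 := by
  have hG₀ : 0 ≤ G := (abs_nonneg _).trans (hG 0 0)
  rw [h.lap3_pressure_eq hx, abs_neg]
  calc |∑ i, ∑ j, pd i (fun z => u z j) x * pd j (fun z => u z i) x|
      ≤ ∑ i, ∑ j, |pd i (fun z => u z j) x * pd j (fun z => u z i) x| :=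
        (Finset.abs_sum_le_sum_abs _ _).trans
          (Finset.sum_le_sum fun i _ => Finset.abs_sum_le_sum_abs _ _)
    _ ≤ ∑ _i : Fin 3, ∑ _j : Fin 3, G * G := Finset.sum_le_sum fun i _ =>
        Finset.sum_le_sum fun j _ => by
          rw [abs_mul]
          exact mul_le_mul (hG j i) (hG i j) (abs_nonneg _) hG₀
    _ = 9 * G ^ 2 := by simp; ring

lemma abs_integral_pd_pressure_mul_kernel_le {U : Set V3} {u : V3 → V3} {p : V3 → ℝ} {x₀ : V3}
    {r M G : ℝ} {η : V3 → ℝ} (h : IsNSSolution U u p) (hη : IsTestFunction (closedBall 0 1) η)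
    (hball : closedBall x₀ r ⊆ U) (hr : 0 < r) (hM : ∀ x ∈ closedBall x₀ r, ∀ i, |u x i| ≤ M)
    (hG : ∀ x ∈ closedBall x₀ r, ∀ i j, |pd j (fun z => u z i) x| ≤ G) (k : Fin 3) :
    |∫ y, pd k p (x₀ + r • y) * η y|
      ≤ M / r ^ 2 * (∫ y, |lap3 η y|) + 3 * (M * G) * ∫ y, |η y| := by
  have hmem : ∀ y ∈ closedBall (0 : V3) 1, x₀ + r • y ∈ closedBall x₀ r := fun y hy =>
    add_smul_mem_closedBall hr.le le_rfl hy
  have hη_U := hη.mono (U := (fun y => x₀ + r • y) ⁻¹' U) fun y hy => hball (hmem y hy)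
  have hline : ContinuousOn (fun y : V3 => x₀ + r • y) ((fun y => x₀ + r • y) ⁻¹' U) := by fun_prop
  have hopen : IsOpen ((fun y : V3 => x₀ + r • y) ⁻¹' U) := h.isOpen.preimage (by fun_prop)
  have convection := abs_integral_mul_le_of_isTestFunction hη
    (f := fun y => ∑ j, u (x₀ + r • y) j * pd j (fun z => u z k) (x₀ + r • y)) fun y hy =>
      abs_convection_le (hM _ (hmem y hy)) (hG _ (hmem y hy)) k
  have viscous : |∫ y, lap3 (fun z => u z k) (x₀ + r • y) * η y|
      ≤ M / r ^ 2 * ∫ y, |lap3 η y| := by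
    have hbound := abs_integral_mul_le_of_isTestFunction hη.laplacian
      (f := fun y => u (x₀ + r • y) k) fun y hy => hM _ (hmem y hy) k
    rw [← sq_mul_integral_lap3_affine_mul h.isOpen (h.contDiffOn_coord k) hη_U, abs_mul,
      abs_of_pos (pow_pos hr 2)] at hbound
    rw [div_mul_eq_mul_div, le_div_iff₀ (pow_pos hr 2)]
    linarith
  have split : ∫ y, pd k p (x₀ + r • y) * η y
      = (∫ y, lap3 (fun z => u z k) (x₀ + r • y) * η y)
        - ∫ y, (∑ j, u (x₀ + r • y) j * pd j (fun z => u z k) (x₀ + r • y)) * η y := by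
    rw [← integral_sub]
    · simp_rw [← sub_mul]
      exact integral_congr_of_isTestFunction hη_U fun y hy => h.pd_pressure_eq hy k
    · exact hη_U.integrable_mul hopen ((continuousOn_finsetSum _ fun j _ =>
        h.continuousOn_pd_pd_coord k j j).comp hline (Set.mapsTo_preimage _ _))
    · exact hη_U.integrable_mul hopen
        ((h.continuousOn_convection k).comp hline (Set.mapsTo_preimage _ _))
  rw [split]
  exact (abs_sub _ _).trans (add_le_add viscous convection)

lemma exists_abs_pd_pressure_le : ∃ C : ℝ, 0 ≤ C ∧ ∀ {U : Set V3} {u : V3 → V3} {p : V3 → ℝ}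
    {x₀ : V3} {r M G : ℝ}, IsNSSolution U u p → closedBall x₀ r ⊆ U → 0 < r →
    (∀ x ∈ closedBall x₀ r, ∀ i, |u x i| ≤ M) →
    (∀ x ∈ closedBall x₀ r, ∀ i j, |pd j (fun z => u z i) x| ≤ G) →
    ∀ k, |pd k p x₀| ≤ C * (M / r ^ 2 + M * G + r * G ^ 2) := by
  obtain ⟨ζ, η, hk⟩ := exists_isRadialKernel
  set A : ℝ := ∑ k, ∫ y, |pd k ζ y|
  set B : ℝ := ∫ y, |η y|
  set L : ℝ := ∫ y, |lap3 η y|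
  have : 0 ≤ A := Finset.sum_nonneg fun k _ => integral_nonneg fun y => abs_nonneg _
  have : 0 ≤ B := integral_nonneg fun y => abs_nonneg _
  have : 0 ≤ L := integral_nonneg fun y => abs_nonneg _
  refine ⟨9 * A + 3 * B + L, by positivity,
    fun {U u p x₀ r M G} h hball hr hM hG k => ?_⟩
  have hx₀ := mem_closedBall_self (x := x₀) hr.le
  have hM₀ : 0 ≤ M := (abs_nonneg _).trans (hM x₀ hx₀ 0)
  have hG₀ : 0 ≤ G := (abs_nonneg _).trans (hG x₀ hx₀ 0 0)
  have average := h.abs_integral_pd_pressure_mul_kernel_le hk.isTestFunction_kernel hball hr hM hG k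
  have oscillation := hk.abs_pd_sub_average_le h.isOpen h.contDiffOn_pressure hball hr
    (fun x hx => h.abs_lap3_pressure_le (hball hx) (hG x hx)) k
  have hAk : ∫ y, |pd k ζ y| ≤ A := Finset.single_le_sum
    (f := fun k => ∫ y, |pd k ζ y|) (fun k _ => integral_nonneg fun y => abs_nonneg _)
    (Finset.mem_univ k)
  calc |pd k p x₀|
      ≤ |pd k p x₀ - ∫ y, pd k p (x₀ + r • y) * η y| + |∫ y, pd k p (x₀ + r • y) * η y| := by
        linarith [abs_sub_abs_le_abs_sub (pd k p x₀) (∫ y, pd k p (x₀ + r • y) * η y)]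
    _ ≤ r * (9 * G ^ 2) * A + (M / r ^ 2 * L + 3 * (M * G) * B) :=
        add_le_add (oscillation.trans (by gcongr)) average
    _ = 9 * A * (r * G ^ 2) + 3 * B * (M * G) + L * (M / r ^ 2) := by ring
    _ ≤ (9 * A + 3 * B + L) * (M / r ^ 2 + M * G + r * G ^ 2) := by
        have : 0 ≤ M / r ^ 2 := by positivity
        have : 0 ≤ M * G := by positivity
        have : 0 ≤ r * G ^ 2 := by positivity
        have : 0 ≤ A * (M / r ^ 2 + M * G) := by positivity
        have : 0 ≤ B * (M / r ^ 2 + r * G ^ 2) := by positivity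
        have : 0 ≤ L * (M * G + r * G ^ 2) := by positivity
        linarith

end IsNSSolution

lemma sq_sub_dist_mul_le_of_absorption {X : Type*} [PseudoMetricSpace X] [ProperSpace X]
    {L : X → ℝ} {x₀ x : X} {R A : ℝ} (hL : ContinuousOn L (closedBall x₀ R)) (hL₀ : ∀ x, 0 ≤ L x)
    (hA : 0 ≤ A) (absorb : ∀ x d H, 0 < d → d ≤ R → closedBall x d ⊆ closedBall x₀ R →
      (∀ y ∈ closedBall x d, L y ≤ H) → d ^ 2 * L x ≤ A + d ^ 2 * H / 8)
    (hx : x ∈ closedBall x₀ R) : (R - dist x x₀) ^ 2 * L x ≤ 8 * A := by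
  obtain ⟨z, hz, hmax⟩ := (isCompact_closedBall x₀ R).exists_isMaxOn ⟨x, hx⟩
    (f := fun x => (R - dist x x₀) ^ 2 * L x) (by fun_prop)
  refine (hmax hx).trans ?_
  change (R - dist z x₀) ^ 2 * L z ≤ 8 * A
  set e := R - dist z x₀
  rcases (sub_nonneg.2 (mem_closedBall.1 hz) : 0 ≤ e).eq_or_lt with he₀ | he₀
  · rw [show e = 0 from he₀.symm]
    linarith
  have half_le : ∀ y ∈ closedBall z (e / 2), e / 2 ≤ R - dist y x₀ := fun y hy => by
    linarith [dist_triangle y z x₀, mem_closedBall.1 hy]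
  have hsub : closedBall z (e / 2) ⊆ closedBall x₀ R := fun y hy =>
    mem_closedBall.2 (by linarith [half_le y hy])
  have hsup : ∀ y ∈ closedBall z (e / 2), L y ≤ e ^ 2 * L z / (e / 2) ^ 2 := fun y hy => by
    rw [le_div_iff₀ (by positivity), mul_comm]
    calc (e / 2) ^ 2 * L y ≤ (R - dist y x₀) ^ 2 * L y := by
          have := half_le y hy
          gcongr
          exact hL₀ y
      _ ≤ e ^ 2 * L z := hmax (hsub hy)
  have key := absorb z (e / 2) _ (by positivity)
    (by linarith [dist_nonneg (x := z) (y := x₀)]) hsub hsup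
  rw [mul_div_cancel₀ _ (by positivity)] at key
  nlinarith

lemma sq_mul_interior_bound_le {d M H C₁ C₂ c : ℝ} (hd : 0 < d) (hM : 0 ≤ M) (hH : 0 ≤ H)
    (hC₁ : 0 ≤ C₁) (hC₂ : 0 ≤ C₂) (hMd : M * d ≤ c) (hMH : M ≤ (d / 2) ^ 2 * H) :
    d ^ 2 * (3 * (M * (C₁ * √(M * H)))
        + C₂ * (M / (d / 2) ^ 2 + M * (C₁ * √(M * H)) + d / 2 * (C₁ * √(M * H)) ^ 2))
      ≤ 4 * C₂ * M + c * ((3 + C₂) * C₁ + C₂ * C₁ ^ 2) * (d ^ 2 * H / 2) := by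
  set q := √(M * H)
  have hq : q ^ 2 = M * H := Real.sq_sqrt (mul_nonneg hM hH)
  have hdq : d * q ≤ d ^ 2 * H / 2 := by
    refine abs_le_of_sq_le_sq' ?_ (by positivity) |>.2
    nlinarith [mul_le_mul_of_nonneg_right hMH (by positivity : 0 ≤ d ^ 2 * H)]
  have hMq : M * d * (d * q) ≤ c * (d ^ 2 * H / 2) :=
    mul_le_mul hMd hdq (by positivity) ((by positivity : 0 ≤ M * d).trans hMd)
  have hMH' : M * d * (d ^ 2 * H / 2) ≤ c * (d ^ 2 * H / 2) := by gcongr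
  calc d ^ 2 * (3 * (M * (C₁ * q)) + C₂ * (M / (d / 2) ^ 2 + M * (C₁ * q) + d / 2 * (C₁ * q) ^ 2))
      = 4 * C₂ * M + (3 + C₂) * C₁ * (M * d * (d * q))
          + C₂ * C₁ ^ 2 * (M * d * (d ^ 2 * H / 2)) := by
        rw [mul_pow, hq]
        field_simp
        ring
    _ ≤ 4 * C₂ * M + (3 + C₂) * C₁ * (c * (d ^ 2 * H / 2))
          + C₂ * C₁ ^ 2 * (c * (d ^ 2 * H / 2)) := by gcongr
    _ = _ := by ring

namespace IsNSSolution

lemma exists_sq_mul_abs_lap3_coord_le : ∃ c > 0, ∃ K : ℝ, 0 ≤ K ∧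
    ∀ {U : Set V3} {u : V3 → V3} {p : V3 → ℝ} {x : V3} {d M H : ℝ}, IsNSSolution U u p →
    closedBall x d ⊆ U → 0 < d → 0 < M → M * d ≤ c →
    (∀ y ∈ closedBall x d, ∀ i, |u y i| ≤ M) →
    (∀ y ∈ closedBall x d, ∀ i, |lap3 (fun z => u z i) y| ≤ H) →
    ∀ k, d ^ 2 * |lap3 (fun z => u z k) x| ≤ K * M + d ^ 2 * H / 24 := by
  obtain ⟨C₁, hC₁, hgrad⟩ := exists_abs_pd_le_sqrt
  obtain ⟨C₂, hC₂, hpress⟩ := exists_abs_pd_pressure_le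
  set D : ℝ := (3 + C₂) * C₁ + C₂ * C₁ ^ 2
  have : 0 ≤ D := by positivity
  refine ⟨1 / (12 * (D + 1)), by positivity, 4 * C₂ + 4, by positivity,
    fun {U u p x d M H} h hball hd hM hMd hu hlap k => ?_⟩
  have hx := mem_closedBall_self (x := x) hd.le
  have hH : 0 ≤ H := (abs_nonneg _).trans (hlap x hx 0)
  rcases lt_or_ge ((d / 2) ^ 2 * H) M with hsmall | hlarge
  · nlinarith [mul_le_mul_of_nonneg_left (hlap x hx k) (sq_nonneg d), mul_nonneg hC₂ hM.le,
      mul_nonneg (sq_nonneg d) hH]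
  set G : ℝ := C₁ * √(M * H)
  have : 0 ≤ G := by positivity
  have hG : ∀ y ∈ closedBall x (d / 2), ∀ i j, |pd j (fun z => u z i) y| ≤ G := by
    intro y hy i j
    have hsub : closedBall y (d / 2) ⊆ closedBall x d :=
      closedBall_subset_closedBall' (by linarith [mem_closedBall.1 hy])
    exact hgrad h.isOpen (h.contDiffOn_coord i) (hsub.trans hball) (by positivity) hM hlarge
      (fun z hz => hu z (hsub hz) i) (fun z hz => hlap z (hsub hz) i) j
  have hhalf : closedBall x (d / 2) ⊆ closedBall x d := closedBall_subset_closedBall (by linarith)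
  have pressure := hpress h (hhalf.trans hball) (by positivity) (fun y hy => hu y (hhalf hy)) hG k
  have convection := abs_convection_le (hu x hx)
    (hG x (mem_closedBall_self (by positivity))) k
  have laplacian : |lap3 (fun z => u z k) x|
      ≤ 3 * (M * G) + C₂ * (M / (d / 2) ^ 2 + M * G + d / 2 * G ^ 2) := by
    have hsum : lap3 (fun z => u z k) x
        = (∑ j, u x j * pd j (fun z => u z k) x) + pd k p x := by
      rw [h.pd_pressure_eq (hball hx) k]
      ring
    rw [hsum]
    exact (abs_add_le _ _).trans (add_le_add convection pressure)
  have smallness : 1 / (12 * (D + 1)) * D ≤ 1 / 12 := by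
    rw [div_mul_eq_mul_div, div_le_div_iff₀ (by positivity) (by positivity)]
    linarith
  have := mul_le_mul_of_nonneg_left laplacian (sq_nonneg d)
  have := mul_le_mul_of_nonneg_right smallness (by positivity : 0 ≤ d ^ 2 * H / 2)
  linarith [sq_mul_interior_bound_le hd hM.le hH hC₁ hC₂ hMd hlarge]

lemma exists_abs_lap3_coord_le : ∃ c > 0, ∃ K : ℝ, 0 ≤ K ∧
    ∀ {U : Set V3} {u : V3 → V3} {p : V3 → ℝ} {x₀ : V3} {R M : ℝ}, IsNSSolution U u p →
    closedBall x₀ R ⊆ U → 0 < R → 0 < M → M * R ≤ c →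
    (∀ x ∈ closedBall x₀ R, ∀ i, |u x i| ≤ M) →
    ∀ x ∈ closedBall x₀ (R / 2), ∀ k, |lap3 (fun z => u z k) x| ≤ K * (M / R ^ 2) := by
  obtain ⟨c, hc, K, hK, hlap⟩ := exists_sq_mul_abs_lap3_coord_le
  refine ⟨c, hc, 96 * K, by positivity, fun {U u p x₀ R M} h hball hR hM hMR hu x hx k => ?_⟩
  set L : V3 → ℝ := fun x => ∑ i, |lap3 (fun z => u z i) x|
  have le_L : ∀ y i, |lap3 (fun z => u z i) y| ≤ L y := fun y i =>
    Finset.single_le_sum (f := fun i => |lap3 (fun z => u z i) y|) (fun i _ => abs_nonneg _)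
      (Finset.mem_univ i)
  have hL : ContinuousOn L (closedBall x₀ R) := (continuousOn_finsetSum _ fun i _ =>
    (continuousOn_finsetSum _ fun j _ => h.continuousOn_pd_pd_coord i j j).abs).mono hball
  have absorbed := sq_sub_dist_mul_le_of_absorption hL (fun x => Finset.sum_nonneg
    fun i _ => abs_nonneg _) (by positivity : 0 ≤ 3 * K * M)
    (fun y d H hd hdR hsub hH => by
      have := fun i => hlap h (hsub.trans hball) hd hM
        ((mul_le_mul_of_nonneg_left hdR hM.le).trans hMR) (fun z hz => hu z (hsub hz))
        (fun z hz i => (le_L z i).trans (hH z hz)) i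
      simp only [L, Fin.sum_univ_three]
      linarith [this 0, this 1, this 2]) (closedBall_subset_closedBall (by linarith) hx)
  have hdist : R / 2 ≤ R - dist x x₀ := by linarith [mem_closedBall.1 hx]
  have hquarter : (R / 2) ^ 2 * L x ≤ (R - dist x x₀) ^ 2 * L x := by gcongr
  refine (le_L x k).trans ?_
  rw [mul_div_assoc', le_div_iff₀ (by positivity)]
  linarith

/-- `M * R ≤ c` makes the equations a small perturbation of the Stokes system. -/
lemma exists_interior_estimate : ∃ c > 0, ∃ C : ℝ, 0 ≤ C ∧
    ∀ {U : Set V3} {u : V3 → V3} {p : V3 → ℝ} {x₀ : V3} {R M : ℝ}, IsNSSolution U u p →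
    closedBall x₀ R ⊆ U → 0 < R → 0 < M → M * R ≤ c →
    (∀ x ∈ closedBall x₀ R, ∀ i, |u x i| ≤ M) →
    (∀ i j, |pd j (fun z => u z i) x₀| ≤ C * (M / R)) ∧ ∀ k, |pd k p x₀| ≤ C * (M / R ^ 2) := by
  obtain ⟨c, hc, K, hK, hlap⟩ := exists_abs_lap3_coord_le
  obtain ⟨C₁, hC₁, hgrad⟩ := exists_abs_pd_le
  set C₂ : ℝ := C₁ * (2 + K / 2)
  have : 0 ≤ C₂ := by positivity
  refine ⟨c, hc, C₂ + (K + 3 * C₂ * c), by positivity,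
    fun {U u p x₀ R M} h hball hR hM hMR hu => ?_⟩
  have hhalf : closedBall x₀ (R / 2) ⊆ closedBall x₀ R := closedBall_subset_closedBall (by linarith)
  have hx₀ : x₀ ∈ closedBall x₀ (R / 2) := mem_closedBall_self (by positivity)
  have laplacian := hlap h hball hR hM hMR hu
  have gradient : ∀ i j, |pd j (fun z => u z i) x₀| ≤ C₂ * (M / R) := fun i j =>
    (hgrad h.isOpen (h.contDiffOn_coord i) (hhalf.trans hball) (by positivity)
      (fun x hx => hu x (hhalf hx) i) (fun x hx => laplacian x hx i) j).trans_eq (by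
        simp only [C₂]; field_simp)
  have hCc : 0 ≤ K + 3 * C₂ * c := by positivity
  refine ⟨fun i j => (gradient i j).trans (by gcongr; linarith), fun k => ?_⟩
  rw [h.pd_pressure_eq (hball (hhalf hx₀))]
  calc |lap3 (fun z => u z k) x₀ - ∑ j, u x₀ j * pd j (fun z => u z k) x₀|
      ≤ K * (M / R ^ 2) + 3 * (M * (C₂ * (M / R))) :=
        (abs_sub _ _).trans (add_le_add (laplacian x₀ hx₀ k)
          (abs_convection_le (hu x₀ (hhalf hx₀)) gradient k))
    _ = K * (M / R ^ 2) + 3 * C₂ * (M * R) * (M / R ^ 2) := by field_simp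
    _ ≤ K * (M / R ^ 2) + 3 * C₂ * c * (M / R ^ 2) := by gcongr
    _ ≤ (C₂ + (K + 3 * C₂ * c)) * (M / R ^ 2) := by
        have : 0 ≤ C₂ * (M / R ^ 2) := by positivity
        linarith

end IsNSSolution

/-! ### Logarithmically small solutions near the axis -/

lemma rho_sq (x : V3) : rho x ^ 2 = x 0 ^ 2 + x 1 ^ 2 := Real.sq_sqrt (by positivity)

lemma rho_nonneg (x : V3) : 0 ≤ rho x := Real.sqrt_nonneg _

lemma continuous_rho : Continuous rho := by unfold rho; fun_prop

lemma rho_eq_norm (x : V3) : rho x = ‖(!₂[x 0, x 1] : V2)‖ := by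
  simp [rho, EuclideanSpace.norm_eq, Fin.sum_univ_two]

lemma norm_sq_eq_rho_sq_add (x : V3) : ‖x‖ ^ 2 = rho x ^ 2 + x 2 ^ 2 := by
  simp [EuclideanSpace.norm_sq_eq, Fin.sum_univ_three, rho_sq]

lemma rho_le_norm (x : V3) : rho x ≤ ‖x‖ :=
  le_of_sq_le_sq (by nlinarith [norm_sq_eq_rho_sq_add x]) (norm_nonneg x)

lemma rho_le_rho_add_dist (x y : V3) : rho x ≤ rho y + dist x y := by
  have hsplit : (!₂[x 0, x 1] : V2) = !₂[y 0, y 1] + !₂[(x - y) 0, (x - y) 1] := by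
    ext i; fin_cases i <;> simp
  calc rho x ≤ rho y + rho (x - y) := by
        rw [rho_eq_norm, rho_eq_norm, rho_eq_norm, hsplit]
        exact norm_add_le _ _
    _ ≤ rho y + dist x y := by
        rw [dist_eq_norm]
        gcongr
        exact rho_le_norm _

/-- The closed cylinder `a ≤ x₃ ≤ b`, `|x'| ≤ R` without its axis. -/
def puncturedCylinder (a b R : ℝ) : Set V3 := {x | a ≤ x 2 ∧ x 2 ≤ b ∧ 0 < rho x ∧ rho x ≤ R}

lemma exists_closedBall_subset_puncturedCylinder {a b R a' b' R' : ℝ} (ha : a' < a) (hb : b < b')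
    (hR : R < R') : ∃ l > 0, l ≤ 1 / 2 ∧ ∀ x ∈ puncturedCylinder a b R,
    closedBall x (l * rho x) ⊆ puncturedCylinder a' b' R' := by
  set m := min (a - a') (min (b' - b) (R' - R))
  have : 0 < m := lt_min (sub_pos.2 ha) (lt_min (sub_pos.2 hb) (sub_pos.2 hR))
  have hm_le : m ≤ a - a' ∧ m ≤ b' - b ∧ m ≤ R' - R := by simp [m]
  set l := min (1 / 2) (m / (|R| + 1))
  have hl : l ≤ 1 / 2 := min_le_left _ _
  refine ⟨l, by positivity, hl, fun x ⟨h₁, h₂, h₃, h₄⟩ y hy => ?_⟩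
  have hlm : l * rho x ≤ m := by
    calc l * rho x ≤ m / (|R| + 1) * (|R| + 1) := by
          gcongr
          · exact min_le_right _ _
          · linarith [le_abs_self R]
      _ = m := div_mul_cancel₀ _ (by positivity)
  have hdist : dist y x ≤ l * rho x := hy
  have hcoord : |y 2 - x 2| ≤ l * rho x :=
    (by simpa [dist_eq_norm] using PiLp.norm_apply_le (y - x) 2 : |y 2 - x 2| ≤ dist y x).trans
      hdist
  rw [abs_le] at hcoord
  have hrho := rho_le_rho_add_dist y x
  have hrho' := rho_le_rho_add_dist x y
  rw [dist_comm x y] at hrho'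
  have : l * rho x ≤ 1 / 2 * rho x := by gcongr
  exact ⟨by linarith, by linarith, by linarith, by linarith⟩

/-- `g` is `o(log |x'|)` at the axis, uniformly on `D`, and bounded on the part of `D` away from
the axis. -/
def IsLogSmallOn (D : Set V3) (g : V3 → ℝ) : Prop :=
  ∀ ε > 0, ∃ C, ∀ x ∈ D, |g x| ≤ ε * |log (rho x)| + C

lemma IsLogSmallOn.of_le_mul {D : Set V3} {g : V3 → ℝ} {K : ℝ}
    (hg : ∀ ε > 0, ∃ C, ∀ x ∈ D, |g x| ≤ K * (ε * |log (rho x)| + C)) : IsLogSmallOn D g := by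
  intro ε hε
  obtain ⟨C, hC⟩ := hg (ε / (|K| + 1)) (by positivity)
  refine ⟨K * C, fun x hx => (hC x hx).trans ?_⟩
  calc K * (ε / (|K| + 1) * |log (rho x)| + C)
      = K * (ε / (|K| + 1) * |log (rho x)|) + K * C := mul_add _ _ _
    _ ≤ (|K| + 1) * (ε / (|K| + 1) * |log (rho x)|) + K * C := by
        gcongr ?_ * _ + _
        linarith [le_abs_self K]
    _ = ε * |log (rho x)| + K * C := by field_simp

lemma exists_abs_log_add_mul_le (R C : ℝ) {l₀ c : ℝ} (hl₀ : 0 < l₀) (hc : 0 < c) :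
    ∃ l > 0, l ≤ l₀ ∧ ∀ r, 0 < r → r ≤ R → (|log r| + C) * (l * r) ≤ c := by
  have hcont : Continuous fun r : ℝ => |r * log r| + r * C :=
    Real.continuous_mul_log.abs.add (continuous_id.mul continuous_const)
  obtain ⟨B, hB⟩ :=
    (isCompact_Icc (a := 0) (b := R)).exists_bound_of_continuousOn hcont.continuousOn
  refine ⟨min l₀ (c / (|B| + 1)), by positivity, min_le_left _ _, fun r hr hrR => ?_⟩
  have hbound : r * (|log r| + C) ≤ B := by
    have := (le_abs_self _).trans (hB r ⟨hr.le, hrR⟩)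
    simpa only [abs_mul, abs_of_pos hr, ← mul_add] using this
  calc (|log r| + C) * (min l₀ (c / (|B| + 1)) * r)
      = min l₀ (c / (|B| + 1)) * (r * (|log r| + C)) := by ring
    _ ≤ min l₀ (c / (|B| + 1)) * (|B| + 1) := by
        gcongr
        linarith [le_abs_self B]
    _ ≤ c / (|B| + 1) * (|B| + 1) := by gcongr; exact min_le_right _ _
    _ = c := div_mul_cancel₀ _ (by positivity)

lemma abs_log_le_abs_log_add_log {r s m : ℝ} (hr : 0 < r) (hs : 0 < s) (hrs : r ≤ m * s)
    (hsr : s ≤ m * r) : |log r| ≤ |log s| + log m := by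
  have hm : 0 < m := pos_of_mul_pos_left (hr.trans_le hrs) hs.le
  have hupper := log_le_log hr hrs
  have hlower := log_le_log hs hsr
  rw [log_mul hm.ne' hs.ne'] at hupper
  rw [log_mul hm.ne' hr.ne'] at hlower
  refine abs_le.2 ⟨?_, ?_⟩ <;> linarith [le_abs_self (log s), neg_abs_le (log s)]

lemma IsLogSmallOn.exists_le_on_closedBall {D D' : Set V3} {g : V3 → ℝ} {l ε : ℝ}
    (hg : IsLogSmallOn D' g) (hε : 0 < ε) (hl : l ≤ 1 / 2) (hD : ∀ x ∈ D, 0 < rho x)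
    (hball : ∀ x ∈ D, closedBall x (l * rho x) ⊆ D') :
    ∃ C > 0, ∀ x ∈ D, ∀ y ∈ closedBall x (l * rho x), |g y| ≤ ε * |log (rho x)| + C := by
  obtain ⟨C, hC⟩ := hg ε hε
  have : 0 < log 2 := log_pos one_lt_two
  refine ⟨|C| + ε * log 2, by positivity, fun x hx y hy => ?_⟩
  have hρ := hD x hx
  have hdist : dist y x ≤ 1 / 2 * rho x := (mem_closedBall.1 hy).trans (by gcongr)
  have hcompare : |log (rho y)| ≤ |log (rho x)| + log 2 := by
    have hxy := rho_le_rho_add_dist x y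
    rw [dist_comm] at hxy
    exact abs_log_le_abs_log_add_log (by linarith) hρ (by linarith [rho_le_rho_add_dist y x])
      (by linarith)
  calc |g y| ≤ ε * |log (rho y)| + C := hC y (hball x hx hy)
    _ ≤ ε * (|log (rho x)| + log 2) + |C| := by gcongr; exact le_abs_self C
    _ = _ := by ring

lemma IsNSSolution.exists_scaled_interior_estimate : ∃ c > 0, ∃ C : ℝ, 0 ≤ C ∧
    ∀ {U : Set V3} {u : V3 → V3} {p : V3 → ℝ} {x : V3} {r l M : ℝ}, IsNSSolution U u p →
    closedBall x (l * r) ⊆ U → 0 < r → 0 < l → 0 < M → M * (l * r) ≤ c →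
    (∀ y ∈ closedBall x (l * r), ∀ i, |u y i| ≤ M) →
    (∀ i j, |r * pd j (fun z => u z i) x| ≤ C / l * M) ∧
      ∀ k, |r ^ 2 * pd k p x| ≤ C / l ^ 2 * M := by
  obtain ⟨c, hc, C, hC, interior⟩ := exists_interior_estimate
  refine ⟨c, hc, C, hC, fun {U u p x r l M} h hball hr hl hM hMl hu => ?_⟩
  obtain ⟨hgrad, hpress⟩ := interior h hball (by positivity) hM hMl hu
  refine ⟨fun i j => ?_, fun k => ?_⟩
  · rw [abs_mul, abs_of_pos hr]
    exact (mul_le_mul_of_nonneg_left (hgrad i j) hr.le).trans_eq (by field_simp)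
  · rw [abs_mul, abs_of_pos (pow_pos hr 2)]
    exact (mul_le_mul_of_nonneg_left (hpress k) (sq_nonneg r)).trans_eq (by field_simp)

lemma IsNSSolution.isLogSmallOn_derivatives {U : Set V3} {u : V3 → V3} {p : V3 → ℝ}
    {a b R a' b' R' : ℝ} (h : IsNSSolution U u p) (hsub : puncturedCylinder a' b' R' ⊆ U)
    (hu : IsLogSmallOn (puncturedCylinder a' b' R') fun x => ‖u x‖) (ha : a' < a) (hb : b < b')
    (hR : R < R') :
    (∀ i j, IsLogSmallOn (puncturedCylinder a b R) fun x => rho x * pd j (fun z => u z i) x) ∧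
      ∀ k, IsLogSmallOn (puncturedCylinder a b R) fun x => rho x ^ 2 * pd k p x := by
  obtain ⟨c, hc, C, hC, interior⟩ := exists_scaled_interior_estimate
  obtain ⟨l₀, hl₀, hl₀_half, hball₀⟩ := exists_closedBall_subset_puncturedCylinder ha hb hR
  have hpos : ∀ x ∈ puncturedCylinder a b R, 0 < rho x := fun x hx => hx.2.2.1
  obtain ⟨C₁, hC₁, hu₁⟩ := hu.exists_le_on_closedBall one_pos hl₀_half hpos hball₀
  obtain ⟨l, hl, hl_le, scale⟩ := exists_abs_log_add_mul_le R C₁ hl₀ hc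
  have hball : ∀ x ∈ puncturedCylinder a b R,
      closedBall x (l * rho x) ⊆ closedBall x (l₀ * rho x) := fun x hx =>
    closedBall_subset_closedBall (by have := hpos x hx; gcongr)
  have derivatives_le : ∀ ε > 0, ∃ Cε, ∀ x ∈ puncturedCylinder a b R,
      (∀ i j, |rho x * pd j (fun z => u z i) x| ≤ C / l * (ε * |log (rho x)| + Cε)) ∧
      ∀ k, |rho x ^ 2 * pd k p x| ≤ C / l ^ 2 * (ε * |log (rho x)| + Cε) := by
    intro ε hε
    obtain ⟨Cε, hCε, huε⟩ := hu.exists_le_on_closedBall hε hl₀_half hpos hball₀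
    refine ⟨Cε, fun x hx => ?_⟩
    have hρ := hpos x hx
    set M := min (|log (rho x)| + C₁) (ε * |log (rho x)| + Cε)
    have hM : ∀ y ∈ closedBall x (l * rho x), ∀ i, |u y i| ≤ M := fun y hy i =>
      (PiLp.norm_apply_le (u y) i).trans <| by
        rw [← abs_norm]
        exact le_min (by simpa using hu₁ x hx y (hball x hx hy)) (huε x hx y (hball x hx hy))
    have hMl : M * (l * rho x) ≤ c :=
      (mul_le_mul_of_nonneg_right (min_le_left _ _) (by positivity)).trans (scale _ hρ hx.2.2.2)
    obtain ⟨hgrad, hpress⟩ := interior h ((hball x hx).trans ((hball₀ x hx).trans hsub)) hρ hl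
      (by positivity) hMl hM
    exact ⟨fun i j => (hgrad i j).trans (by gcongr; exact min_le_right _ _),
      fun k => (hpress k).trans (by gcongr; exact min_le_right _ _)⟩
  exact ⟨fun i j => .of_le_mul (K := C / l) fun ε hε =>
      (derivatives_le ε hε).imp fun _ hC x hx => (hC x hx).1 i j,
    fun k => .of_le_mul (K := C / l ^ 2) fun ε hε =>
      (derivatives_le ε hε).imp fun _ hC x hx => (hC x hx).2 k⟩

section Powers

variable {ι : Type*} {l : Filter ι} {r : ι → ℝ} {R c d κ : ℝ}

lemma isBigO_rpow_of_le (hr : ∀ᶠ x in l, r x ∈ Set.Ioc 0 R) (hdc : d ≤ c) :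
    (fun x => r x ^ c) =O[l] fun x => r x ^ d := by
  refine .of_bound (R ^ (c - d)) (hr.mono fun x ⟨hpos, hle⟩ => ?_)
  rw [norm_of_nonneg (by positivity), norm_of_nonneg (by positivity)]
  calc r x ^ c = r x ^ (c - d) * r x ^ d := by rw [← rpow_add hpos, sub_add_cancel]
    _ ≤ R ^ (c - d) * r x ^ d := by
      have := sub_nonneg.2 hdc
      gcongr

lemma isBigO_mul_rpow {f g : ι → ℝ} (hr : ∀ᶠ x in l, r x ∈ Set.Ioc 0 R)
    (hf : f =O[l] fun x => r x ^ c) (hg : g =O[l] fun x => r x ^ d) :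
    (fun x => f x * g x) =O[l] fun x => r x ^ (c + d) :=
  (hf.mul hg).congr' .rfl (hr.mono fun _ hx => (rpow_add hx.1 c d).symm)

lemma isBigO_const_rpow (hr : ∀ᶠ x in l, r x ∈ Set.Ioc 0 R) (hd : d ≤ 0) (C : ℝ) :
    (fun _ => C) =O[l] fun x => r x ^ d :=
  (Asymptotics.isBigO_const_const C one_ne_zero l).trans <| by
    simpa only [rpow_zero] using isBigO_rpow_of_le hr hd

lemma isBigO_log_rpow (hr : ∀ᶠ x in l, r x ∈ Set.Ioc 0 R) (hκ : 0 < κ) :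
    (fun x => log (r x)) =O[l] fun x => r x ^ (-κ) := by
  have hlog : (fun x => log (r x)) =O[l] fun x => r x ^ κ + r x ^ (-κ) := by
    refine .of_bound (1 / κ) (hr.mono fun x ⟨hpos, _⟩ => ?_)
    have hupper := log_le_rpow_div hpos.le hκ
    have hlower := log_le_rpow_div (inv_nonneg.2 hpos.le) hκ
    rw [log_inv, inv_rpow hpos.le, ← rpow_neg hpos.le] at hlower
    have h₁ : 0 ≤ r x ^ κ / κ := by positivity
    have h₂ : 0 ≤ r x ^ (-κ) / κ := by positivity
    rw [norm_of_nonneg (by positivity : 0 ≤ r x ^ κ + r x ^ (-κ)), norm_eq_abs, one_div_mul_eq_div,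
      add_div, abs_le]
    constructor <;> linarith
  exact hlog.trans ((isBigO_rpow_of_le hr (by linarith)).add (Asymptotics.isBigO_refl _ _))

end Powers

lemma eventually_rho_mem_Ioc (a b R : ℝ) :
    ∀ᶠ x in 𝓟 (puncturedCylinder a b R), rho x ∈ Set.Ioc 0 R :=
  eventually_principal.2 fun _ hx => hx.2.2

lemma IsLogSmallOn.isBigO {a b R κ : ℝ} {g : V3 → ℝ}
    (hg : IsLogSmallOn (puncturedCylinder a b R) g) (hκ : 0 < κ) :
    g =O[𝓟 (puncturedCylinder a b R)] fun x => rho x ^ (-κ) := by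
  obtain ⟨C, hC⟩ := hg 1 one_pos
  have hr := eventually_rho_mem_Ioc a b R
  have hle : g =O[𝓟 (puncturedCylinder a b R)] fun x => |log (rho x)| + C :=
    .of_bound 1 <| eventually_principal.2 fun x hx => by
      simpa only [one_mul, norm_eq_abs] using (hC x hx).trans (by simpa using le_abs_self _)
  exact hle.trans ((isBigO_log_rpow hr hκ).abs_left.add (isBigO_const_rpow hr (by linarith) C))

lemma abs_sub_le_of_abs_deriv_le_rpow {q q' : ℝ → ℝ} {r R K c : ℝ} (hr : 0 < r) (hrR : r ≤ R)
    (hK : 0 ≤ K) (hc : c < -1) (hq : ∀ t ∈ Set.Icc r R, HasDerivAt q (q' t) t)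
    (hq' : ∀ t ∈ Set.Icc r R, |q' t| ≤ K * t ^ c) :
    |q R - q r| ≤ K / -(c + 1) * r ^ (c + 1) := by
  have hpos : ∀ t ∈ Set.Icc r R, 0 < t := fun t ht => hr.trans_le ht.1
  have hc' : 0 < -(c + 1) := by linarith
  have hB : ∀ t ∈ Set.Icc r R,
      HasDerivAt (fun t => K / -(c + 1) * (r ^ (c + 1) - t ^ (c + 1))) (K * t ^ c) t := by
    intro t ht
    refine (((hasDerivAt_rpow_const (p := c + 1) (Or.inl (hpos t ht).ne')).const_sub
      (r ^ (c + 1))).const_mul (K / -(c + 1))).congr_deriv ?_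
    have : c + 1 ≠ 0 := (by linarith : c + 1 < 0).ne
    rw [add_sub_cancel_right]
    field_simp
  have hle := image_norm_le_of_norm_deriv_right_le_deriv_boundary'
    (f := fun t => q t - q r)
    (fun t ht => ((hq t ht).sub_const (q r)).continuousAt.continuousWithinAt)
    (fun t ht => ((hq t (Set.Ico_subset_Icc_self ht)).sub_const (q r)).hasDerivWithinAt)
    (by simp) (fun t ht => (hB t ht).continuousAt.continuousWithinAt)
    (fun t ht => (hB t (Set.Ico_subset_Icc_self ht)).hasDerivWithinAt)
    (fun t ht => hq' t (Set.Ico_subset_Icc_self ht)) (Set.right_mem_Icc.2 hrR)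
  refine hle.trans ?_
  gcongr
  exact sub_le_self _ (rpow_nonneg (hr.le.trans hrR) _)

/-- The point at distance `t` from the axis on the horizontal ray from the axis through `x`. -/
def horizontalRay (x : V3) (t : ℝ) : V3 := !₂[t * (x 0 / rho x), t * (x 1 / rho x), x 2]

lemma rho_horizontalRay {x : V3} (hx : 0 < rho x) {t : ℝ} (ht : 0 ≤ t) :
    rho (horizontalRay x t) = t := by
  have hunit : (x 0 / rho x) ^ 2 + (x 1 / rho x) ^ 2 = 1 := by
    field_simp
    exact (rho_sq x).symm
  refine (sq_eq_sq₀ (rho_nonneg _) ht).1 ?_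
  calc rho (horizontalRay x t) ^ 2 = t ^ 2 * ((x 0 / rho x) ^ 2 + (x 1 / rho x) ^ 2) := by
        rw [rho_sq]
        simp only [horizontalRay, Matrix.cons_val]
        ring
    _ = t ^ 2 := by rw [hunit, mul_one]

lemma horizontalRay_rho {x : V3} (hx : 0 < rho x) : horizontalRay x (rho x) = x := by
  ext i
  fin_cases i <;> simp [horizontalRay, mul_div_cancel₀ _ hx.ne']

lemma abs_apply_le_rho (x : V3) {i : Fin 3} (hi : i ≠ 2) : |x i| ≤ rho x := by
  refine abs_le_of_sq_le_sq ?_ (rho_nonneg x)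
  rw [rho_sq]
  fin_cases i
  · exact le_add_of_nonneg_right (sq_nonneg _)
  · exact le_add_of_nonneg_left (sq_nonneg _)
  · exact absurd rfl hi

lemma exists_hasDerivAt_comp_horizontalRay {p : V3 → ℝ} {x : V3} {t M : ℝ} (hx : 0 < rho x)
    (hp : DifferentiableAt ℝ p (horizontalRay x t)) (hM : ∀ k, |pd k p (horizontalRay x t)| ≤ M) :
    ∃ d, |d| ≤ 2 * M ∧ HasDerivAt (fun t => p (horizontalRay x t)) d t := by
  have hray : HasDerivAt (horizontalRay x) !₂[x 0 / rho x, x 1 / rho x, 0] t := by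
    have haffine : horizontalRay x =
        fun t => t • !₂[x 0 / rho x, x 1 / rho x, 0] + !₂[0, 0, x 2] := by
      ext t i
      fin_cases i <;> simp [horizontalRay]
    rw [haffine]
    simpa using ((hasDerivAt_id t).smul_const (!₂[x 0 / rho x, x 1 / rho x, 0] : V3)).add_const
      (!₂[0, 0, x 2] : V3)
  have hunit : ∀ i : Fin 3, i ≠ 2 → |x i / rho x| ≤ 1 := fun i hi => by
    rw [abs_div, abs_of_pos hx]
    exact (div_le_one hx).2 (abs_apply_le_rho x hi)
  refine ⟨_, ?_, hp.hasFDerivAt.comp_hasDerivAt t hray⟩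
  rw [fderiv_apply_eq_sum_pd, Fin.sum_univ_three]
  have h₀ := mul_le_mul (hunit 0 (by decide)) (hM 0) (abs_nonneg _) zero_le_one
  have h₁ := mul_le_mul (hunit 1 (by decide)) (hM 1) (abs_nonneg _) zero_le_one
  rw [← abs_mul] at h₀ h₁
  simp only [Matrix.cons_val, zero_mul, add_zero]
  exact (abs_add_le _ _).trans (by linarith)

lemma isCompact_cylinderWall (a b R : ℝ) : IsCompact {x : V3 | a ≤ x 2 ∧ x 2 ≤ b ∧ rho x = R} := by
  have hcoord : Continuous fun x : V3 => x 2 := by fun_prop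
  refine Metric.isCompact_of_isClosed_isBounded ?_ ?_
  · exact (isClosed_le continuous_const hcoord).inter
      ((isClosed_le hcoord continuous_const).inter (isClosed_eq continuous_rho continuous_const))
  · refine isBounded_iff_forall_norm_le.2 ⟨|R| + (|a| + |b|), fun x ⟨ha, hb, hR⟩ => ?_⟩
    have hx₂ : |x 2| ≤ |a| + |b| := by
      rw [abs_le]
      constructor <;> linarith [neg_abs_le a, le_abs_self b, abs_nonneg a, abs_nonneg b]
    refine abs_le_of_sq_le_sq' ?_ (by positivity) |>.2
    rw [norm_sq_eq_rho_sq_add, hR, ← sq_abs R, ← sq_abs (x 2)]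
    nlinarith [abs_nonneg R, abs_nonneg (x 2)]

lemma exists_abs_le_mul_rpow_of_isBigO {ι κ : Type*} [Finite κ] {s : Set ι} {r : ι → ℝ} {c : ℝ}
    {f : κ → ι → ℝ} (hr : ∀ x ∈ s, 0 ≤ r x) (hf : ∀ k, f k =O[𝓟 s] fun x => r x ^ c) :
    ∃ K ≥ 0, ∀ x ∈ s, ∀ k, |f k x| ≤ K * r x ^ c := by
  cases nonempty_fintype κ
  choose K hK hbound using fun k => (hf k).exists_nonneg
  refine ⟨∑ k, K k, Finset.sum_nonneg fun k _ => hK k, fun x hx k => ?_⟩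
  have hrpow := rpow_nonneg (hr x hx) c
  calc |f k x| ≤ K k * r x ^ c := by
        simpa only [norm_eq_abs, abs_of_nonneg hrpow] using
          Asymptotics.isBigOWith_principal.1 (hbound k) x hx
    _ ≤ (∑ k, K k) * r x ^ c := by
        gcongr
        exact Finset.single_le_sum (fun k _ => hK k) (Finset.mem_univ k)

lemma isBigO_of_isBigO_pd {p : V3 → ℝ} {U : Set V3} {a b R c : ℝ} (hU : IsOpen U)
    (hsub : puncturedCylinder a b R ⊆ U) (hp : DifferentiableOn ℝ p U) (hc : c < -1)
    (hpd : ∀ k, (fun x => pd k p x) =O[𝓟 (puncturedCylinder a b R)] fun x => rho x ^ c) :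
    p =O[𝓟 (puncturedCylinder a b R)] fun x => rho x ^ (c + 1) := by
  have hr := eventually_rho_mem_Ioc a b R
  obtain ⟨K, hK, hbound⟩ := exists_abs_le_mul_rpow_of_isBigO (fun x _ => rho_nonneg x) hpd
  by_cases hR : 0 < R
  swap
  · refine .of_bound 0 (hr.mono fun x hx => absurd (hx.1.trans_le hx.2) hR)
  have hwall : {x : V3 | a ≤ x 2 ∧ x 2 ≤ b ∧ rho x = R} ⊆ U := fun x ⟨h₁, h₂, h₃⟩ =>
    hsub ⟨h₁, h₂, hR.trans_eq h₃.symm, h₃.le⟩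
  obtain ⟨B, hB⟩ :=
    (isCompact_cylinderWall a b R).exists_bound_of_continuousOn (hp.continuousOn.mono hwall)
  have hdiff : p =O[𝓟 (puncturedCylinder a b R)]
      fun x => B + 2 * K / -(c + 1) * rho x ^ (c + 1) := by
    refine .of_bound 1 <| eventually_principal.2 fun x hx => ?_
    obtain ⟨h₁, h₂, hρ, hρR⟩ := hx
    have hmem : ∀ t ∈ Set.Icc (rho x) R, horizontalRay x t ∈ puncturedCylinder a b R := by
      intro t ht
      have := rho_horizontalRay hρ (hρ.le.trans ht.1)
      exact ⟨h₁, h₂, by rw [this]; exact hρ.trans_le ht.1, by rw [this]; exact ht.2⟩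
    choose! q' hq' hderiv using fun t ht =>
      exists_hasDerivAt_comp_horizontalRay hρ
        (hp.differentiableAt (hU.mem_nhds (hsub (hmem t ht)))) (hbound _ (hmem t ht))
    have hray := abs_sub_le_of_abs_deriv_le_rpow hρ hρR (K := 2 * K) (by positivity) hc hderiv
      fun t ht => (hq' t ht).trans_eq (by rw [rho_horizontalRay hρ (hρ.le.trans ht.1), mul_assoc])
    rw [horizontalRay_rho hρ, abs_sub_comm] at hray
    have hwall_bound := hB (horizontalRay x R) ⟨h₁, h₂, rho_horizontalRay hρ hR.le⟩
    rw [norm_eq_abs] at hwall_bound ⊢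
    rw [one_mul]
    refine le_trans ?_ (le_abs_self _)
    linarith [abs_sub_abs_le_abs_sub (p x) (p (horizontalRay x R))]
  exact hdiff.trans ((isBigO_const_rpow hr (by linarith) B).add
    ((Asymptotics.isBigO_refl _ _).const_mul_left _))

/-- A Navier–Stokes solution on a punctured cylinder whose velocity is `o(log |x'|)` at the axis,
together with the bounds on the velocity gradient and the pressure that this implies on every
smaller cylinder. -/
structure IsLogSolution (U : Set V3) (u : V3 → V3) (p : V3 → ℝ) (a b R : ℝ) : Prop
    extends IsNSSolution U u p where
  subset : puncturedCylinder a b R ⊆ U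
  velocity : ∀ i, IsLogSmallOn (puncturedCylinder a b R) fun x => u x i
  gradient : ∀ i j, IsLogSmallOn (puncturedCylinder a b R) fun x => rho x * pd j (fun z => u z i) x
  pressure : ∀ κ : ℝ, 0 < κ → p =O[𝓟 (puncturedCylinder a b R)] fun x => rho x ^ (-1 - κ)

lemma puncturedCylinder_mono {a b R a' b' R' : ℝ} (ha : a' ≤ a) (hb : b ≤ b') (hR : R ≤ R') :
    puncturedCylinder a b R ⊆ puncturedCylinder a' b' R' :=
  fun _ ⟨h₁, h₂, h₃, h₄⟩ => ⟨ha.trans h₁, h₂.trans hb, h₃, h₄.trans hR⟩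

lemma isBigO_of_isBigO_mul_pow {ι : Type*} {l : Filter ι} {r f : ι → ℝ} {c : ℝ} (n : ℕ)
    (hr : ∀ᶠ x in l, 0 < r x) (hf : (fun x => r x ^ n * f x) =O[l] fun x => r x ^ c) :
    f =O[l] fun x => r x ^ (-n + c) := by
  refine ((Asymptotics.isBigO_refl (fun x => (r x ^ n)⁻¹) l).mul hf).congr' ?_ ?_
  · filter_upwards [hr] with x hx
    exact inv_mul_cancel_left₀ (pow_pos hx n).ne' _
  · filter_upwards [hr] with x hx
    rw [rpow_add hx, rpow_neg hx.le, rpow_natCast]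

theorem IsNSSolution.isLogSolution {U : Set V3} {u : V3 → V3} {p : V3 → ℝ}
    {a b R a' b' R' : ℝ} (h : IsNSSolution U u p) (hsub : puncturedCylinder a' b' R' ⊆ U)
    (hu : IsLogSmallOn (puncturedCylinder a' b' R') fun x => ‖u x‖) (ha : a' < a) (hb : b < b')
    (hR : R < R') : IsLogSolution U u p a b R := by
  have hmono := puncturedCylinder_mono ha.le hb.le hR.le
  obtain ⟨hgrad, hpress⟩ := h.isLogSmallOn_derivatives hsub hu ha hb hR
  refine { h with subset := hmono.trans hsub, velocity := ?_, gradient := hgrad, pressure := ?_ }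
  · intro i ε hε
    obtain ⟨C, hC⟩ := hu ε hε
    refine ⟨C, fun x hx => (PiLp.norm_apply_le (u x) i).trans ?_⟩
    simpa only [abs_norm] using hC x (hmono hx)
  · intro κ hκ
    have hr := (eventually_rho_mem_Ioc a b R).mono fun _ hx => hx.1
    have hpd := fun k => isBigO_of_isBigO_mul_pow 2 hr ((hpress k).isBigO hκ)
    convert isBigO_of_isBigO_pd h.isOpen (hmono.trans hsub)
      (h.contDiffOn_pressure.differentiableOn two_ne_zero) (by push_cast; linarith) hpd using 3
    push_cast
    ring

namespace IsLogSolution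

variable {U : Set V3} {u : V3 → V3} {p : V3 → ℝ} {a b R κ : ℝ} (h : IsLogSolution U u p a b R)
include h

lemma isBigO_velocity (hκ : 0 < κ) (i : Fin 3) :
    (fun x => u x i) =O[𝓟 (puncturedCylinder a b R)] fun x => rho x ^ (-κ) :=
  (h.velocity i).isBigO hκ

lemma isBigO_gradient (hκ : 0 < κ) (i j : Fin 3) :
    (fun x => pd j (fun z => u z i) x) =O[𝓟 (puncturedCylinder a b R)]
      fun x => rho x ^ (-1 - κ) := by
  have hr := (eventually_rho_mem_Ioc a b R).mono fun _ hx => hx.1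
  simpa only [Nat.cast_one, sub_eq_add_neg] using isBigO_of_isBigO_mul_pow 1 hr
    (by simpa only [pow_one] using (h.gradient i j).isBigO hκ)

lemma isBigO_velocity_mul (hκ : 0 < κ) (i j : Fin 3) :
    (fun x => u x i * u x j) =O[𝓟 (puncturedCylinder a b R)] fun x => rho x ^ (-κ) := by
  simpa only [← neg_add, add_halves] using isBigO_mul_rpow (eventually_rho_mem_Ioc a b R)
    (h.isBigO_velocity (half_pos hκ) i) (h.isBigO_velocity (half_pos hκ) j)

end IsLogSolution

/-! ### Integrals of functions of the distance to the axis -/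

lemma isOpen_OmegaR (a b R : ℝ) : IsOpen (OmegaR a b R) := by
  have hcoord : Continuous fun x : V3 => x 2 := by fun_prop
  exact (isOpen_lt continuous_const hcoord).inter
    ((isOpen_lt hcoord continuous_const).inter (isOpen_lt continuous_rho continuous_const))

lemma OmegaR_inter_subset_puncturedCylinder (a b R : ℝ) :
    OmegaR a b R ∩ {x | 0 < rho x} ⊆ puncturedCylinder a b R :=
  fun _ ⟨⟨h₁, h₂, h₃⟩, h₀⟩ => ⟨h₁.le, h₂.le, h₀, h₃.le⟩

/-- The splitting `x ↦ (x₃, x')` into the axial and the horizontal part. -/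
def axialSplitting : V3 ≃ᵐ ℝ × V2 :=
  (MeasurableEquiv.toLp 2 (Fin 3 → ℝ)).symm.trans <|
    (MeasurableEquiv.piFinSuccAbove (fun _ => ℝ) 2).trans <|
      MeasurableEquiv.prodCongr (.refl ℝ) (MeasurableEquiv.toLp 2 (Fin 2 → ℝ))

lemma axialSplitting_apply (x : V3) : axialSplitting x = (x 2, !₂[x 0, x 1]) := by
  refine Prod.ext rfl ?_
  ext i
  fin_cases i <;> rfl

lemma measurePreserving_axialSplitting : MeasurePreserving axialSplitting :=
  (PiLp.volume_preserving_ofLp (Fin 3)).trans <|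
    (volume_preserving_piFinSuccAbove (fun _ : Fin 3 => ℝ) 2).trans <|
      (MeasurePreserving.id volume).prod (PiLp.volume_preserving_toLp (Fin 2))

lemma preimage_axialSplitting (a b R : ℝ) :
    axialSplitting ⁻¹' (Set.Ioo a b ×ˢ ball 0 R) = OmegaR a b R := by
  ext x
  simp [axialSplitting_apply, OmegaR, rho_eq_norm, and_assoc]

lemma comp_rho_eq (k : ℝ → ℝ) :
    (fun x => k (rho x)) = (fun q : ℝ × V2 => 1 * k ‖q.2‖) ∘ axialSplitting := by
  ext x
  simp [axialSplitting_apply, rho_eq_norm]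

lemma integrableOn_comp_rho {k : ℝ → ℝ} {a b R : ℝ}
    (hk : IntegrableOn (fun r => r * k r) (Set.Ioo 0 R)) :
    IntegrableOn (fun x => k (rho x)) (OmegaR a b R) := by
  have hdisc : IntegrableOn (fun y : V2 => k ‖y‖) (ball 0 R) :=
    (integrableOn_fun_norm_addHaar volume).2 (by simpa using hk)
  rw [comp_rho_eq, ← preimage_axialSplitting,
    measurePreserving_axialSplitting.integrableOn_comp_preimage axialSplitting.measurableEmbedding,
    IntegrableOn, Measure.volume_eq_prod, ← Measure.prod_restrict]
  exact Integrable.mul_prod (f := fun _ => 1) (integrable_const 1) hdisc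

lemma setIntegral_comp_rho (k : ℝ → ℝ) (a b R : ℝ) :
    ∫ x in OmegaR a b R, k (rho x) = max (b - a) 0 * (2 * π * ∫ r in Set.Ioo 0 R, r * k r) := by
  have hdisc : ∫ y in ball (0 : V2) R, k ‖y‖ = 2 * π * ∫ r in Set.Ioo 0 R, r * k r := by
    rw [← integral_indicator measurableSet_ball]
    have : (ball (0 : V2) R).indicator (fun y => k ‖y‖) = fun y => (Set.Iio R).indicator k ‖y‖ := by
      ext y
      simp [Set.indicator]
    have hpolar : ∀ r, r ^ (Module.finrank ℝ V2 - 1) • (Set.Iio R).indicator k r =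
        (Set.Iio R).indicator (fun r => r * k r) r := by
      intro r
      simp [Set.indicator]
    rw [this, integral_fun_norm_addHaar]
    simp_rw [hpolar]
    rw [setIntegral_indicator measurableSet_Iio, Set.Ioi_inter_Iio, measureReal_def,
      EuclideanSpace.volume_ball_fin_two]
    simp [mul_assoc, pi_pos.le]
  have hsplit := measurePreserving_axialSplitting.setIntegral_preimage_emb
    axialSplitting.measurableEmbedding (fun q : ℝ × V2 => 1 * k ‖q.2‖) (Set.Ioo a b ×ˢ ball 0 R)
  rw [preimage_axialSplitting, Measure.volume_eq_prod,
    setIntegral_prod_mul (fun _ => 1) fun y => k ‖y‖, hdisc] at hsplit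
  rw [comp_rho_eq]
  refine hsplit.trans ?_
  simp

lemma integrableOn_rpow_rho (a b R : ℝ) {c : ℝ} (hc : -2 < c) :
    IntegrableOn (fun x => rho x ^ c) (OmegaR a b R) := by
  rcases le_or_gt R 0 with hR | hR
  · have : OmegaR a b R = ∅ :=
      Set.eq_empty_of_forall_notMem fun x hx => (rho_nonneg x).not_gt (hx.2.2.trans_le hR)
    simp [this]
  refine integrableOn_comp_rho (k := fun r => r ^ c) ?_
  refine ((intervalIntegral.integrableOn_Ioo_rpow_iff (s := 1 + c) hR).2 (by linarith)).congr_fun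
    (fun r hr => ?_) measurableSet_Ioo
  change r ^ (1 + c) = r * r ^ c
  rw [rpow_add hr.1, rpow_one]

lemma ae_rho_pos : ∀ᵐ x : V3, 0 < rho x := by
  let plane := LinearMap.ker (EuclideanSpace.proj 0 : V3 →L[ℝ] ℝ).toLinearMap
  have hproper : plane ≠ ⊤ := fun h => by
    have : e3 0 ∈ plane := h ▸ Submodule.mem_top
    simp [plane, e3] at this
  filter_upwards [compl_mem_ae_iff.2 (Measure.addHaar_submodule volume plane hproper)] with x hx
  have hx₀ : x 0 ≠ 0 := hx
  exact (abs_pos.2 hx₀).trans_le (abs_apply_le_rho x (by decide))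

lemma exists_eventually_norm_le_of_isBigO_rpow {ι E : Type*} [NormedAddCommGroup E]
    {l : Filter ι} {f : ι → E} {r : ι → ℝ} {c : ℝ} (hr : ∀ᶠ x in l, 0 ≤ r x)
    (hf : f =O[l] fun x => r x ^ c) : ∃ C, ∀ᶠ x in l, ‖f x‖ ≤ C * r x ^ c := by
  obtain ⟨C, hC⟩ := hf.bound
  refine ⟨C, ?_⟩
  filter_upwards [hC, hr] with x hx hpos
  rwa [norm_of_nonneg (rpow_nonneg hpos c)] at hx

lemma ae_mem_puncturedCylinder (a b R : ℝ) :
    ∀ᵐ x ∂volume.restrict (OmegaR a b R), x ∈ puncturedCylinder a b R := by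
  filter_upwards [ae_restrict_mem (isOpen_OmegaR a b R).measurableSet,
    ae_restrict_of_ae ae_rho_pos] with x hx hρ
  exact OmegaR_inter_subset_puncturedCylinder a b R ⟨hx, hρ⟩

section Integrability

variable {U : Set V3} {f : V3 → ℝ} {a b R c : ℝ} (hsub : puncturedCylinder a b R ⊆ U)
  (hf : ContinuousOn f U) (hc : -2 < c)
  (hbound : f =O[𝓟 (puncturedCylinder a b R)] fun x => rho x ^ c)
include hsub hf hc hbound

lemma integrableOn_of_isBigO_rpow : IntegrableOn f (OmegaR a b R) := by
  obtain ⟨C, hC⟩ := exists_eventually_norm_le_of_isBigO_rpow (.of_forall rho_nonneg) hbound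
  have hpuncture : (OmegaR a b R ∩ {x | 0 < rho x} : Set V3) =ᵐ[volume] OmegaR a b R := by
    filter_upwards [ae_rho_pos] with x hx
    exact propext ⟨And.left, fun h => ⟨h, hx⟩⟩
  have hmeas : AEStronglyMeasurable f (volume.restrict (OmegaR a b R)) := by
    rw [← Measure.restrict_congr_set hpuncture]
    exact (hf.mono ((OmegaR_inter_subset_puncturedCylinder a b R).trans hsub)).aestronglyMeasurable
      ((isOpen_OmegaR a b R).inter (isOpen_lt continuous_const continuous_rho)).measurableSet
  refine ((integrableOn_rpow_rho a b R hc).const_mul C).mono' hmeas ?_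
  exact (ae_mem_puncturedCylinder a b R).mono (eventually_principal.1 hC)

lemma integrable_of_isBigO_rpow (hsupp : ∀ x ∉ OmegaR a b R, f x = 0) : Integrable f :=
  (integrableOn_iff_integrable_of_support_subset (Function.support_subset_iff'.2 hsupp)).1
    (integrableOn_of_isBigO_rpow hsub hf hc hbound)

end Integrability

lemma eventually_rho_snd_mem_Ioc {ι : Type*} (a b R : ℝ) (l : Filter ι) :
    ∀ᶠ q : ι × V3 in l ×ˢ 𝓟 (puncturedCylinder a b R), rho q.2 ∈ Set.Ioc 0 R :=
  tendsto_snd.eventually (eventually_rho_mem_Ioc a b R)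

section Families

variable {ι : Type*} {l : Filter ι} {f : ι → V3 → ℝ} {a b R c : ℝ}

lemma exists_eventually_ae_norm_le_of_isBigO_rpow
    (hbound : (fun q : ι × V3 => f q.1 q.2) =O[l ×ˢ 𝓟 (puncturedCylinder a b R)]
      fun q => rho q.2 ^ c) :
    ∃ C, ∀ᶠ s in l, ∀ᵐ x ∂volume.restrict (OmegaR a b R), ‖f s x‖ ≤ C * rho x ^ c := by
  obtain ⟨C, hC⟩ := exists_eventually_norm_le_of_isBigO_rpow
    (.of_forall fun q : ι × V3 => rho_nonneg q.2) hbound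
  refine ⟨C, (eventually_prod_principal_iff.1 hC).mono fun s hs => ?_⟩
  exact (ae_mem_puncturedCylinder a b R).mono hs

lemma isBigO_one_integral_of_isBigO_rpow (hsupp : ∀ᶠ s in l, ∀ x ∉ OmegaR a b R, f s x = 0)
    (hc : -2 < c) (hbound : (fun q : ι × V3 => f q.1 q.2)
      =O[l ×ˢ 𝓟 (puncturedCylinder a b R)] fun q => rho q.2 ^ c) :
    (fun s => ∫ x, f s x) =O[l] fun _ => (1 : ℝ) := by
  obtain ⟨C, hC⟩ := exists_eventually_ae_norm_le_of_isBigO_rpow hbound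
  refine .of_bound (∫ x in OmegaR a b R, C * rho x ^ c) ?_
  filter_upwards [hC, hsupp] with s hs hs₀
  rw [norm_one, mul_one, ← setIntegral_eq_integral_of_forall_compl_eq_zero hs₀]
  exact norm_integral_le_of_norm_le ((integrableOn_rpow_rho a b R hc).const_mul C) hs

lemma tendsto_integral_of_isBigO_rpow [l.IsCountablyGenerated] {g : V3 → ℝ}
    (hmeas : ∀ᶠ s in l, AEStronglyMeasurable (f s)) (hsupp : ∀ s, ∀ x ∉ OmegaR a b R, f s x = 0)
    (hg : ∀ x ∉ OmegaR a b R, g x = 0) (hc : -2 < c)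
    (hbound : (fun q : ι × V3 => f q.1 q.2) =O[l ×ˢ 𝓟 (puncturedCylinder a b R)]
      fun q => rho q.2 ^ c)
    (hlim : ∀ x ∈ puncturedCylinder a b R, Tendsto (fun s => f s x) l (𝓝 (g x))) :
    Tendsto (fun s => ∫ x, f s x) l (𝓝 (∫ x, g x)) := by
  obtain ⟨C, hC⟩ := exists_eventually_ae_norm_le_of_isBigO_rpow hbound
  simp_rw [← setIntegral_eq_integral_of_forall_compl_eq_zero (μ := volume) (hsupp _),
    ← setIntegral_eq_integral_of_forall_compl_eq_zero (μ := volume) hg]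
  exact tendsto_integral_filter_of_dominated_convergence _ (hmeas.mono fun s hs => hs.restrict) hC
    ((integrableOn_rpow_rho a b R hc).const_mul C)
    ((ae_mem_puncturedCylinder a b R).mono hlim)

end Families

lemma eLpNorm_ne_top_of_isBigO_rpow {E : Type*} [NormedAddCommGroup E] {f : V3 → E}
    {a b R c s : ℝ} (hs : 0 < s) (hc : -2 < c * s)
    (hbound : f =O[𝓟 (puncturedCylinder a b R)] fun x => rho x ^ c) :
    eLpNorm f (ENNReal.ofReal s) (volume.restrict (OmegaR a b R)) ≠ ⊤ := by
  obtain ⟨C, hC⟩ := exists_eventually_norm_le_of_isBigO_rpow (.of_forall rho_nonneg) hbound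
  have hpower : eLpNorm (fun x => rho x ^ c) (ENNReal.ofReal s)
      (volume.restrict (OmegaR a b R)) ≠ ⊤ := by
    have hmeas : AEStronglyMeasurable (fun x => rho x ^ c) (volume.restrict (OmegaR a b R)) :=
      (continuous_rho.measurable.pow_const c).aestronglyMeasurable
    refine ((integrable_norm_rpow_iff hmeas (by simpa using hs) ENNReal.ofReal_ne_top).1 ?_).2.ne
    refine (integrableOn_rpow_rho a b R hc).congr (Eventually.of_forall fun x => ?_)
    simp only [norm_of_nonneg (rpow_nonneg (rho_nonneg x) c), ENNReal.toReal_ofReal hs.le,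
      rpow_mul (rho_nonneg x)]
  refine ne_top_of_le_ne_top (ENNReal.mul_ne_top ENNReal.ofReal_ne_top hpower)
    (eLpNorm_le_mul_eLpNorm_of_ae_le_mul (c := C) ?_ _)
  filter_upwards [ae_mem_puncturedCylinder a b R] with x hx
  rw [norm_of_nonneg (rpow_nonneg (rho_nonneg x) c)]
  exact eventually_principal.1 hC x hx

lemma norm_clm_le_sum_norm_apply {F : Type*} [NormedAddCommGroup F] [NormedSpace ℝ F]
    (L : V3 →L[ℝ] F) : ‖L‖ ≤ ∑ j, ‖L (e3 j)‖ := by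
  refine L.opNorm_le_bound (by positivity) fun v => ?_
  calc ‖L v‖ = ‖∑ j, v j • L (e3 j)‖ := by
        conv_lhs => rw [← sum_apply_smul_e3 v]
        simp only [map_sum, map_smul]
    _ ≤ ∑ j, ‖v‖ * ‖L (e3 j)‖ := norm_sum_le_of_le _ fun j _ => by
        rw [norm_smul]
        gcongr
        exact PiLp.norm_apply_le v j
    _ = (∑ j, ‖L (e3 j)‖) * ‖v‖ := by rw [← Finset.mul_sum, mul_comm]

/-! ### Integration by parts across the axis -/

/-- The `j`-th coordinate of the horizontal part `x'` of `x`. -/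
def horizontalCoord (j : Fin 3) (x : V3) : ℝ := if j = 2 then 0 else x j

lemma contDiff_horizontalCoord {n : WithTop ℕ∞} (j : Fin 3) : ContDiff ℝ n (horizontalCoord j) := by
  unfold horizontalCoord
  split_ifs
  · exact contDiff_const
  · exact contDiff_coord j

lemma abs_horizontalCoord_le_rho (j : Fin 3) (x : V3) : |horizontalCoord j x| ≤ rho x := by
  rcases eq_or_ne j 2 with hj | hj
  · simpa only [horizontalCoord, if_pos hj, abs_zero] using rho_nonneg x
  · simpa only [horizontalCoord, if_neg hj] using abs_apply_le_rho x hj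

lemma contDiff_rho_sq {n : WithTop ℕ∞} : ContDiff ℝ n fun x => rho x ^ 2 := by
  simp_rw [rho_sq]
  exact ((contDiff_coord 0).pow 2).add ((contDiff_coord 1).pow 2)

lemma pd_rho_sq (j : Fin 3) (x : V3) : pd j (fun y => rho y ^ 2) x = 2 * horizontalCoord j x := by
  have hsq : ∀ i, pd j (fun y : V3 => y i ^ 2) x = 2 * x i * if i = j then 1 else 0 := fun i => by
    rw [pd_comp (F := fun t => t ^ 2) j (by simpa using hasDerivAt_pow 2 (x i))
      (differentiable_coord i x), pd_coord]
  simp_rw [rho_sq]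
  have hdiff := fun i => ((contDiff_coord (n := 1) i).pow 2).differentiable one_ne_zero x
  rw [pd_add j (hdiff 0) (hdiff 1), hsq, hsq]
  fin_cases j <;> simp [horizontalCoord]

lemma hasCompactSupport_deriv_smoothTransition : HasCompactSupport (deriv smoothTransition) := by
  refine HasCompactSupport.intro (isCompact_Icc (a := 0) (b := 1)) fun t ht => ?_
  rcases not_and_or.1 ht with ht | ht
  · have : smoothTransition =ᶠ[𝓝 t] fun _ => 0 := by
      filter_upwards [Iio_mem_nhds (not_le.1 ht)] with r hr
      exact smoothTransition.zero_of_nonpos hr.le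
    rw [this.deriv_eq, deriv_const]
  · have : smoothTransition =ᶠ[𝓝 t] fun _ => 1 := by
      filter_upwards [Ioi_mem_nhds (not_le.1 ht)] with r hr
      exact smoothTransition.one_of_one_le hr.le
    rw [this.deriv_eq, deriv_const]

/-- A smooth cutoff that vanishes for `|x'| ≤ s` and equals `1` for `|x'| ≥ 2s`. -/
def axisCutoff (s : ℝ) (x : V3) : ℝ := smoothTransition (rho x ^ 2 / s ^ 2 - 1)

lemma contDiff_axisCutoff (s : ℝ) : ContDiff ℝ (⊤ : ℕ∞) (axisCutoff s) :=
  smoothTransition.contDiff.comp ((contDiff_rho_sq.div_const _).sub contDiff_const)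

lemma pd_axisCutoff (s : ℝ) (j : Fin 3) (x : V3) : pd j (axisCutoff s) x =
    deriv smoothTransition (rho x ^ 2 / s ^ 2 - 1) * (2 * horizontalCoord j x / s ^ 2) := by
  have hσ := (smoothTransition.contDiff (n := 1)).differentiable one_ne_zero
    (rho x ^ 2 / s ^ 2 - 1)
  have haffine : HasDerivAt (fun t => t / s ^ 2 - 1) (1 / s ^ 2) (rho x ^ 2) :=
    ((hasDerivAt_id _).div_const _).sub_const _
  have hcomp : HasDerivAt (fun t => smoothTransition (t / s ^ 2 - 1))
      (deriv smoothTransition (rho x ^ 2 / s ^ 2 - 1) * (1 / s ^ 2)) (rho x ^ 2) :=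
    HasDerivAt.comp (h := fun t => t / s ^ 2 - 1) (rho x ^ 2) hσ.hasDerivAt haffine
  refine (pd_comp j hcomp ((contDiff_rho_sq (n := 1)).differentiable one_ne_zero x)).trans ?_
  rw [pd_rho_sq]
  ring

lemma exists_abs_pd_axisCutoff_le :
    ∃ C, ∀ s > 0, ∀ x, 0 < rho x → ∀ j, |pd j (axisCutoff s) x| ≤ C * rho x ^ (-1 : ℝ) := by
  have hσ : Continuous fun t => deriv smoothTransition t * (t + 1) :=
    ((smoothTransition.contDiff (n := 1)).continuous_deriv le_rfl).mul (by fun_prop)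
  obtain ⟨C, hC⟩ := hσ.bounded_above_of_compact_support
    hasCompactSupport_deriv_smoothTransition.mul_right
  refine ⟨C * 2, fun s hs x hx j => ?_⟩
  have hbound := hC (rho x ^ 2 / s ^ 2 - 1)
  rw [sub_add_cancel, norm_mul, norm_eq_abs, norm_of_nonneg (by positivity)] at hbound
  have : 0 ≤ C := (by positivity : (0 : ℝ) ≤ _).trans hbound
  rw [pd_axisCutoff, abs_mul, abs_div, abs_mul, abs_two, abs_of_pos (by positivity : 0 < s ^ 2),
    rpow_neg_one, ← div_eq_mul_inv, le_div_iff₀ hx]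
  calc _ ≤ |deriv smoothTransition (rho x ^ 2 / s ^ 2 - 1)| * (2 * rho x / s ^ 2) * rho x := by
        gcongr
        exact abs_horizontalCoord_le_rho j x
    _ = |deriv smoothTransition (rho x ^ 2 / s ^ 2 - 1)| * (rho x ^ 2 / s ^ 2) * 2 := by ring
    _ ≤ C * 2 := by gcongr

lemma eventually_axisCutoff_eq_one {x : V3} (hx : 0 < rho x) :
    ∀ᶠ s in 𝓝[>] (0 : ℝ), axisCutoff s =ᶠ[𝓝 x] fun _ => 1 := by
  have hlim : Tendsto (fun s : ℝ => 2 * s ^ 2) (𝓝[>] 0) (𝓝 0) := by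
    have : Continuous fun s : ℝ => 2 * s ^ 2 := by fun_prop
    exact tendsto_nhdsWithin_of_tendsto_nhds (by simpa using this.tendsto 0)
  filter_upwards [self_mem_nhdsWithin, hlim.eventually_lt_const (pow_pos hx 2)] with s hs hsx
  filter_upwards [(continuous_rho.pow 2).continuousAt.eventually_const_lt hsx] with y hy
  have hs' : 0 < s ^ 2 := pow_pos hs 2
  refine smoothTransition.one_of_one_le ?_
  rw [le_sub_iff_add_le, le_div_iff₀ hs', one_add_one_eq_two]
  exact hy.le

lemma rho_pos_of_mem_tsupport_axisCutoff {s : ℝ} (hs : 0 < s) {x : V3}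
    (hx : x ∈ tsupport (axisCutoff s)) : 0 < rho x := by
  have hsub : tsupport (axisCutoff s) ⊆ {y | s ≤ rho y} := by
    refine closure_minimal (fun y hy => ?_) (isClosed_le continuous_const continuous_rho)
    by_contra hlt
    refine hy (smoothTransition.zero_of_nonpos ?_)
    rw [sub_nonpos, div_le_one (by positivity)]
    exact pow_le_pow_left₀ (rho_nonneg y) (not_le.1 hlt).le 2
  exact hs.trans_le (hsub hx)

lemma IsTestFunction.axisCutoff_mul {a b R s : ℝ} {f : V3 → ℝ}
    (hf : IsTestFunction (OmegaR a b R) f) (hs : 0 < s) :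
    IsTestFunction (OmegaR a b R ∩ {x | 0 < rho x}) fun x => axisCutoff s x * f x where
  __ := hf.contDiff_mul (contDiff_axisCutoff s)
  tsupport_subset := fun _ hx => ⟨hf.tsupport_subset (tsupport_mul_subset_right hx),
    rho_pos_of_mem_tsupport_axisCutoff hs (tsupport_mul_subset_left hx)⟩

lemma isBigO_pd_axisCutoff (a b R : ℝ) (j : Fin 3) :
    (fun q : ℝ × V3 => pd j (axisCutoff q.1) q.2)
      =O[𝓝[>] 0 ×ˢ 𝓟 (puncturedCylinder a b R)] fun q => rho q.2 ^ (-1 : ℝ) := by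
  obtain ⟨C, hC⟩ := exists_abs_pd_axisCutoff_le
  refine .of_bound C (eventually_prod_principal_iff.2 ?_)
  filter_upwards [self_mem_nhdsWithin] with s hs x hx
  rw [norm_eq_abs, norm_of_nonneg (rpow_nonneg hx.2.2.1.le _)]
  exact hC s hs x hx.2.2.1 j

lemma abs_axisCutoff_le_one (s : ℝ) (x : V3) : |axisCutoff s x| ≤ 1 := by
  rw [axisCutoff, abs_of_nonneg (smoothTransition.nonneg _)]
  exact smoothTransition.le_one _

lemma tendsto_integral_cutoff {a b R c d : ℝ} {h : Fin 3 → V3 → ℝ} {A : V3 → ℝ} (hc : -1 < c)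
    (hd : -2 < d) (hh₀ : ∀ j, ∀ x ∉ OmegaR a b R, h j x = 0) (hA₀ : ∀ x ∉ OmegaR a b R, A x = 0)
    (hh : ∀ j, h j =O[𝓟 (puncturedCylinder a b R)] fun x => rho x ^ c)
    (hA : A =O[𝓟 (puncturedCylinder a b R)] fun x => rho x ^ d)
    (hmeas : ∀ᶠ s in 𝓝[>] 0, AEStronglyMeasurable fun x =>
      (∑ j, pd j (axisCutoff s) x * h j x) + axisCutoff s x * A x) :
    Tendsto (fun s => ∫ x, ((∑ j, pd j (axisCutoff s) x * h j x) + axisCutoff s x * A x))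
      (𝓝[>] 0) (𝓝 (∫ x, A x)) := by
  have hr := eventually_rho_snd_mem_Ioc a b R (𝓝[>] (0 : ℝ))
  refine tendsto_integral_of_isBigO_rpow (c := min (-1 + c) d) hmeas (fun s x hx => ?_) hA₀
    (lt_min (by linarith) hd) (.add (.fun_sum fun j _ => ?_) ?_) fun x hx => ?_
  · simp only [hh₀ _ x hx, hA₀ x hx, mul_zero, Finset.sum_const_zero, add_zero]
  · exact (isBigO_mul_rpow hr (isBigO_pd_axisCutoff a b R j)
      ((hh j).comp_tendsto tendsto_snd)).trans (isBigO_rpow_of_le hr (min_le_left _ _))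
  · refine .trans (.of_norm_le fun q => ?_)
      ((hA.comp_tendsto tendsto_snd).norm_left.trans (isBigO_rpow_of_le hr (min_le_right _ _)))
    rw [norm_mul]
    exact mul_le_of_le_one_left (norm_nonneg _) (abs_axisCutoff_le_one q.1 q.2)
  · refine tendsto_const_nhds.congr' ((eventually_axisCutoff_eq_one hx.2.2.1).mono fun s hs => ?_)
    have hpd : ∀ j, pd j (axisCutoff s) x = 0 := fun j => by
      rw [pd_congr j hs]
      simp [pd]
    simp only [hpd, hs.self_of_nhds, zero_mul, Finset.sum_const_zero, zero_add, one_mul]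

section AcrossAxis

variable {U : Set V3} {a b R c d : ℝ} {w : Fin 3 → V3 → ℝ} {f : V3 → ℝ}

lemma integral_sum_mul_pd_add_eq_zero (hU : IsOpen U) (hw : ∀ j, ContDiffOn ℝ 1 (w j) U)
    (hf : IsTestFunction U f) : ∫ x, ((∑ j, w j x * pd j f x) + (∑ j, pd j (w j) x) * f x) = 0 := by
  have hI := fun j => (hf.partialDeriv j).integrable_mul hU (hw j).continuousOn
  have hJ := fun j => hf.integrable_mul hU
    (contDiffOn_pd (m := 0) hU (hw j) (by simp) j).continuousOn
  simp_rw [Finset.sum_mul]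
  rw [integral_add (integrable_finsetSum _ fun j _ => hI j)
      (integrable_finsetSum _ fun j _ => hJ j),
    integral_finsetSum _ fun j _ => hI j, integral_finsetSum _ fun j _ => hJ j,
    ← Finset.sum_add_distrib]
  exact Finset.sum_eq_zero fun j _ => by rw [hf.integral_mul_pd hU (hw j), neg_add_cancel]

lemma integral_cutoff_add_eq_zero (hU : IsOpen U) (hsub : puncturedCylinder a b R ⊆ U)
    (hw : ∀ j, ContDiffOn ℝ 1 (w j) U) (hf : IsTestFunction (OmegaR a b R) f) {s : ℝ}
    (hs : 0 < s) :
    Continuous (fun x => (∑ j, pd j (axisCutoff s) x * (w j x * f x)) +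
        axisCutoff s x * ((∑ j, w j x * pd j f x) + (∑ j, pd j (w j) x) * f x)) ∧
      ∫ x, ((∑ j, pd j (axisCutoff s) x * (w j x * f x)) +
        axisCutoff s x * ((∑ j, w j x * pd j f x) + (∑ j, pd j (w j) x) * f x)) = 0 := by
  have hg := (hf.axisCutoff_mul hs).mono ((OmegaR_inter_subset_puncturedCylinder a b R).trans hsub)
  have hχ := (contDiff_axisCutoff s).differentiable (by simp)
  have hexpand : (fun x => (∑ j, pd j (axisCutoff s) x * (w j x * f x)) +
      axisCutoff s x * ((∑ j, w j x * pd j f x) + (∑ j, pd j (w j) x) * f x)) =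
      fun x => (∑ j, w j x * pd j (fun y => axisCutoff s y * f y) x) +
        (∑ j, pd j (w j) x) * (axisCutoff s x * f x) := by
    funext x
    simp only [pd_mul _ (hχ x) (hf.differentiable x), Fin.sum_univ_three]
    ring
  rw [hexpand]
  refine ⟨?_, integral_sum_mul_pd_add_eq_zero hU hw hg⟩
  refine (continuous_finsetSum _ fun j _ => ?_).add (hg.continuous_mul hU ?_)
  · exact (hg.partialDeriv j).continuous_mul hU (hw j).continuousOn
  · exact continuousOn_finsetSum _ fun j _ =>
      (contDiffOn_pd (m := 0) hU (hw j) (by simp) j).continuousOn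

theorem sum_integral_mul_pd_eq_neg_of_isBigO (hU : IsOpen U) (hsub : puncturedCylinder a b R ⊆ U)
    (hw : ∀ j, ContDiffOn ℝ 1 (w j) U) (hf : IsTestFunction (OmegaR a b R) f) (hc : -1 < c)
    (hd : -2 < d)
    (hwf : ∀ j, (fun x => w j x * f x) =O[𝓟 (puncturedCylinder a b R)] fun x => rho x ^ c)
    (hwpd : ∀ j, (fun x => w j x * pd j f x) =O[𝓟 (puncturedCylinder a b R)] fun x => rho x ^ d)
    (hdiv : (fun x => (∑ j, pd j (w j) x) * f x) =O[𝓟 (puncturedCylinder a b R)]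
      fun x => rho x ^ d) :
    ∑ j, ∫ x, w j x * pd j f x = -∫ x, (∑ j, pd j (w j) x) * f x := by
  set D := puncturedCylinder a b R
  set A : V3 → ℝ := fun x => (∑ j, w j x * pd j f x) + (∑ j, pd j (w j) x) * f x
  have hA : A =O[𝓟 D] fun x => rho x ^ d := (Asymptotics.IsBigO.fun_sum fun j _ => hwpd j).add hdiv
  have hf₀ : ∀ x ∉ OmegaR a b R, f x = 0 := fun x hx => hf.eq_zero_of_notMem hx
  have hpd₀ : ∀ j, ∀ x ∉ OmegaR a b R, pd j f x = 0 := fun j x hx =>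
    (hf.partialDeriv j).eq_zero_of_notMem hx
  have hA₀ : ∀ x ∉ OmegaR a b R, A x = 0 := fun x hx => by simp [A, hf₀ x hx, hpd₀ _ x hx]
  have hlim : Tendsto (fun s => ∫ x, ((∑ j, pd j (axisCutoff s) x * (w j x * f x)) +
      axisCutoff s x * A x)) (𝓝[>] 0) (𝓝 (∫ x, A x)) := by
    refine tendsto_integral_cutoff hc hd (fun j x hx => by rw [hf₀ x hx, mul_zero]) hA₀ hwf hA ?_
    filter_upwards [self_mem_nhdsWithin] with s hs
    exact (integral_cutoff_add_eq_zero hU hsub hw hf hs).1.aestronglyMeasurable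
  have hzero : ∫ x, A x = 0 := by
    refine tendsto_nhds_unique (hlim.congr' ?_) tendsto_const_nhds
    filter_upwards [self_mem_nhdsWithin] with s hs
    exact (integral_cutoff_add_eq_zero hU hsub hw hf hs).2
  have hI : ∀ j, Integrable fun x => w j x * pd j f x := fun j =>
    integrable_of_isBigO_rpow hsub ((hw j).continuousOn.mul
      (hf.partialDeriv j).contDiff.continuous.continuousOn) hd (hwpd j)
      fun x hx => by simp [hpd₀ j x hx]
  have hJ : Integrable fun x => (∑ j, pd j (w j) x) * f x :=
    integrable_of_isBigO_rpow hsub ((continuousOn_finsetSum _ fun j _ =>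
      (contDiffOn_pd (m := 0) hU (hw j) (by simp) j).continuousOn).mul
      hf.contDiff.continuous.continuousOn) hd hdiv fun x hx => by simp [hf₀ x hx]
  rw [integral_add (integrable_finsetSum _ fun j _ => hI j) hJ,
    integral_finsetSum _ fun j _ => hI j] at hzero
  exact eq_neg_of_add_eq_zero_left hzero

end AcrossAxis

/-! ### The regularised logarithm -/

/-- A smooth approximation of `2 log |x'|`, equal to `2 log s` on the axis. -/
def axisLog (s : ℝ) (x : V3) : ℝ := log (rho x ^ 2 + s ^ 2)

section AxisLog

variable {s : ℝ}

lemma contDiff_axisLog (hs : 0 < s) : ContDiff ℝ (⊤ : ℕ∞) (axisLog s) :=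
  (contDiff_rho_sq.add contDiff_const).log fun x => by positivity

lemma pd_axisLog (hs : 0 < s) (j : Fin 3) (x : V3) :
    pd j (axisLog s) x = horizontalCoord j x * (2 * (rho x ^ 2 + s ^ 2)⁻¹) := by
  have hn : rho x ^ 2 + s ^ 2 ≠ 0 := by positivity
  have hlog : HasDerivAt (fun t => log (t + s ^ 2)) (1 / (rho x ^ 2 + s ^ 2)) (rho x ^ 2) :=
    ((hasDerivAt_id _).add_const (s ^ 2)).log hn
  refine (pd_comp j hlog ((contDiff_rho_sq (n := 1)).differentiable one_ne_zero x)).trans ?_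
  rw [pd_rho_sq]
  ring

lemma pd_horizontalCoord (i j : Fin 3) (x : V3) :
    pd j (horizontalCoord i) x = if i = j ∧ i ≠ 2 then 1 else 0 := by
  by_cases hi : i = 2
  · have : horizontalCoord i = fun _ => 0 := funext fun x => if_pos hi
    rw [this, if_neg (by simp [hi])]
    simp [pd]
  · have : horizontalCoord i = fun x => x i := funext fun x => if_neg hi
    simp [this, pd_coord, hi]

lemma pd_pd_axisLog (hs : 0 < s) (i j : Fin 3) (x : V3) :
    pd i (fun y => pd j (axisLog s) y) x =
      (if j = i ∧ j ≠ 2 then 1 else 0) * (2 / (rho x ^ 2 + s ^ 2)) -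
        4 * (horizontalCoord i x * horizontalCoord j x) / (rho x ^ 2 + s ^ 2) ^ 2 := by
  have hn : rho x ^ 2 + s ^ 2 ≠ 0 := by positivity
  have hinv : HasDerivAt (fun t => 2 * (t + s ^ 2)⁻¹)
      (2 * (-1 / (rho x ^ 2 + s ^ 2) ^ 2)) (rho x ^ 2) :=
    (((hasDerivAt_id _).add_const (s ^ 2)).inv hn).const_mul 2
  have hρ := (contDiff_rho_sq (n := 1)).differentiable one_ne_zero x
  have hcomp := pd_comp i hinv hρ
  have hdiff : DifferentiableAt ℝ (fun y => 2 * (rho y ^ 2 + s ^ 2)⁻¹) x :=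
    ((hρ.add_const _).inv hn).const_mul 2
  simp_rw [pd_axisLog hs]
  rw [pd_mul i ((contDiff_horizontalCoord (n := 1) j).differentiable one_ne_zero x) hdiff,
    pd_horizontalCoord, hcomp, pd_rho_sq]
  ring

lemma sum_horizontalCoord_mul_self (x : V3) :
    ∑ j, horizontalCoord j x * horizontalCoord j x = rho x ^ 2 := by
  simp [Fin.sum_univ_three, horizontalCoord, rho_sq, ← sq]

lemma lap3_axisLog (hs : 0 < s) (x : V3) :
    lap3 (axisLog s) x = 4 * (s ^ 2 / (rho x ^ 2 + s ^ 2) ^ 2) := by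
  have hn : rho x ^ 2 + s ^ 2 ≠ 0 := by positivity
  have hcoord := sum_horizontalCoord_mul_self x
  unfold lap3
  simp_rw [pd_pd_axisLog hs, Finset.sum_sub_distrib, ← Finset.sum_div, ← Finset.mul_sum, hcoord]
  simp only [Fin.sum_univ_three]
  simp
  field_simp
  ring

lemma abs_pd_axisLog_le (hs : 0 < s) {x : V3} (hx : 0 < rho x) (j : Fin 3) :
    |pd j (axisLog s) x| ≤ 2 * rho x ^ (-1 : ℝ) := by
  rw [pd_axisLog hs, abs_mul, abs_of_nonneg (by positivity : 0 ≤ 2 * (rho x ^ 2 + s ^ 2)⁻¹),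
    rpow_neg_one]
  calc _ ≤ rho x * (2 * (rho x ^ 2)⁻¹) := by
        gcongr
        · exact abs_horizontalCoord_le_rho j x
        · exact le_add_of_nonneg_right (sq_nonneg s)
    _ = 2 * (rho x)⁻¹ := by field_simp

lemma abs_pd_pd_axisLog_le (hs : 0 < s) {x : V3} (hx : 0 < rho x) (i j : Fin 3) :
    |pd i (fun y => pd j (axisLog s) y) x| ≤ 6 * rho x ^ (-2 : ℝ) := by
  have hn : rho x ^ 2 ≤ rho x ^ 2 + s ^ 2 := le_add_of_nonneg_right (sq_nonneg s)
  have hδ : |if j = i ∧ j ≠ 2 then (1 : ℝ) else 0| ≤ 1 := by split_ifs <;> simp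
  have hfirst : |(if j = i ∧ j ≠ 2 then (1 : ℝ) else 0) * (2 / (rho x ^ 2 + s ^ 2))| ≤
      2 / rho x ^ 2 := by
    rw [abs_mul, abs_of_pos (by positivity : 0 < 2 / (rho x ^ 2 + s ^ 2))]
    exact (mul_le_of_le_one_left (by positivity) hδ).trans (by gcongr)
  have hsecond : |4 * (horizontalCoord i x * horizontalCoord j x) / (rho x ^ 2 + s ^ 2) ^ 2| ≤
      4 * (rho x * rho x) / (rho x ^ 2) ^ 2 := by
    rw [abs_div, abs_mul, abs_mul, abs_of_pos (by positivity : 0 < (rho x ^ 2 + s ^ 2) ^ 2),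
      abs_of_pos (four_pos : (0 : ℝ) < 4)]
    gcongr
    · exact abs_horizontalCoord_le_rho i x
    · exact abs_horizontalCoord_le_rho j x
  rw [pd_pd_axisLog hs, rpow_neg hx.le, rpow_two]
  refine (abs_sub _ _).trans ((add_le_add hfirst hsecond).trans_eq ?_)
  field_simp
  norm_num

lemma abs_axisLog_le {R : ℝ} (hs : s ∈ Set.Ioo 0 1) {x : V3} (hx : rho x ∈ Set.Ioc 0 R) :
    |axisLog s x| ≤ 2 * |log (rho x)| + log (R ^ 2 + 1) := by
  have hx₀ := hx.1
  have hρ : log (rho x ^ 2) = 2 * log (rho x) := by simp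
  have hlower : log (rho x ^ 2) ≤ axisLog s x :=
    log_le_log (pow_pos hx.1 2) (le_add_of_nonneg_right (sq_nonneg s))
  have hupper : axisLog s x ≤ log (R ^ 2 + 1) := by
    refine log_le_log (by positivity) (add_le_add (pow_le_pow_left₀ hx.1.le hx.2 2) ?_)
    exact pow_le_one₀ hs.1.le hs.2.le
  have hpos : 0 ≤ log (R ^ 2 + 1) := log_nonneg (le_add_of_nonneg_left (sq_nonneg R))
  have hneg := neg_abs_le (log (rho x))
  have habs := abs_nonneg (log (rho x))
  exact abs_le.2 ⟨by linarith, by linarith⟩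

end AxisLog

section Families

variable (a b R : ℝ)

lemma isBigO_axisLog {κ : ℝ} (hκ : 0 < κ) : (fun q : ℝ × V3 => axisLog q.1 q.2)
    =O[𝓝[>] 0 ×ˢ 𝓟 (puncturedCylinder a b R)] fun q => rho q.2 ^ (-κ) := by
  have hr := eventually_rho_snd_mem_Ioc a b R (𝓝[>] (0 : ℝ))
  refine .trans (.of_norm_eventuallyLE (g := fun q => 2 * |log (rho q.2)| + log (R ^ 2 + 1)) ?_)
    (((isBigO_log_rpow hr hκ).abs_left.const_mul_left 2).add
      (isBigO_const_rpow hr (by linarith) _))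
  refine eventually_prod_principal_iff.2 ?_
  filter_upwards [Ioo_mem_nhdsGT one_pos] with s hs x hx
  exact abs_axisLog_le hs hx.2.2

lemma isBigO_pd_axisLog (j : Fin 3) : (fun q : ℝ × V3 => pd j (axisLog q.1) q.2)
    =O[𝓝[>] 0 ×ˢ 𝓟 (puncturedCylinder a b R)] fun q => rho q.2 ^ (-1 : ℝ) := by
  refine .of_bound 2 (eventually_prod_principal_iff.2 ?_)
  filter_upwards [self_mem_nhdsWithin] with s hs x hx
  rw [norm_of_nonneg (rpow_nonneg hx.2.2.1.le _)]
  exact abs_pd_axisLog_le hs hx.2.2.1 j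

lemma isBigO_pd_pd_axisLog (i j : Fin 3) :
    (fun q : ℝ × V3 => pd i (fun y => pd j (axisLog q.1) y) q.2)
      =O[𝓝[>] 0 ×ˢ 𝓟 (puncturedCylinder a b R)] fun q => rho q.2 ^ (-2 : ℝ) := by
  refine .of_bound 6 (eventually_prod_principal_iff.2 ?_)
  filter_upwards [self_mem_nhdsWithin] with s hs x hx
  rw [norm_of_nonneg (rpow_nonneg hx.2.2.1.le _)]
  exact abs_pd_pd_axisLog_le hs hx.2.2.1 i j

end Families

lemma IsTestFunction.isBigO_mul {ι : Type*} {l : Filter ι} {Ω : Set V3} {f : V3 → ℝ}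
    {g r : ι → ℝ} (hf : IsTestFunction Ω f) (y : ι → V3) (hg : g =O[l] r) :
    (fun q => g q * f (y q)) =O[l] r := by
  obtain ⟨C, hC⟩ := hf.contDiff.continuous.bounded_above_of_compact_support hf.hasCompactSupport
  have hbounded : (fun q => f (y q)) =O[l] fun _ => (1 : ℝ) :=
    .of_bound C (.of_forall fun q => by simpa using hC (y q))
  simpa only [mul_one] using hg.mul hbounded

/-- The product of `f` with the regularised logarithm, the test function that detects the values
of `f` on the axis. -/
def axisLogMul (f : V3 → ℝ) (s : ℝ) (x : V3) : ℝ := axisLog s x * f x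

section AxisLogMul

variable {Ω : Set V3} {f : V3 → ℝ} {s : ℝ} (hf : IsTestFunction Ω f)
include hf

lemma isTestFunction_axisLogMul (hs : 0 < s) : IsTestFunction Ω (axisLogMul f s) :=
  hf.contDiff_mul (contDiff_axisLog hs)

lemma pd_axisLogMul (hs : 0 < s) (j : Fin 3) (x : V3) :
    pd j (axisLogMul f s) x = pd j (axisLog s) x * f x + axisLog s x * pd j f x :=
  pd_mul j ((contDiff_axisLog hs).differentiable (by simp) x) (hf.differentiable x)

lemma pd_pd_axisLogMul (hs : 0 < s) (i j : Fin 3) (x : V3) :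
    pd i (fun y => pd j (axisLogMul f s) y) x =
      pd i (fun y => pd j (axisLog s) y) x * f x + (pd j (axisLog s) x * pd i f x +
        pd i (axisLog s) x * pd j f x) + axisLog s x * pd i (fun y => pd j f y) x :=
  pd_pd_mul (contDiff_infty.1 (contDiff_axisLog hs) 2) (contDiff_infty.1 hf.contDiff 2) i j x

lemma lap3_axisLogMul (hs : 0 < s) (x : V3) :
    lap3 (axisLogMul f s) x = lap3 (axisLog s) x * f x +
      2 * (∑ j, pd j (axisLog s) x * pd j f x) + axisLog s x * lap3 f x :=
  lap3_mul (contDiff_infty.1 (contDiff_axisLog hs) 2) (contDiff_infty.1 hf.contDiff 2) x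

end AxisLogMul

lemma eventually_fst_pos {ι : Type*} (l : Filter ι) :
    ∀ᶠ q : ℝ × ι in 𝓝[>] 0 ×ˢ l, 0 < q.1 :=
  tendsto_fst.eventually self_mem_nhdsWithin

section Families

variable {Ω : Set V3} {f : V3 → ℝ} {κ : ℝ} (hf : IsTestFunction Ω f) (a b R : ℝ)
include hf

lemma isBigO_pd_axisLogMul (j : Fin 3) : (fun q : ℝ × V3 => pd j (axisLogMul f q.1) q.2)
    =O[𝓝[>] 0 ×ˢ 𝓟 (puncturedCylinder a b R)] fun q => rho q.2 ^ (-1 : ℝ) := by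
  refine ((hf.isBigO_mul Prod.snd (isBigO_pd_axisLog a b R j)).add
    ((hf.partialDeriv j).isBigO_mul Prod.snd (isBigO_axisLog a b R one_pos))).congr' ?_ .rfl
  filter_upwards [eventually_fst_pos _] with q hq using (pd_axisLogMul hf hq j q.2).symm

lemma isBigO_pd_two_axisLogMul (hκ : 0 < κ) :
    (fun q : ℝ × V3 => pd 2 (axisLogMul f q.1) q.2)
      =O[𝓝[>] 0 ×ˢ 𝓟 (puncturedCylinder a b R)] fun q => rho q.2 ^ (-κ) := by
  refine ((hf.partialDeriv 2).isBigO_mul Prod.snd (isBigO_axisLog a b R hκ)).congr' ?_ .rfl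
  filter_upwards [eventually_fst_pos _] with q hq
  simp [pd_axisLogMul hf hq, pd_axisLog hq, horizontalCoord]

lemma isBigO_pd_pd_axisLogMul (i j : Fin 3) :
    (fun q : ℝ × V3 => pd i (fun y => pd j (axisLogMul f q.1) y) q.2)
      =O[𝓝[>] 0 ×ˢ 𝓟 (puncturedCylinder a b R)] fun q => rho q.2 ^ (-2 : ℝ) := by
  have hr := eventually_rho_snd_mem_Ioc a b R (𝓝[>] (0 : ℝ))
  have hcross := fun i j => (hf.partialDeriv i).isBigO_mul Prod.snd (isBigO_pd_axisLog a b R j)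
  refine (((hf.isBigO_mul Prod.snd (isBigO_pd_pd_axisLog a b R i j)).add
    (((hcross i j).add (hcross j i)).trans (isBigO_rpow_of_le hr (by norm_num)))).add
    (((hf.partialDeriv j).partialDeriv i).isBigO_mul Prod.snd
      (isBigO_axisLog a b R two_pos))).congr' ?_ .rfl
  filter_upwards [eventually_fst_pos _] with q hq using (pd_pd_axisLogMul hf hq i j q.2).symm

lemma isBigO_lap3_axisLogMul_sub :
    (fun q : ℝ × V3 => lap3 (axisLogMul f q.1) q.2 - lap3 (axisLog q.1) q.2 * f q.2)
      =O[𝓝[>] 0 ×ˢ 𝓟 (puncturedCylinder a b R)] fun q => rho q.2 ^ (-1 : ℝ) := by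
  refine (((Asymptotics.IsBigO.fun_sum (s := Finset.univ) fun j _ =>
    (hf.partialDeriv j).isBigO_mul Prod.snd (isBigO_pd_axisLog a b R j)).const_mul_left 2).add
      (hf.laplacian.isBigO_mul Prod.snd (isBigO_axisLog a b R one_pos))).congr' ?_ .rfl
  filter_upwards [eventually_fst_pos _] with q hq
  rw [lap3_axisLogMul hf hq]
  ring

end Families

/-! ### Asymptotics of integrals as the regularisation is removed -/

/-- A kernel concentrating on the axis, `|x'| · axisKernel s |x'|` being the Poisson kernel of the
half-plane up to a constant; its integrals over cylinders are bounded uniformly in `s`. -/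
def axisKernel (s r : ℝ) : ℝ := s / (r * (r ^ 2 + s ^ 2))

lemma mul_axisKernel {s r : ℝ} (hs : 0 < s) (hr : 0 < r) :
    r * axisKernel s r = s⁻¹ * (1 + (s⁻¹ * r) ^ 2)⁻¹ := by
  unfold axisKernel
  field_simp
  ring

lemma integrable_poisson {s : ℝ} (hs : 0 < s) :
    Integrable fun r : ℝ => s⁻¹ * (1 + (s⁻¹ * r) ^ 2)⁻¹ :=
  (integrable_inv_one_add_sq.comp_mul_left' (inv_pos.2 hs).ne').const_mul s⁻¹

lemma integral_poisson {s : ℝ} (hs : 0 < s) : ∫ r : ℝ, s⁻¹ * (1 + (s⁻¹ * r) ^ 2)⁻¹ = π := by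
  rw [integral_const_mul, Measure.integral_comp_mul_left (fun r : ℝ => (1 + r ^ 2)⁻¹) s⁻¹,
    integral_univ_inv_one_add_sq, inv_inv, abs_of_pos hs, smul_eq_mul, inv_mul_cancel_left₀ hs.ne']

lemma integrableOn_axisKernel {s : ℝ} (hs : 0 < s) (a b R : ℝ) :
    IntegrableOn (fun x => axisKernel s (rho x)) (OmegaR a b R) :=
  integrableOn_comp_rho ((integrable_poisson hs).integrableOn.congr_fun
    (fun _ hr => (mul_axisKernel hs hr.1).symm) measurableSet_Ioo)

lemma setIntegral_axisKernel_le {s : ℝ} (hs : 0 < s) (a b R : ℝ) :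
    ∫ x in OmegaR a b R, axisKernel s (rho x) ≤ max (b - a) 0 * (2 * π * π) := by
  rw [setIntegral_comp_rho, setIntegral_congr_fun measurableSet_Ioo
    fun r hr => mul_axisKernel hs hr.1]
  gcongr
  calc ∫ r in Set.Ioo 0 R, s⁻¹ * (1 + (s⁻¹ * r) ^ 2)⁻¹
      ≤ ∫ r : ℝ, s⁻¹ * (1 + (s⁻¹ * r) ^ 2)⁻¹ :=
        setIntegral_le_integral (integrable_poisson hs) (.of_forall fun r => by positivity)
    _ = π := integral_poisson hs

lemma abs_log_le_abs_log_add {s r : ℝ} (hs : 0 < s) (hr : 0 < r) :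
    |log r| ≤ |log s| + (r / s + s / r) := by
  have hsplit : log r = log s + log (r / s) := by rw [log_div hr.ne' hs.ne', add_sub_cancel]
  have hpos : 0 < r / s := div_pos hr hs
  have hpos' : 0 < s / r := div_pos hs hr
  have hupper := log_le_self hpos.le
  have hlower : -log (r / s) ≤ s / r := by
    rw [← log_inv, inv_div]
    exact log_le_self hpos'.le
  rw [hsplit]
  exact (abs_add_le _ _).trans (by gcongr; exact abs_le.2 ⟨by linarith, by linarith⟩)

lemma sq_div_sq_mul_le_axisKernel {s r A : ℝ} (hs : 0 < s) (hr : 0 < r) (hA : 0 ≤ A) {ε : ℝ} :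
    s ^ 2 / (r ^ 2 + s ^ 2) ^ 2 * (A + ε * (r / s + s / r)) ≤ (A + ε) * axisKernel s r := by
  have hsum : s ^ 2 / (r ^ 2 + s ^ 2) ^ 2 * (r / s + s / r) = axisKernel s r := by
    unfold axisKernel
    field_simp
  have hone : s ^ 2 / (r ^ 2 + s ^ 2) ^ 2 ≤ axisKernel s r := by
    rw [← hsum]
    refine le_mul_of_one_le_right (by positivity) ?_
    rw [div_add_div _ _ hs.ne' hr.ne', one_le_div (by positivity)]
    nlinarith [sq_nonneg (r - s)]
  calc _ = A * (s ^ 2 / (r ^ 2 + s ^ 2) ^ 2) +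
        ε * (s ^ 2 / (r ^ 2 + s ^ 2) ^ 2 * (r / s + s / r)) := by ring
    _ ≤ A * axisKernel s r + ε * axisKernel s r := by rw [hsum]; gcongr
    _ = (A + ε) * axisKernel s r := by ring

lemma IsLogSmallOn.exists_abs_mul_lap3_axisLog_le {a b R ε : ℝ} {g : V3 → ℝ}
    (hg : IsLogSmallOn (puncturedCylinder a b R) g) (hε : 0 < ε) :
    ∃ C, ∀ s > 0, ∀ x ∈ puncturedCylinder a b R,
      |g x * lap3 (axisLog s) x| ≤ (ε * |log s| + C) * axisKernel s (rho x) := by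
  obtain ⟨C, hC⟩ := hg (ε / 4) (by positivity)
  refine ⟨4 * |C| + ε, fun s hs x hx => ?_⟩
  have hx₀ := hx.2.2.1
  have hlog := abs_log_le_abs_log_add hs hx₀
  have hg_le : |g x| ≤ ε / 4 * |log s| + |C| + ε / 4 * (rho x / s + s / rho x) :=
    calc |g x| ≤ ε / 4 * |log (rho x)| + C := hC x hx
      _ ≤ ε / 4 * (|log s| + (rho x / s + s / rho x)) + |C| := by gcongr; exact le_abs_self C
      _ = _ := by ring
  rw [lap3_axisLog hs, abs_mul, abs_of_nonneg
    (by positivity : 0 ≤ 4 * (s ^ 2 / (rho x ^ 2 + s ^ 2) ^ 2))]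
  calc _ ≤ (ε / 4 * |log s| + |C| + ε / 4 * (rho x / s + s / rho x)) *
        (4 * (s ^ 2 / (rho x ^ 2 + s ^ 2) ^ 2)) := by gcongr
    _ = 4 * (s ^ 2 / (rho x ^ 2 + s ^ 2) ^ 2 *
        (ε / 4 * |log s| + |C| + ε / 4 * (rho x / s + s / rho x))) := by ring
    _ ≤ 4 * ((ε / 4 * |log s| + |C| + ε / 4) * axisKernel s (rho x)) :=
        mul_le_mul_of_nonneg_left (sq_div_sq_mul_le_axisKernel hs hx₀ (by positivity))
          four_pos.le
    _ = _ := by ring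

lemma isLittleO_log_of_abs_le {J : ℝ → ℝ}
    (hJ : ∀ ε > 0, ∃ C, ∀ᶠ s in 𝓝[>] 0, |J s| ≤ ε * |log s| + C) : J =o[𝓝[>] 0] log := by
  refine Asymptotics.isLittleO_iff.2 fun c hc => ?_
  obtain ⟨C, hC⟩ := hJ (c / 2) (half_pos hc)
  have hlog := tendsto_abs_atBot_atTop.comp tendsto_log_nhdsGT_zero
  filter_upwards [hC, hlog.eventually_ge_atTop (C / (c / 2))] with s hs hlarge
  have hCs := (div_le_iff₀ (half_pos hc)).1 hlarge
  simp only [Function.comp_apply] at hCs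
  rw [norm_eq_abs, norm_eq_abs]
  linarith

lemma isLittleO_log_of_isBigO_one {J : ℝ → ℝ} (hJ : J =O[𝓝[>] 0] fun _ => (1 : ℝ)) :
    J =o[𝓝[>] 0] log := by
  obtain ⟨C, hC⟩ := hJ.bound
  refine isLittleO_log_of_abs_le fun ε hε => ⟨C, hC.mono fun s hs => hs.trans ?_⟩
  simpa using mul_nonneg hε.le (abs_nonneg (log s))

lemma IsLogSmallOn.mul_of_abs_le {D : Set V3} {g φ : V3 → ℝ} {B : ℝ} (hg : IsLogSmallOn D g)
    (hφ : ∀ x ∈ D, |φ x| ≤ B) : IsLogSmallOn D fun x => g x * φ x := by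
  refine .of_le_mul (K := B) fun ε hε => ?_
  obtain ⟨C, hC⟩ := hg ε hε
  refine ⟨C, fun x hx => ?_⟩
  rw [abs_mul, mul_comm B]
  exact mul_le_mul (hC x hx) (hφ x hx) (abs_nonneg _) ((abs_nonneg _).trans (hC x hx))

lemma isLittleO_log_setIntegral {a b R c : ℝ} {F : ℝ → V3 → ℝ} (hc : -2 < c)
    (hF : ∀ ε > 0, ∃ C C', ∀ᶠ s in 𝓝[>] 0, ∀ᵐ x ∂volume.restrict (OmegaR a b R),
      |F s x| ≤ (ε * |log s| + C) * axisKernel s (rho x) + C' * rho x ^ c) :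
    (fun s => ∫ x in OmegaR a b R, F s x) =o[𝓝[>] 0] log := by
  set M := max (b - a) 0 * (2 * π * π) + 1
  have hM : 0 < M := by positivity
  refine isLittleO_log_of_abs_le fun ε hε => ?_
  obtain ⟨C, C', hbound⟩ := hF (ε / M) (div_pos hε hM)
  refine ⟨|C| * M + ∫ x in OmegaR a b R, C' * rho x ^ c, ?_⟩
  filter_upwards [hbound, self_mem_nhdsWithin] with s hs hs₀
  have hs_pos : 0 < s := hs₀
  have hkernel := (integrableOn_axisKernel hs_pos a b R).const_mul (ε / M * |log s| + |C|)
  have hpower := (integrableOn_rpow_rho a b R hc).const_mul C'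
  calc |∫ x in OmegaR a b R, F s x|
      ≤ ∫ x in OmegaR a b R,
          ((ε / M * |log s| + |C|) * axisKernel s (rho x) + C' * rho x ^ c) := by
        rw [← norm_eq_abs]
        refine norm_integral_le_of_norm_le (hkernel.add hpower) ?_
        filter_upwards [hs] with x hx
        have hpos : 0 ≤ axisKernel s (rho x) :=
          div_nonneg hs_pos.le (mul_nonneg (rho_nonneg x) (by positivity))
        refine hx.trans ?_
        gcongr
        exact le_abs_self C
    _ = (ε / M * |log s| + |C|) * (∫ x in OmegaR a b R, axisKernel s (rho x)) +
          ∫ x in OmegaR a b R, C' * rho x ^ c := by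
        rw [integral_add hkernel hpower, integral_const_mul]
    _ ≤ (ε / M * |log s| + |C|) * M + ∫ x in OmegaR a b R, C' * rho x ^ c := by
        gcongr
        exact (setIntegral_axisKernel_le hs_pos a b R).trans
          (le_add_of_nonneg_right zero_le_one)
    _ = _ := by
        field_simp
        ring

theorem IsLogSmallOn.isLittleO_integral_mul_lap3 {a b R : ℝ} {f g : V3 → ℝ}
    (hg : IsLogSmallOn (puncturedCylinder a b R) g) (hf : IsTestFunction (OmegaR a b R) f) :
    (fun s => ∫ x, g x * lap3 (axisLogMul f s) x) =o[𝓝[>] 0] log := by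
  obtain ⟨B, hB⟩ := hf.contDiff.continuous.bounded_above_of_compact_support hf.hasCompactSupport
  have hr := eventually_rho_snd_mem_Ioc a b R (𝓝[>] (0 : ℝ))
  obtain ⟨C', hC'⟩ := exists_eventually_ae_norm_le_of_isBigO_rpow
    (f := fun s x => g x * (lap3 (axisLogMul f s) x - lap3 (axisLog s) x * f x)) <|
    isBigO_mul_rpow hr ((hg.isBigO (half_pos one_pos)).comp_tendsto tendsto_snd)
      (isBigO_lap3_axisLogMul_sub hf a b R)
  refine (isLittleO_log_setIntegral (a := a) (b := b) (R := R)
    (F := fun s x => g x * lap3 (axisLogMul f s) x) (c := -(1 / 2) + -1) (by norm_num)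
    fun ε hε => ?_).congr' ?_ .rfl
  · obtain ⟨C, hC⟩ := (hg.mul_of_abs_le fun x _ => hB x).exists_abs_mul_lap3_axisLog_le hε
    refine ⟨C, C', ?_⟩
    filter_upwards [hC', self_mem_nhdsWithin] with s hs hs₀
    filter_upwards [hs, ae_mem_puncturedCylinder a b R] with x hx hxD
    have hsplit : g x * lap3 (axisLogMul f s) x = g x * f x * lap3 (axisLog s) x +
      g x * (lap3 (axisLogMul f s) x - lap3 (axisLog s) x * f x) := by ring
    rw [hsplit]
    exact norm_add_le_of_le (hC s hs₀ x hxD) hx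
  · filter_upwards [self_mem_nhdsWithin] with s hs₀
    refine setIntegral_eq_integral_of_forall_compl_eq_zero (μ := volume) fun x hx => ?_
    rw [(isTestFunction_axisLogMul hf hs₀).laplacian.eq_zero_of_notMem hx, mul_zero]

/-! ### The momentum functional -/

namespace IsTestFunction

variable {Ω : Set V3} {f g w : V3 → ℝ}

lemma integrable_mul_of_integrableOn (hf : IsTestFunction Ω f) (hw : IntegrableOn w Ω) :
    Integrable fun x => w x * f x := by
  obtain ⟨C, hC⟩ := hf.contDiff.continuous.bounded_above_of_compact_support hf.hasCompactSupport
  refine (integrableOn_iff_integrable_of_support_subset (s := Ω) ?_).1 <|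
    hw.mul_bdd hf.contDiff.continuous.aestronglyMeasurable (.of_forall hC)
  exact Function.support_subset_iff'.2 fun x hx => by rw [hf.eq_zero_of_notMem hx, mul_zero]

lemma sub (hf : IsTestFunction Ω f) (hg : IsTestFunction Ω g) :
    IsTestFunction Ω fun x => f x - g x where
  contDiff := hf.contDiff.sub hg.contDiff
  hasCompactSupport := hf.hasCompactSupport.sub hg.hasCompactSupport
  tsupport_subset := (tsupport_sub f g).trans
    (Set.union_subset hf.tsupport_subset hg.tsupport_subset)

lemma isBigO_rho (hf : IsTestFunction Ω f) (hzero : ∀ x, rho x = 0 → f x = 0) (l : Filter V3) :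
    f =O[l] fun x => rho x ^ (1 : ℝ) := by
  obtain ⟨K, hK⟩ := hf.contDiff.lipschitzWith_of_hasCompactSupport hf.hasCompactSupport (by simp)
  refine .of_bound K (.of_forall fun x => ?_)
  have haxis : rho !₂[0, 0, x 2] = 0 := by simp [rho]
  have hdist : dist x !₂[0, 0, x 2] = rho x := by
    simp [EuclideanSpace.dist_eq, Fin.sum_univ_three, rho, Real.dist_eq]
  calc ‖f x‖ = dist (f x) (f !₂[0, 0, x 2]) := by rw [hzero _ haxis, dist_zero_right]
    _ ≤ K * rho x := by rw [← hdist]; exact hK.dist_le_mul _ _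
    _ = K * ‖rho x ^ (1 : ℝ)‖ := by rw [rpow_one, norm_of_nonneg (rho_nonneg x)]

end IsTestFunction

lemma integral_eq_zero_of_forall_mem {U : Set V3} {a b R : ℝ} {f : V3 → ℝ}
    (hsub : puncturedCylinder a b R ⊆ U) (hf : ∀ x ∈ U, f x = 0)
    (hsupp : ∀ x ∉ OmegaR a b R, f x = 0) : ∫ x, f x = 0 := by
  refine integral_eq_zero_of_ae (ae_rho_pos.mono fun x hρ => ?_)
  by_cases hx : x ∈ OmegaR a b R
  · exact hf x (hsub (OmegaR_inter_subset_puncturedCylinder a b R ⟨hx, hρ⟩))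
  · exact hsupp x hx

theorem sum_integral_mul_pd_eq_zero_of_isBigO {U : Set V3} {a b R c d : ℝ} {w : Fin 3 → V3 → ℝ}
    {f : V3 → ℝ} (hU : IsOpen U) (hsub : puncturedCylinder a b R ⊆ U)
    (hw : ∀ j, ContDiffOn ℝ 1 (w j) U) (hdiv : ∀ x ∈ U, ∑ j, pd j (w j) x = 0)
    (hf : IsTestFunction (OmegaR a b R) f) (hc : -1 < c) (hd : -2 < d)
    (hwf : ∀ j, (fun x => w j x * f x) =O[𝓟 (puncturedCylinder a b R)] fun x => rho x ^ c)
    (hwpd : ∀ j, (fun x => w j x * pd j f x) =O[𝓟 (puncturedCylinder a b R)]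
      fun x => rho x ^ d) : ∑ j, ∫ x, w j x * pd j f x = 0 := by
  have hdiv_mul : ∀ x ∈ U, (∑ j, pd j (w j) x) * f x = 0 := fun x hx => by
    rw [hdiv x hx, zero_mul]
  rw [sum_integral_mul_pd_eq_neg_of_isBigO hU hsub hw hf hc hd hwf hwpd,
    integral_eq_zero_of_forall_mem hsub hdiv_mul fun x hx => by
      rw [hf.eq_zero_of_notMem hx, mul_zero], neg_zero]
  exact (Asymptotics.isBigO_zero _ _).congr'
    (eventually_principal.2 fun x hx => (hdiv_mul x (hsub hx)).symm) .rfl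

/-- The momentum flux `∂_j u_i - u_i u_j - p δ_{ij}`, whose divergence vanishes exactly where the
momentum equation holds. -/
def momentumFlux (u : V3 → V3) (p : V3 → ℝ) (i j : Fin 3) (x : V3) : ℝ :=
  pd j (fun z => u z i) x - u x i * u x j - if i = j then p x else 0

/-- The `i`-th component of the momentum equation tested against `f`: the weak form of
`Δu - (u·∇)u - ∇p`, up to sign. -/
def momentumFunctional (u : V3 → V3) (p : V3 → ℝ) (i : Fin 3) (f : V3 → ℝ) : ℝ :=
  ∑ j, ∫ x, momentumFlux u p i j x * pd j f x

namespace IsNSSolution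

variable {U : Set V3} {u : V3 → V3} {p : V3 → ℝ} (h : IsNSSolution U u p)
include h

lemma contDiffOn_momentumFlux (i j : Fin 3) : ContDiffOn ℝ 1 (momentumFlux u p i j) U := by
  have hpressure : ContDiffOn ℝ 1 (fun x => if i = j then p x else 0) U := by
    split_ifs
    exacts [h.contDiffOn_pressure.of_le one_le_two, contDiffOn_const]
  exact ((h.contDiffOn_pd_coord i j).sub (((h.contDiffOn_coord i).mul
    (h.contDiffOn_coord j)).of_le one_le_two)).sub hpressure

lemma sum_pd_momentumFlux_eq_zero (i : Fin 3) {x : V3} (hx : x ∈ U) :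
    ∑ j, pd j (momentumFlux u p i j) x = 0 := by
  have hU := h.isOpen.mem_nhds hx
  have hu : ∀ j, DifferentiableAt ℝ (fun z => u z j) x := fun j =>
    ((h.contDiffOn_coord j).contDiffAt hU).differentiableAt two_ne_zero
  have hp : DifferentiableAt ℝ p x :=
    (h.contDiffOn_pressure.contDiffAt hU).differentiableAt two_ne_zero
  have hgrad : ∀ j, DifferentiableAt ℝ (fun y => pd j (fun z => u z i) y) x := fun j =>
    ((h.contDiffOn_pd_coord i j).contDiffAt hU).differentiableAt one_ne_zero
  have hpressure : ∀ j, DifferentiableAt ℝ (fun y => if i = j then p y else 0) x ∧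
      pd j (fun y => if i = j then p y else 0) x = if i = j then pd j p x else 0 := fun j => by
    split_ifs
    exacts [⟨hp, rfl⟩, ⟨differentiableAt_const _, by simp [pd]⟩]
  have hflux : ∀ j, pd j (momentumFlux u p i j) x = pd j (fun y => pd j (fun z => u z i) y) x -
      (pd j (fun z => u z i) x * u x j + u x i * pd j (fun z => u z j) x) -
      if i = j then pd j p x else 0 := fun j => by
    unfold momentumFlux
    rw [pd_sub j ((hgrad j).fun_sub ((hu i).fun_mul (hu j))) (hpressure j).1,
      pd_sub j (hgrad j) ((hu i).fun_mul (hu j)), pd_mul j (hu i) (hu j), (hpressure j).2]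
  have hconv : ∑ j, pd j (fun z => u z i) x * u x j = ∑ j, u x j * pd j (fun z => u z i) x :=
    Finset.sum_congr rfl fun j _ => mul_comm _ _
  simp_rw [hflux, Finset.sum_sub_distrib, Finset.sum_add_distrib, ← Finset.mul_sum,
    h.sum_pd_coord_eq_zero hx, Finset.sum_ite_eq, if_pos (Finset.mem_univ i)]
  rw [h.pd_pressure_eq hx, hconv, lap3]
  ring

end IsNSSolution

namespace IsLogSolution

variable {U : Set V3} {u : V3 → V3} {p : V3 → ℝ} {a b R κ : ℝ} (h : IsLogSolution U u p a b R)
include h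

lemma integrableOn_velocity (i : Fin 3) : IntegrableOn (fun x => u x i) (OmegaR a b R) :=
  integrableOn_of_isBigO_rpow h.subset (h.contDiffOn_coord i).continuousOn (by norm_num)
    (h.isBigO_velocity one_pos i)

lemma integrableOn_gradient (i j : Fin 3) :
    IntegrableOn (fun x => pd j (fun z => u z i) x) (OmegaR a b R) :=
  integrableOn_of_isBigO_rpow h.subset (h.contDiffOn_pd_coord i j).continuousOn (by norm_num)
    (h.isBigO_gradient one_half_pos i j)

lemma integrableOn_velocity_mul (i j : Fin 3) :
    IntegrableOn (fun x => u x i * u x j) (OmegaR a b R) :=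
  integrableOn_of_isBigO_rpow h.subset
    ((h.contDiffOn_coord i).continuousOn.mul (h.contDiffOn_coord j).continuousOn) (by norm_num)
    (h.isBigO_velocity_mul one_pos i j)

lemma integrableOn_pressure : IntegrableOn p (OmegaR a b R) :=
  integrableOn_of_isBigO_rpow h.subset h.contDiffOn_pressure.continuousOn (by norm_num)
    (h.pressure _ one_half_pos)

lemma isBigO_momentumFlux (hκ : 0 < κ) (i j : Fin 3) :
    momentumFlux u p i j =O[𝓟 (puncturedCylinder a b R)] fun x => rho x ^ (-1 - κ) := by
  have hpressure : (fun x => if i = j then p x else 0) =O[𝓟 (puncturedCylinder a b R)]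
      fun x => rho x ^ (-1 - κ) := by
    split_ifs
    exacts [h.pressure κ hκ, Asymptotics.isBigO_zero _ _]
  exact ((h.isBigO_gradient hκ i j).sub ((h.isBigO_velocity_mul hκ i j).trans
    (isBigO_rpow_of_le (eventually_rho_mem_Ioc a b R) (by linarith)))).sub hpressure

variable {f g : V3 → ℝ} (hf : IsTestFunction (OmegaR a b R) f)
include hf

lemma integrable_momentumFlux_mul (i j : Fin 3) :
    Integrable fun x => momentumFlux u p i j x * f x :=
  hf.integrable_mul_of_integrableOn (integrableOn_of_isBigO_rpow h.subset
    (h.contDiffOn_momentumFlux i j).continuousOn (by norm_num)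
    (h.isBigO_momentumFlux one_half_pos i j))

lemma momentumFunctional_eq_zero_of_axis (hzero : ∀ x, rho x = 0 → f x = 0) (i : Fin 3) :
    momentumFunctional u p i f = 0 := by
  have hflux := h.isBigO_momentumFlux one_half_pos i
  refine sum_integral_mul_pd_eq_zero_of_isBigO h.isOpen h.subset (h.contDiffOn_momentumFlux i)
    (fun x hx => h.sum_pd_momentumFlux_eq_zero i hx) hf (by norm_num : (-1 : ℝ) < -1 - 1 / 2 + 1)
    (by norm_num : (-2 : ℝ) < -1 - 1 / 2) (fun j => ?_)
    fun j => (hf.partialDeriv j).isBigO_mul id (hflux j)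
  exact isBigO_mul_rpow (eventually_rho_mem_Ioc a b R) (hflux j) (hf.isBigO_rho hzero _)

lemma momentumFunctional_congr_axis (hg : IsTestFunction (OmegaR a b R) g)
    (heq : ∀ x, rho x = 0 → f x = g x) (i : Fin 3) :
    momentumFunctional u p i f = momentumFunctional u p i g := by
  have hsub : momentumFunctional u p i (fun x => f x - g x) =
      momentumFunctional u p i f - momentumFunctional u p i g := by
    unfold momentumFunctional
    rw [← Finset.sum_sub_distrib]
    refine Finset.sum_congr rfl fun j _ => ?_
    rw [← integral_sub (h.integrable_momentumFlux_mul (hf.partialDeriv j) i j)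
      (h.integrable_momentumFlux_mul (hg.partialDeriv j) i j)]
    simp_rw [fun x => pd_sub j (hf.differentiable x) (hg.differentiable x), mul_sub]
  rw [← sub_eq_zero, ← hsub]
  exact h.momentumFunctional_eq_zero_of_axis (hf.sub hg)
    (fun x hx => sub_eq_zero.2 (heq x hx)) i

lemma momentumFunctional_axisLogMul {s : ℝ} (hs : 0 < s) (i : Fin 3) :
    momentumFunctional u p i (axisLogMul f s) = log (s ^ 2) * momentumFunctional u p i f := by
  have hconst : momentumFunctional u p i (fun x => log (s ^ 2) * f x) =
      log (s ^ 2) * momentumFunctional u p i f := by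
    unfold momentumFunctional
    simp_rw [fun j x => pd_const_mul j (log (s ^ 2)) (hf.differentiable x), mul_left_comm _ (log _),
      integral_const_mul, Finset.mul_sum]
  rw [← hconst]
  exact h.momentumFunctional_congr_axis (isTestFunction_axisLogMul hf hs)
    (hf.contDiff_mul contDiff_const) (fun x hx => by simp [axisLogMul, axisLog, hx]) i

lemma momentumFunctional_eq (i : Fin 3) : momentumFunctional u p i f =
    (∑ j, ∫ x, pd j (fun z => u z i) x * pd j f x) - (∑ j, ∫ x, u x i * u x j * pd j f x) -
      ∫ x, p x * pd i f x := by
  have hpd := hf.partialDeriv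
  have hsplit : ∀ j, ∫ x, momentumFlux u p i j x * pd j f x =
      (∫ x, pd j (fun z => u z i) x * pd j f x) - (∫ x, u x i * u x j * pd j f x) -
      if i = j then ∫ x, p x * pd j f x else 0 := fun j => by
    have hgrad := (hpd j).integrable_mul_of_integrableOn (h.integrableOn_gradient i j)
    have hconv := (hpd j).integrable_mul_of_integrableOn (h.integrableOn_velocity_mul i j)
    simp_rw [momentumFlux, sub_mul]
    split_ifs
    · rw [integral_sub (hgrad.sub' hconv)
        ((hpd j).integrable_mul_of_integrableOn h.integrableOn_pressure),
        integral_sub hgrad hconv]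
    · simp_rw [zero_mul, sub_zero]
      exact integral_sub hgrad hconv
  unfold momentumFunctional
  simp_rw [hsplit, Finset.sum_sub_distrib, Finset.sum_ite_eq, if_pos (Finset.mem_univ i)]

end IsLogSolution

/-- The component `∂_j u_i - ∂_i u_j` of the vorticity tensor. -/
def vorticity (u : V3 → V3) (i j : Fin 3) (x : V3) : ℝ :=
  pd j (fun z => u z i) x - pd i (fun z => u z j) x

namespace IsLogSolution

variable {U : Set V3} {u : V3 → V3} {p : V3 → ℝ} {a b R : ℝ} (h : IsLogSolution U u p a b R)
include h

section Identities

variable {f : V3 → ℝ} (hf : IsTestFunction (OmegaR a b R) f)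
include hf

lemma integral_velocity_mul_pd (i j : Fin 3) :
    ∫ x, u x i * pd j f x = -∫ x, pd j (fun z => u z i) x * f x := by
  set w : Fin 3 → V3 → ℝ := fun k x => (if k = j then 1 else 0) * u x i
  have hw_bound : ∀ k, w k =O[𝓟 (puncturedCylinder a b R)] fun x => rho x ^ (-(1 / 2) : ℝ) :=
    fun k => (h.isBigO_velocity one_half_pos i).const_mul_left _
  have hdiv : ∀ x, ∑ k, pd k (w k) x = pd j (fun z => u z i) x := fun x => by
    have hpd : ∀ k, pd k (w k) x = if k = j then pd k (fun z => u z i) x else 0 := fun k => by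
      by_cases hk : k = j <;> simp [w, hk, pd]
    simp_rw [hpd, Finset.sum_ite_eq', if_pos (Finset.mem_univ j)]
  have hparts := sum_integral_mul_pd_eq_neg_of_isBigO (w := w) h.isOpen h.subset
    (fun k => contDiffOn_const.mul ((h.contDiffOn_coord i).of_le one_le_two)) hf
    (by norm_num : (-1 : ℝ) < -(1 / 2)) (by norm_num : (-2 : ℝ) < -1 - 1 / 2)
    (fun k => hf.isBigO_mul id (hw_bound k))
    (fun k => (hf.partialDeriv k).isBigO_mul id ((hw_bound k).trans
      (isBigO_rpow_of_le (eventually_rho_mem_Ioc a b R) (by norm_num))))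
    (by simpa only [hdiv, id] using hf.isBigO_mul id (h.isBigO_gradient one_half_pos i j))
  simp_rw [hdiv, w, mul_assoc, integral_const_mul, ite_mul, one_mul, zero_mul, Finset.sum_ite_eq',
    if_pos (Finset.mem_univ j)] at hparts
  exact hparts

lemma integral_gradient_mul_pd_comm (i j k : Fin 3) :
    ∫ x, pd j (fun z => u z i) x * pd k f x = ∫ x, pd k (fun z => u z i) x * pd j f x := by
  rw [← neg_inj, ← h.integral_velocity_mul_pd (hf.partialDeriv k),
    ← h.integral_velocity_mul_pd (hf.partialDeriv j)]
  simp_rw [fun x => pd_comm (contDiff_infty.1 hf.contDiff 2).contDiffAt j k (x := x)]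

lemma sum_integral_gradient_mul_pd (i : Fin 3) :
    ∑ j, ∫ x, pd j (fun z => u z i) x * pd j f x = -∫ x, u x i * lap3 f x := by
  simp_rw [lap3, Finset.mul_sum]
  rw [integral_finsetSum _ fun j _ => ((hf.partialDeriv j).partialDeriv
    j).integrable_mul_of_integrableOn (h.integrableOn_velocity i), ← Finset.sum_neg_distrib]
  exact Finset.sum_congr rfl fun j _ => by
    rw [h.integral_velocity_mul_pd (hf.partialDeriv j), neg_neg]

lemma sum_integral_gradient_mul_pd_pd (i k : Fin 3) :
    ∑ j, ∫ x, pd j (fun z => u z i) x * pd j (fun y => pd k f y) x =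
      ∫ x, pd k (fun z => u z i) x * lap3 f x := by
  simp_rw [lap3, Finset.mul_sum]
  rw [integral_finsetSum _ fun j _ => ((hf.partialDeriv j).partialDeriv
    j).integrable_mul_of_integrableOn (h.integrableOn_gradient i k)]
  refine Finset.sum_congr rfl fun j _ => ?_
  simp_rw [fun x => pd_comm (contDiff_infty.1 hf.contDiff 2).contDiffAt j k (x := x)]
  exact h.integral_gradient_mul_pd_comm (hf.partialDeriv j) i j k

lemma sum_integral_pd_coord_mul_eq_zero :
    ∑ j, ∫ x, pd j (fun z => u z j) x * f x = 0 := by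
  rw [← integral_finsetSum _ fun j _ =>
    hf.integrable_mul_of_integrableOn (h.integrableOn_gradient j j)]
  simp_rw [← Finset.sum_mul]
  exact integral_eq_zero_of_forall_mem h.subset
    (fun x hx => by rw [h.sum_pd_coord_eq_zero hx, zero_mul])
    fun x hx => by rw [hf.eq_zero_of_notMem hx, mul_zero]

lemma sum_integral_velocity_mul_pd_eq_zero : ∑ j, ∫ x, u x j * pd j f x = 0 := by
  simp_rw [h.integral_velocity_mul_pd hf, Finset.sum_neg_distrib,
    h.sum_integral_pd_coord_mul_eq_zero hf, neg_zero]

lemma integral_vorticity_mul (i j : Fin 3) : ∫ x, vorticity u i j x * f x =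
    (∫ x, pd j (fun z => u z i) x * f x) - ∫ x, pd i (fun z => u z j) x * f x := by
  simp_rw [vorticity, sub_mul]
  exact integral_sub (hf.integrable_mul_of_integrableOn (h.integrableOn_gradient i j))
    (hf.integrable_mul_of_integrableOn (h.integrableOn_gradient j i))

lemma sum_integral_vorticity_mul_pd (i : Fin 3) :
    ∑ j, ∫ x, vorticity u i j x * pd j f x = -∫ x, u x i * lap3 f x := by
  simp_rw [fun j => h.integral_vorticity_mul (hf.partialDeriv j) i j,
    fun j => h.integral_gradient_mul_pd_comm hf j i j, Finset.sum_sub_distrib,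
    h.sum_integral_pd_coord_mul_eq_zero (hf.partialDeriv i), sub_zero]
  exact h.sum_integral_gradient_mul_pd hf i

lemma momentumFunctional_pd_sub_momentumFunctional_pd (i j : Fin 3) :
    momentumFunctional u p i (pd j f) - momentumFunctional u p j (pd i f) =
      (∫ x, vorticity u i j x * lap3 f x) -
        ((∑ k, ∫ x, u x i * u x k * pd k (fun y => pd j f y) x) -
          ∑ k, ∫ x, u x j * u x k * pd k (fun y => pd i f y) x) := by
  have hpressure : ∫ x, p x * pd i (pd j f) x = ∫ x, p x * pd j (pd i f) x := by
    simp_rw [fun x => pd_comm (contDiff_infty.1 hf.contDiff 2).contDiffAt i j (x := x)]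
  rw [h.momentumFunctional_eq (hf.partialDeriv j), h.momentumFunctional_eq (hf.partialDeriv i),
    h.sum_integral_gradient_mul_pd_pd hf, h.sum_integral_gradient_mul_pd_pd hf,
    h.integral_vorticity_mul hf.laplacian, hpressure]
  ring

end Identities

end IsLogSolution

/-! ### Vanishing of the momentum functional -/

lemma sum_eq_add_of_ne_two {i j : Fin 3} (hij : i ≠ j) (hi : i ≠ 2) (hj : j ≠ 2) (F : Fin 3 → ℝ) :
    ∑ k, F k = F i + F j + F 2 := by
  have hcases : i = 0 ∧ j = 1 ∨ i = 1 ∧ j = 0 := by lia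
  rcases hcases with ⟨rfl, rfl⟩ | ⟨rfl, rfl⟩ <;> rw [Fin.sum_univ_three]
  rw [add_comm (F 0)]

lemma isLittleO_log_integral_mul {a b R c d : ℝ} {w : V3 → ℝ} {g : ℝ → V3 → ℝ}
    (hg₀ : ∀ s > 0, ∀ x ∉ OmegaR a b R, g s x = 0) (hcd : -2 < c + d)
    (hw : w =O[𝓟 (puncturedCylinder a b R)] fun x => rho x ^ c)
    (hg : (fun q : ℝ × V3 => g q.1 q.2)
      =O[𝓝[>] 0 ×ˢ 𝓟 (puncturedCylinder a b R)] fun q => rho q.2 ^ d) :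
    (fun s => ∫ x, w x * g s x) =o[𝓝[>] 0] log := by
  refine isLittleO_log_of_isBigO_one (isBigO_one_integral_of_isBigO_rpow ?_ hcd
    (isBigO_mul_rpow (eventually_rho_snd_mem_Ioc a b R _) (hw.comp_tendsto tendsto_snd) hg))
  filter_upwards [self_mem_nhdsWithin] with s hs x hx
  rw [hg₀ s hs x hx, mul_zero]

section CoordMul

variable {Ω : Set V3} {f : V3 → ℝ} (hf : IsTestFunction Ω f)
include hf

lemma pd_coord_mul (i j : Fin 3) (x : V3) :
    pd i (fun y => y j * f y) x = (if j = i then f x else 0) + x j * pd i f x := by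
  rw [pd_mul i (differentiable_coord j x) (hf.differentiable x), pd_coord, ite_mul, one_mul,
    zero_mul]

lemma pd_pd_coord_mul (i j k : Fin 3) (x : V3) :
    pd i (fun y => pd j (fun z => z k * f z) y) x =
      (if k = j then 1 else 0) * pd i f x + (if k = i then 1 else 0) * pd j f x +
        x k * pd i (fun y => pd j f y) x := by
  rw [pd_pd_mul (contDiff_coord k) (contDiff_infty.1 hf.contDiff 2)]
  simp_rw [pd_coord]
  simp [pd]

lemma lap3_coord_mul (j : Fin 3) (x : V3) :
    lap3 (fun y => y j * f y) x = 2 * pd j f x + x j * lap3 f x := by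
  simp_rw [lap3, pd_pd_coord_mul hf, Finset.sum_add_distrib, ite_mul, one_mul, zero_mul,
    Finset.sum_ite_eq, if_pos (Finset.mem_univ j), ← Finset.mul_sum]
  ring

lemma isBigO_pd_pd_coord_mul_axisLogMul (a b R : ℝ) {k : Fin 3} (hk : k ≠ 2) (i j : Fin 3) :
    (fun q : ℝ × V3 => pd i (fun y => pd j (fun z => z k * axisLogMul f q.1 z) y) q.2)
      =O[𝓝[>] 0 ×ˢ 𝓟 (puncturedCylinder a b R)] fun q => rho q.2 ^ (-1 : ℝ) := by
  have hcoord : (fun q : ℝ × V3 => q.2 k) =O[𝓝[>] 0 ×ˢ 𝓟 (puncturedCylinder a b R)]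
      fun q => rho q.2 ^ (1 : ℝ) := .of_norm_le fun q => by
    simpa only [rpow_one, norm_eq_abs] using abs_apply_le_rho q.2 hk
  have hcoord_mul := isBigO_mul_rpow (eventually_rho_snd_mem_Ioc a b R _) hcoord
    (isBigO_pd_pd_axisLogMul hf a b R i j)
  rw [show (1 : ℝ) + -2 = -1 by norm_num] at hcoord_mul
  refine ((((isBigO_pd_axisLogMul hf a b R i).const_mul_left (if k = j then 1 else 0)).add
    ((isBigO_pd_axisLogMul hf a b R j).const_mul_left (if k = i then 1 else 0))).add
      hcoord_mul).congr' ?_ .rfl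
  filter_upwards [eventually_fst_pos _] with q hq
    using (pd_pd_coord_mul (isTestFunction_axisLogMul hf hq) i j k q.2).symm

end CoordMul

namespace IsLogSolution

variable {U : Set V3} {u : V3 → V3} {p : V3 → ℝ} {a b R : ℝ} (h : IsLogSolution U u p a b R)
include h

lemma isLogSmallOn_vorticity_mul_coord (i j : Fin 3) {k : Fin 3} (hk : k ≠ 2) :
    IsLogSmallOn (puncturedCylinder a b R) fun x => vorticity u i j x * x k := by
  refine .of_le_mul (K := 2) fun ε hε => ?_
  obtain ⟨C₁, hC₁⟩ := h.gradient i j ε hε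
  obtain ⟨C₂, hC₂⟩ := h.gradient j i ε hε
  refine ⟨(C₁ + C₂) / 2, fun x hx => ?_⟩
  calc |vorticity u i j x * x k| = |vorticity u i j x| * |x k| := abs_mul _ _
    _ ≤ |vorticity u i j x| * rho x := by
      gcongr
      exact abs_apply_le_rho x hk
    _ = |rho x * pd j (fun z => u z i) x - rho x * pd i (fun z => u z j) x| := by
      rw [← mul_sub, abs_mul, abs_of_pos hx.2.2.1, mul_comm, vorticity]
    _ ≤ 2 * (ε * |log (rho x)| + (C₁ + C₂) / 2) :=
      (abs_sub _ _).trans (by linarith [hC₁ x hx, hC₂ x hx])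

lemma isBigO_vorticity {κ : ℝ} (hκ : 0 < κ) (i j : Fin 3) :
    vorticity u i j =O[𝓟 (puncturedCylinder a b R)] fun x => rho x ^ (-1 - κ) :=
  (h.isBigO_gradient hκ i j).sub (h.isBigO_gradient hκ j i)

lemma integrableOn_vorticity (i j : Fin 3) : IntegrableOn (vorticity u i j) (OmegaR a b R) :=
  (h.integrableOn_gradient i j).sub (h.integrableOn_gradient j i)

variable {f : V3 → ℝ} (hf : IsTestFunction (OmegaR a b R) f)
include hf

lemma isLittleO_momentumFunctional_two :
    (fun s => momentumFunctional u p 2 (axisLogMul f s)) =o[𝓝[>] 0] log := by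
  have hconv : ∀ j, (fun s => ∫ x, u x 2 * u x j * pd j (axisLogMul f s) x) =o[𝓝[>] 0] log :=
    fun j => isLittleO_log_integral_mul
      (fun s hs _ => ((isTestFunction_axisLogMul hf hs).partialDeriv j).eq_zero_of_notMem)
      (by norm_num) (h.isBigO_velocity_mul one_half_pos 2 j) (isBigO_pd_axisLogMul hf a b R j)
  have hpressure : (fun s => ∫ x, p x * pd 2 (axisLogMul f s) x) =o[𝓝[>] 0] log :=
    isLittleO_log_integral_mul
      (fun s hs _ => ((isTestFunction_axisLogMul hf hs).partialDeriv 2).eq_zero_of_notMem)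
      (by norm_num) (h.pressure _ one_half_pos)
      (isBigO_pd_two_axisLogMul hf a b R (by norm_num : (0 : ℝ) < 1 / 4))
  refine ((((h.velocity 2).isLittleO_integral_mul_lap3 hf).neg_left.sub
    (.fun_sum (s := Finset.univ) fun j _ => hconv j)).sub hpressure).congr' ?_ .rfl
  filter_upwards [self_mem_nhdsWithin] with s hs
  have hF := isTestFunction_axisLogMul hf hs
  rw [h.momentumFunctional_eq hF, h.sum_integral_gradient_mul_pd hF]

lemma integral_vorticity_mul_lap3_coord_mul {i j : Fin 3} (hij : i ≠ j) (hi : i ≠ 2)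
    (hj : j ≠ 2) :
    ∫ x, vorticity u i j x * lap3 (fun y => y j * f y) x =
      (∫ x, vorticity u i j x * x j * lap3 f x) -
        2 * ((∫ x, u x i * lap3 f x) + ∫ x, vorticity u i 2 x * pd 2 f x) := by
  have hvort := h.sum_integral_vorticity_mul_pd hf i
  have hdiag : ∀ x, vorticity u i i x = 0 := fun x => sub_self _
  simp_rw [sum_eq_add_of_ne_two hij hi hj, hdiag, zero_mul, integral_zero, zero_add] at hvort
  simp_rw [lap3_coord_mul hf, mul_add, mul_left_comm _ (2 : ℝ), mul_assoc]
  rw [integral_add, integral_const_mul]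
  · linarith
  · exact ((hf.partialDeriv j).integrable_mul_of_integrableOn
      (h.integrableOn_vorticity i j)).const_mul 2
  · exact (hf.laplacian.contDiff_mul (contDiff_coord j)).integrable_mul_of_integrableOn
      (h.integrableOn_vorticity i j)

lemma momentumFunctional_eq_integral_vorticity {i j : Fin 3} (hij : i ≠ j) (hi : i ≠ 2)
    (hj : j ≠ 2) :
    momentumFunctional u p i f =
      (∫ x, vorticity u i j x * x j * lap3 f x) -
        2 * ((∫ x, u x i * lap3 f x) + ∫ x, vorticity u i 2 x * pd 2 f x) -
          ((∑ k, ∫ x, u x i * u x k * pd k (fun y => pd j (fun z => z j * f z) y) x) -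
            ∑ k, ∫ x, u x j * u x k * pd k (fun y => pd i (fun z => z j * f z) y) x) := by
  have htest := hf.contDiff_mul (contDiff_coord j)
  have haxis : ∀ x, rho x = 0 → x j = 0 := fun x hx =>
    abs_nonpos_iff.1 ((abs_apply_le_rho x hj).trans hx.le)
  have hself : momentumFunctional u p i f =
      momentumFunctional u p i (pd j fun y => y j * f y) :=
    h.momentumFunctional_congr_axis hf (htest.partialDeriv j)
      (fun x hx => by rw [pd_coord_mul hf, haxis x hx, if_pos rfl, zero_mul, add_zero]) i
  have hcross : momentumFunctional u p j (pd i fun y => y j * f y) = 0 :=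
    h.momentumFunctional_eq_zero_of_axis (htest.partialDeriv i)
      (fun x hx => by rw [pd_coord_mul hf, haxis x hx, if_neg hij.symm, zero_mul, add_zero]) j
  rw [hself, ← h.integral_vorticity_mul_lap3_coord_mul hf hij hi hj,
    ← h.momentumFunctional_pd_sub_momentumFunctional_pd htest, hcross, sub_zero]

lemma isLittleO_momentumFunctional_of_ne_two {i j : Fin 3} (hij : i ≠ j) (hi : i ≠ 2)
    (hj : j ≠ 2) :
    (fun s => momentumFunctional u p i (axisLogMul f s)) =o[𝓝[>] 0] log := by
  have hvort : (fun s => ∫ x, vorticity u i 2 x * pd 2 (axisLogMul f s) x) =o[𝓝[>] 0] log :=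
    isLittleO_log_integral_mul
      (fun s hs _ => ((isTestFunction_axisLogMul hf hs).partialDeriv 2).eq_zero_of_notMem)
      (by norm_num) (h.isBigO_vorticity one_half_pos i 2)
      (isBigO_pd_two_axisLogMul hf a b R (by norm_num : (0 : ℝ) < 1 / 4))
  have hconv : ∀ i k l, (fun s => ∫ x, u x i * u x k *
      pd k (fun y => pd l (fun z => z j * axisLogMul f s z) y) x) =o[𝓝[>] 0] log := fun i k l =>
    isLittleO_log_integral_mul (fun s hs _ =>
      (((isTestFunction_axisLogMul hf hs).contDiff_mul (contDiff_coord j)).partialDeriv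
        l |>.partialDeriv k).eq_zero_of_notMem)
      (by norm_num) (h.isBigO_velocity_mul one_half_pos i k)
      (isBigO_pd_pd_coord_mul_axisLogMul hf a b R hj k l)
  refine ((((h.isLogSmallOn_vorticity_mul_coord i j hj).isLittleO_integral_mul_lap3 hf).sub
    ((((h.velocity i).isLittleO_integral_mul_lap3 hf).add hvort).const_mul_left 2)).sub
    ((Asymptotics.IsLittleO.fun_sum (s := Finset.univ) fun k _ => hconv i k j).sub
      (.fun_sum (s := Finset.univ) fun k _ => hconv j k i))).congr' ?_ .rfl
  filter_upwards [self_mem_nhdsWithin] with s hs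
  rw [h.momentumFunctional_eq_integral_vorticity (isTestFunction_axisLogMul hf hs) hij hi hj]

lemma isLittleO_momentumFunctional (i : Fin 3) :
    (fun s => momentumFunctional u p i (axisLogMul f s)) =o[𝓝[>] 0] log := by
  fin_cases i
  · exact h.isLittleO_momentumFunctional_of_ne_two hf (j := 1) (by decide) (by decide) (by decide)
  · exact h.isLittleO_momentumFunctional_of_ne_two hf (j := 0) (by decide) (by decide) (by decide)
  · exact h.isLittleO_momentumFunctional_two hf

theorem momentumFunctional_eq_zero (i : Fin 3) : momentumFunctional u p i f = 0 := by
  by_contra hne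
  have hlog : (fun s => 2 * momentumFunctional u p i f * log s) =o[𝓝[>] 0] log := by
    refine (h.isLittleO_momentumFunctional hf i).congr' ?_ .rfl
    filter_upwards [self_mem_nhdsWithin] with s hs
    rw [h.momentumFunctional_axisLogMul hf hs, log_pow]
    push_cast
    ring
  rw [Asymptotics.isLittleO_const_mul_left_iff (mul_ne_zero two_ne_zero hne)] at hlog
  exact Asymptotics.isLittleO_irrefl
    (tendsto_log_nhdsGT_zero.eventually_ne_atBot 0).frequently hlog

end IsLogSolution

/-! ### Weak solutions across the axis -/

lemma isBigO_of_isBigO_apply {ι : Type*} {l : Filter ι} {f : ι → V3} {g : ι → ℝ}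
    (hf : ∀ i, (fun q => f q i) =O[l] g) : f =O[l] g :=
  ((EuclideanSpace.equiv (Fin 3) ℝ).symm.toContinuousLinearMap.isBigO_comp
    (fun q i => f q i) l).trans (Asymptotics.isBigO_pi.2 hf)

lemma fderiv_e3_apply {u : V3 → V3} {x : V3} (hu : DifferentiableAt ℝ u x) (i j : Fin 3) :
    fderiv ℝ u x (e3 j) i = pd j (fun z => u z i) x := by
  have hcoord := (EuclideanSpace.proj i : V3 →L[ℝ] ℝ).hasFDerivAt.comp x hu.hasFDerivAt
  exact (congrArg (· (e3 j)) hcoord.fderiv).symm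

lemma exists_pos_neg_two_lt_mul {s : ℝ} (hs : 0 < s) (hs₂ : s < 2) :
    ∃ κ > 0, -2 < (-1 - κ) * s :=
  ⟨(2 - s) / (2 * s), div_pos (sub_pos.2 hs₂) (by positivity), by field_simp; linarith⟩

namespace IsTestFunction

variable {Ω : Set V3} {f : V3 → ℝ}

lemma setIntegral_mul_eq_integral (hf : IsTestFunction Ω f) (w : V3 → ℝ) :
    ∫ x in Ω, w x * f x = ∫ x, w x * f x :=
  setIntegral_eq_integral_of_forall_compl_eq_zero (μ := volume) fun x hx => by
    rw [hf.eq_zero_of_notMem hx, mul_zero]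

lemma of_apply {φ : V3 → V3} (hφ : ContDiff ℝ (⊤ : ℕ∞) φ) (hφc : HasCompactSupport φ)
    (hφΩ : tsupport φ ⊆ Ω) (i : Fin 3) : IsTestFunction Ω fun z => φ z i where
  contDiff := (contDiff_coord i).comp hφ
  hasCompactSupport := hφc.comp_left (g := fun v : V3 => v i) rfl
  tsupport_subset := (tsupport_comp_subset (g := fun v : V3 => v i) rfl φ).trans hφΩ

end IsTestFunction

lemma setIntegral_sum_sum_mul_pd {Ω : Set V3} {φ : V3 → V3} {w : Fin 3 → Fin 3 → V3 → ℝ}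
    (hφ : ∀ i, IsTestFunction Ω fun z => φ z i) (hw : ∀ i j, IntegrableOn (w i j) Ω) :
    ∫ x in Ω, ∑ i, ∑ j, w i j x * pd j (fun z => φ z i) x =
      ∑ i, ∑ j, ∫ x, w i j x * pd j (fun z => φ z i) x := by
  have hint := fun i j => ((hφ i).partialDeriv j).integrable_mul_of_integrableOn (hw i j)
  rw [integral_finsetSum _ fun i _ => (integrable_finsetSum _ fun j _ => hint i j).integrableOn]
  refine Finset.sum_congr rfl fun i _ => ?_
  rw [integral_finsetSum _ fun j _ => (hint i j).integrableOn]
  exact Finset.sum_congr rfl fun j _ => ((hφ i).partialDeriv j).setIntegral_mul_eq_integral _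

namespace IsLogSolution

variable {U : Set V3} {u : V3 → V3} {p : V3 → ℝ} {a b R κ : ℝ} (h : IsLogSolution U u p a b R)
include h

lemma isBigO_fderiv_velocity (hκ : 0 < κ) :
    fderiv ℝ u =O[𝓟 (puncturedCylinder a b R)] fun x => rho x ^ (-1 - κ) := by
  have hpartial : ∀ j, (fun x => fderiv ℝ u x (e3 j)) =O[𝓟 (puncturedCylinder a b R)]
      fun x => rho x ^ (-1 - κ) := fun j => isBigO_of_isBigO_apply fun i =>
    (h.isBigO_gradient hκ i j).congr' (eventually_principal.2 fun x hx =>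
      (fderiv_e3_apply ((h.contDiffOn_velocity.differentiableOn two_ne_zero).differentiableAt
        (h.isOpen.mem_nhds (h.subset hx))) i j).symm) .rfl
  exact (Asymptotics.IsBigO.of_norm_le fun x => norm_clm_le_sum_norm_apply (fderiv ℝ u x)).trans
    (.fun_sum fun j _ => (hpartial j).norm_left)

lemma eLpNorm_velocity_ne_top : eLpNorm u 2 (volume.restrict (OmegaR a b R)) ≠ ⊤ := by
  simpa using eLpNorm_ne_top_of_isBigO_rpow two_pos (by norm_num)
    (isBigO_of_isBigO_apply (h.isBigO_velocity one_half_pos))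

lemma eLpNorm_velocity_mul_ne_top {s : ℝ} (hs : 0 < s) :
    eLpNorm (fun x => fun i j => u x i * u x j) (ENNReal.ofReal s)
      (volume.restrict (OmegaR a b R)) ≠ ⊤ :=
  eLpNorm_ne_top_of_isBigO_rpow hs
    (by rw [neg_mul, inv_mul_cancel₀ hs.ne']; norm_num : -2 < -s⁻¹ * s) <|
    Asymptotics.isBigO_pi.2 fun i => Asymptotics.isBigO_pi.2 fun j =>
      h.isBigO_velocity_mul (inv_pos.2 hs) i j

section Exponent

variable {s : ℝ} (hs : 0 < s) (hs₂ : s < 2)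
include hs hs₂

lemma eLpNorm_fderiv_velocity_ne_top : eLpNorm (fun x => fderiv ℝ u x) (ENNReal.ofReal s)
    (volume.restrict (OmegaR a b R)) ≠ ⊤ := by
  obtain ⟨κ, hκ, hκs⟩ := exists_pos_neg_two_lt_mul hs hs₂
  exact eLpNorm_ne_top_of_isBigO_rpow hs hκs (h.isBigO_fderiv_velocity hκ)

lemma eLpNorm_pressure_ne_top :
    eLpNorm p (ENNReal.ofReal s) (volume.restrict (OmegaR a b R)) ≠ ⊤ := by
  obtain ⟨κ, hκ, hκs⟩ := exists_pos_neg_two_lt_mul hs hs₂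
  exact eLpNorm_ne_top_of_isBigO_rpow hs hκs (h.pressure κ hκ)

end Exponent

lemma setIntegral_sum_gradient_mul_pd_eq {φ : V3 → V3}
    (hφ : ∀ i, IsTestFunction (OmegaR a b R) fun z => φ z i)
    (hdiv : ∀ x, ∑ j, pd j (fun z => φ z j) x = 0) :
    ∫ x in OmegaR a b R, ∑ i, ∑ j, pd j (fun z => u z i) x * pd j (fun z => φ z i) x =
      ∫ x in OmegaR a b R, ∑ i, ∑ j, u x i * u x j * pd j (fun z => φ z i) x := by
  have hpressure : ∑ i, ∫ x, p x * pd i (fun z => φ z i) x = 0 := by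
    rw [← integral_finsetSum _ fun i _ =>
      ((hφ i).partialDeriv i).integrable_mul_of_integrableOn h.integrableOn_pressure]
    simp_rw [← Finset.mul_sum, hdiv, mul_zero, integral_zero]
  have hbalance := Finset.sum_eq_zero fun i (_ : i ∈ Finset.univ) =>
    (h.momentumFunctional_eq (hφ i) i).symm.trans (h.momentumFunctional_eq_zero (hφ i) i)
  rw [Finset.sum_sub_distrib, Finset.sum_sub_distrib, hpressure, sub_zero, sub_eq_zero] at hbalance
  rw [setIntegral_sum_sum_mul_pd hφ h.integrableOn_gradient,
    setIntegral_sum_sum_mul_pd hφ h.integrableOn_velocity_mul, hbalance]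

lemma setIntegral_sum_velocity_mul_pd_eq_zero {ψ : V3 → ℝ}
    (hψ : IsTestFunction (OmegaR a b R) ψ) :
    ∫ x in OmegaR a b R, ∑ j, u x j * pd j ψ x = 0 := by
  rw [integral_finsetSum _ fun j _ => ((hψ.partialDeriv j).integrable_mul_of_integrableOn
    (h.integrableOn_velocity j)).integrableOn, ← h.sum_integral_velocity_mul_pd_eq_zero hψ]
  exact Finset.sum_congr rfl fun j _ => (hψ.partialDeriv j).setIntegral_mul_eq_integral _

end IsLogSolution

theorem weak_solution_across_ray_general {U : Set V3} {u : V3 → V3} {p : V3 → ℝ}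
    {a b R a' b' R' : ℝ} (h : IsNSSolution U u p) (hsub : puncturedCylinder a' b' R' ⊆ U)
    (hu : IsLogSmallOn (puncturedCylinder a' b' R') fun x => ‖u x‖) (ha : a' < a) (hb : b < b')
    (hR : R < R') :
    eLpNorm u 2 (volume.restrict (OmegaR a b R)) ≠ ⊤ ∧
    (∀ s : ℝ, 0 < s → s < 2 →
      eLpNorm (fun x => fderiv ℝ u x) (ENNReal.ofReal s) (volume.restrict (OmegaR a b R)) ≠ ⊤ ∧
      eLpNorm (fun x => fun i j => u x i * u x j) (ENNReal.ofReal s)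
        (volume.restrict (OmegaR a b R)) ≠ ⊤ ∧
      eLpNorm p (ENNReal.ofReal s) (volume.restrict (OmegaR a b R)) ≠ ⊤) ∧
    (∀ φ : V3 → V3, ContDiff ℝ (⊤ : ℕ∞) φ → HasCompactSupport φ → tsupport φ ⊆ OmegaR a b R →
      (∀ x, ∑ j, pd j (fun z => φ z j) x = 0) →
      ∫ x in OmegaR a b R, (∑ i, ∑ j, pd j (fun z => u z i) x * pd j (fun z => φ z i) x) =
        ∫ x in OmegaR a b R, (∑ i, ∑ j, u x i * u x j * pd j (fun z => φ z i) x)) ∧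
    (∀ ψ : V3 → ℝ, ContDiff ℝ (⊤ : ℕ∞) ψ → HasCompactSupport ψ → tsupport ψ ⊆ OmegaR a b R →
      ∫ x in OmegaR a b R, (∑ j, u x j * pd j ψ x) = 0) := by
  have hlog := h.isLogSolution hsub hu ha hb hR
  refine ⟨hlog.eLpNorm_velocity_ne_top, fun s hs hs₂ => ⟨hlog.eLpNorm_fderiv_velocity_ne_top hs hs₂,
    hlog.eLpNorm_velocity_mul_ne_top hs, hlog.eLpNorm_pressure_ne_top hs hs₂⟩,
    fun φ hφ hφc hφΩ hdiv => ?_, fun ψ hψ hψc hψΩ => ?_⟩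
  · exact hlog.setIntegral_sum_gradient_mul_pd_eq (IsTestFunction.of_apply hφ hφc hφΩ) hdiv
  · exact hlog.setIntegral_sum_velocity_mul_pd_eq_zero ⟨hψ, hψc, hψΩ⟩

/-! ### Homogeneous solutions near the south pole -/

lemma norm_inv_norm_smul {E : Type*} [NormedAddCommGroup E] [NormedSpace ℝ E] {x : E}
    (hx : x ≠ 0) : ‖‖x‖⁻¹ • x‖ = 1 :=
  norm_smul_inv_norm (𝕜 := ℝ) hx

lemma isOpen_cone3_sphere2_inter {V : Set V3} (hV : IsOpen V) : IsOpen (cone3 (sphere2 ∩ V)) := by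
  have hcone : cone3 (sphere2 ∩ V) = {x : V3 | x ≠ 0} ∩ (fun x => ‖x‖⁻¹ • x) ⁻¹' V := by
    ext x
    refine and_congr_right fun hx => and_iff_right ?_
    rw [sphere2, mem_sphere_zero_iff_norm, norm_inv_norm_smul hx]
  rw [hcone]
  exact ContinuousOn.isOpen_inter_preimage ((continuousOn_id.norm.inv₀ fun x hx =>
    norm_ne_zero_iff.2 hx).smul continuousOn_id) isOpen_ne hV

lemma isOpen_cone3_NSCap (δ : ℝ) : IsOpen (cone3 (NSCap δ)) := by
  rw [NSCap, Set.inter_sdiff_assoc]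
  exact isOpen_cone3_sphere2_inter (isOpen_ball.sdiff isClosed_singleton)

lemma norm_mul_dist_S3_sq {x : V3} (hx : x ≠ 0) :
    ‖x‖ * (‖x‖ - x 2) * dist (‖x‖⁻¹ • x) S3 ^ 2 = 2 * rho x ^ 2 := by
  have hnorm := norm_ne_zero_iff.2 hx
  have hrho := norm_sq_eq_rho_sq_add x
  have hS : ‖S3‖ = 1 := by simp [S3]
  have hinner : ⟪x, S3⟫_ℝ = -x 2 := by simp [S3, EuclideanSpace.inner_single_right]
  have hdist : dist (‖x‖⁻¹ • x) S3 ^ 2 = 2 * (‖x‖ + x 2) / ‖x‖ := by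
    rw [dist_eq_norm, norm_sub_sq_real, norm_inv_norm_smul hx, real_inner_smul_left, hinner, hS]
    field_simp
    ring
  rw [hdist]
  field_simp
  linarith

section South

variable {x : V3} (hx : x 2 < 0)
include hx

lemma ne_zero_of_apply_two_neg : x ≠ 0 := by
  rintro rfl
  exact lt_irrefl _ hx

lemma rho_le_norm_mul_dist_S3 : rho x ≤ ‖x‖ * dist (‖x‖⁻¹ • x) S3 := by
  have hsq := norm_mul_dist_S3_sq (ne_zero_of_apply_two_neg hx)
  have hle : -x 2 ≤ ‖x‖ := (neg_le_abs _).trans (PiLp.norm_apply_le x 2)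
  refine le_of_sq_le_sq ?_ (by positivity)
  nlinarith [mul_nonneg (mul_nonneg (norm_nonneg x) (by linarith : 0 ≤ ‖x‖ + x 2))
    (sq_nonneg (dist (‖x‖⁻¹ • x) S3))]

lemma neg_apply_two_mul_dist_S3_le_rho : -x 2 * dist (‖x‖⁻¹ • x) S3 ≤ rho x := by
  have hsq := norm_mul_dist_S3_sq (ne_zero_of_apply_two_neg hx)
  have hle : -x 2 ≤ ‖x‖ := (neg_le_abs _).trans (PiLp.norm_apply_le x 2)
  refine le_of_sq_le_sq ?_ (rho_nonneg x)
  have hmul : 2 * x 2 ^ 2 ≤ ‖x‖ * (‖x‖ - x 2) := by nlinarith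
  nlinarith [mul_le_mul_of_nonneg_right hmul (sq_nonneg (dist (‖x‖⁻¹ • x) S3))]

end South

lemma exists_norm_le_mul_abs_log_dist_add {X E : Type*} [MetricSpace X]
    [SeminormedAddCommGroup E] {K : Set X} {y : X} {f : X → E} (hK : IsCompact K)
    (hf : ContinuousOn f (K \ {y}))
    (hlim : Tendsto (fun x => ‖f x‖ / log (dist x y)) (𝓝[K \ {y}] y) (𝓝 0)) {ε : ℝ}
    (hε : 0 < ε) : ∃ C, ∀ x ∈ K \ {y}, ‖f x‖ ≤ ε * |log (dist x y)| + C := by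
  obtain ⟨r, hr, hnear⟩ := Metric.mem_nhdsWithin_iff.1 (Metric.tendsto_nhds.1 hlim ε hε)
  have hfar : IsCompact (K ∩ {x | min r 1 ≤ dist x y}) :=
    hK.inter_right (isClosed_le continuous_const (continuous_id.dist continuous_const))
  obtain ⟨C, hC⟩ := hfar.exists_bound_of_continuousOn (hf.mono fun x hx => ⟨hx.1, by
    rintro rfl
    exact (lt_min hr one_pos).not_ge (hx.2.trans_eq (dist_self _))⟩)
  refine ⟨|C|, fun x hx => ?_⟩
  rcases le_or_gt (min r 1) (dist x y) with hdist | hdist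
  · have hnonneg : 0 ≤ ε * |log (dist x y)| := by positivity
    linarith [hC x ⟨hx.1, hdist⟩, le_abs_self C]
  · have hlog : log (dist x y) < 0 :=
      log_neg (dist_pos.2 hx.2) (hdist.trans_le (min_le_right _ _))
    have hquot : dist (‖f x‖ / log (dist x y)) 0 < ε :=
      hnear ⟨hdist.trans_le (min_le_left _ _), hx⟩
    rw [dist_zero_right, norm_div, norm_norm, Real.norm_eq_abs,
      div_lt_iff₀ (abs_pos.2 hlog.ne)] at hquot
    linarith [abs_nonneg C]

section Cylinder

variable {a b R : ℝ} (hb : b < 0) {x : V3} (hx : x ∈ puncturedCylinder a b R)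
include hb hx

lemma dist_S3_pos_of_mem_puncturedCylinder : 0 < dist (‖x‖⁻¹ • x) S3 :=
  pos_of_mul_pos_right (hx.2.2.1.trans_le (rho_le_norm_mul_dist_S3 (hx.2.1.trans_lt hb)))
    (norm_nonneg x)

lemma dist_S3_le_of_mem_puncturedCylinder : dist (‖x‖⁻¹ • x) S3 ≤ (-b)⁻¹ * rho x := by
  rw [← div_eq_inv_mul, le_div_iff₀' (neg_pos.2 hb)]
  refine le_trans ?_ (neg_apply_two_mul_dist_S3_le_rho (hx.2.1.trans_lt hb))
  gcongr
  exact hx.2.1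

lemma inv_norm_smul_mem_of_mem_puncturedCylinder :
    ‖x‖⁻¹ • x ∈ (sphere2 ∩ closedBall S3 ((-b)⁻¹ * R)) \ {S3} :=
  ⟨⟨mem_sphere_zero_iff_norm.2
      (norm_inv_norm_smul (ne_zero_of_apply_two_neg (hx.2.1.trans_lt hb))),
    (dist_S3_le_of_mem_puncturedCylinder hb hx).trans
      (mul_le_mul_of_nonneg_left hx.2.2.2 (inv_nonneg.2 (neg_pos.2 hb).le))⟩,
    dist_pos.1 (dist_S3_pos_of_mem_puncturedCylinder hb hx)⟩

lemma norm_le_sub_of_mem_puncturedCylinder : ‖x‖ ≤ R - a := by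
  refine (le_of_sq_le_sq ?_ ?_ : ‖x‖ ≤ rho x - x 2).trans (by linarith [hx.1, hx.2.2.2])
  · nlinarith [norm_sq_eq_rho_sq_add x, mul_neg_of_pos_of_neg hx.2.2.1 (hx.2.1.trans_lt hb)]
  · linarith [hx.2.1, hx.2.2.1]

lemma abs_log_dist_S3_le_of_mem_puncturedCylinder :
    |log (dist (‖x‖⁻¹ • x) S3)| ≤ |log (rho x)| + log (max (-b)⁻¹ (R - a)) := by
  have hpos := dist_S3_pos_of_mem_puncturedCylinder hb hx
  refine abs_log_le_abs_log_add_log hpos hx.2.2.1 ?_ ?_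
  · refine (dist_S3_le_of_mem_puncturedCylinder hb hx).trans ?_
    exact mul_le_mul_of_nonneg_right (le_max_left _ _) hx.2.2.1.le
  · refine (rho_le_norm_mul_dist_S3 (hx.2.1.trans_lt hb)).trans ?_
    gcongr
    exact (norm_le_sub_of_mem_puncturedCylinder hb hx).trans (le_max_right _ _)

end Cylinder

lemma closedBall_S3_sdiff_subset_cone3_NSCap {r δ : ℝ} (hr : r < δ) :
    (sphere2 ∩ closedBall S3 r) \ {S3} ⊆ cone3 (NSCap δ) := by
  rintro x ⟨⟨hx, hdist⟩, hne⟩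
  have hnorm : ‖x‖ = 1 := mem_sphere_zero_iff_norm.1 hx
  refine ⟨norm_ne_zero_iff.1 (hnorm ▸ one_ne_zero), ?_⟩
  rw [hnorm, inv_one, one_smul]
  exact ⟨⟨hx, closedBall_subset_ball hr hdist⟩, hne⟩

section Homogeneous

variable {a b R δ : ℝ} (hb : b < 0) (hR : (-b)⁻¹ * R < δ)
include hb hR

lemma puncturedCylinder_subset_cone3_NSCap : puncturedCylinder a b R ⊆ cone3 (NSCap δ) := by
  intro x hx
  have hmem := inv_norm_smul_mem_of_mem_puncturedCylinder hb hx
  exact ⟨ne_zero_of_apply_two_neg (hx.2.1.trans_lt hb),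
    ⟨hmem.1.1, closedBall_subset_ball hR hmem.1.2⟩, hmem.2⟩

lemma isLogSmallOn_norm_of_homogeneous {u : V3 → V3}
    (hu_hom : ∀ x ∈ cone3 (NSCap δ), ∀ lam : ℝ, 0 < lam → u (lam • x) = lam⁻¹ • u x)
    (hu : ContinuousOn u (cone3 (NSCap δ)))
    (hlim : Tendsto (fun x => ‖u x‖ / log (dist x S3)) (𝓝[sphere2 \ {S3}] S3) (𝓝 0)) :
    IsLogSmallOn (puncturedCylinder a b R) fun x => ‖u x‖ := by
  have hK : IsCompact (sphere2 ∩ closedBall S3 ((-b)⁻¹ * R)) :=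
    (isCompact_sphere _ _).inter_right isClosed_closedBall
  have hlim_K := hlim.mono_left
    (nhdsWithin_mono S3 (Set.sdiff_subset_sdiff_left (Set.inter_subset_left
      (t := closedBall S3 ((-b)⁻¹ * R)))))
  refine .of_le_mul (K := (-b)⁻¹) fun ε hε => ?_
  obtain ⟨C, hC⟩ := exists_norm_le_mul_abs_log_dist_add hK
    (hu.mono (closedBall_S3_sdiff_subset_cone3_NSCap hR)) hlim_K hε
  refine ⟨ε * log (max (-b)⁻¹ (R - a)) + C, fun x hx => ?_⟩
  have hnorm : 0 < ‖x‖ := norm_pos_iff.2 (ne_zero_of_apply_two_neg (hx.2.1.trans_lt hb))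
  have hlower : -b ≤ ‖x‖ :=
    (neg_le_neg hx.2.1).trans ((neg_le_abs _).trans (PiLp.norm_apply_le x 2))
  have hscale : ‖u (‖x‖⁻¹ • x)‖ = ‖x‖ * ‖u x‖ := by
    rw [hu_hom x (puncturedCylinder_subset_cone3_NSCap hb hR hx) _ (inv_pos.2 hnorm), inv_inv,
      norm_smul, norm_norm]
  rw [abs_norm, ← div_eq_inv_mul, le_div_iff₀' (neg_pos.2 hb)]
  calc -b * ‖u x‖ ≤ ‖u (‖x‖⁻¹ • x)‖ := by rw [hscale]; gcongr
    _ ≤ ε * |log (dist (‖x‖⁻¹ • x) S3)| + C :=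
      hC _ (inv_norm_smul_mem_of_mem_puncturedCylinder hb hx)
    _ ≤ ε * (|log (rho x)| + log (max (-b)⁻¹ (R - a))) + C := by
      gcongr
      exact abs_log_dist_S3_le_of_mem_puncturedCylinder hb hx
    _ = _ := by ring

end Homogeneous

/-- a `(-1)`-homogeneous solution with `u = o(ln dist(x,S))` is a weak solution
of the Stokes system with force `-(u·∇)u` across the singular ray. -/
theorem weak_solution_across_ray (δ : ℝ) (hδ : 0 < δ) (u : V3 → V3) (p : V3 → ℝ)
    (hu_hom : ∀ x ∈ cone3 (NSCap δ), ∀ lam : ℝ, 0 < lam → u (lam • x) = lam⁻¹ • u x)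
    (hp_hom : ∀ x ∈ cone3 (NSCap δ), ∀ lam : ℝ, 0 < lam → p (lam • x) = (lam ^ 2)⁻¹ * p x)
    (hu_reg : ContDiffOn ℝ 2 u (cone3 (NSCap δ)))
    (hp_reg : ContDiffOn ℝ 2 p (cone3 (NSCap δ)))
    (hNS : ∀ x ∈ cone3 (NSCap δ), NSEq u p x)
    (hlim : Tendsto (fun x => ‖u x‖ / Real.log (dist x S3))
      (𝓝[sphere2 \ {S3}] S3) (𝓝 0)) :
    eLpNorm u 2 (volume.restrict (OmegaR (-2) (-1/2) (δ/16))) ≠ ⊤ ∧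
    (∀ s : ℝ, 1 < s → s < 2 →
      eLpNorm (fun x => fderiv ℝ u x) (ENNReal.ofReal s)
        (volume.restrict (OmegaR (-2) (-1/2) (δ/16))) ≠ ⊤ ∧
      eLpNorm (fun x => fun i j => u x i * u x j) (ENNReal.ofReal s)
        (volume.restrict (OmegaR (-2) (-1/2) (δ/16))) ≠ ⊤ ∧
      eLpNorm p (ENNReal.ofReal s)
        (volume.restrict (OmegaR (-2) (-1/2) (δ/16))) ≠ ⊤) ∧
    (∀ φ : V3 → V3, ContDiff ℝ (⊤:ℕ∞) φ → HasCompactSupport φ →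
      tsupport φ ⊆ OmegaR (-2) (-1/2) (δ/16) →
      (∀ x, ∑ j, pd j (fun z => φ z j) x = 0) →
      ∫ x in OmegaR (-2) (-1/2) (δ/16),
          (∑ i, ∑ j, pd j (fun z => u z i) x * pd j (fun z => φ z i) x)
        = ∫ x in OmegaR (-2) (-1/2) (δ/16),
          (∑ i, ∑ j, u x i * u x j * pd j (fun z => φ z i) x)) ∧
    (∀ ψ : V3 → ℝ, ContDiff ℝ (⊤:ℕ∞) ψ → HasCompactSupport ψ →
      tsupport ψ ⊆ OmegaR (-2) (-1/2) (δ/16) →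
      ∫ x in OmegaR (-2) (-1/2) (δ/16), (∑ j, u x j * pd j ψ x) = 0) := by
  obtain ⟨h₂, hs, hweak⟩ := weak_solution_across_ray_general (a := -2) (b := -1 / 2) (R := δ / 16)
    ⟨isOpen_cone3_NSCap δ, hu_reg, hp_reg, hNS⟩
    (puncturedCylinder_subset_cone3_NSCap (a := -3) (b := -1 / 4) (R := δ / 8) (by norm_num)
      (by linarith))
    (isLogSmallOn_norm_of_homogeneous (by norm_num) (by linarith) hu_hom hu_reg.continuousOn hlim)
    (by norm_num) (by norm_num) (by linarith)
  exact ⟨h₂, fun s hs₁ => hs s (one_pos.trans hs₁), hweak⟩
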